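/- arXiv:2211.07033 — 2 statements merged into one kernel-verified Lean document; each statement's English description precedes it below -/
import Mathlib

section
/- Let F⃗ be an acyclic oriented graph with 1 < m₂(F⃗) < 2, and let TT⃗₃′ be the transitive tournament on 3 vertices with an arbitrary choice of root. Then there exists a function p = p(n) taking values in [0,1] with p(n)·n^{1/m₂(F⃗∘TT⃗₃′)} → 0 as n → ∞ such that a.a.s. G(n,p) → F⃗∘TT⃗₃′. Consequently, the threshold p_{F⃗∘TT⃗₃′} for the property G(n,p) → F⃗∘TT⃗₃′ satisfies p_{F⃗∘TT⃗₃′} ≪ n^{-1/m₂(F⃗∘TT⃗₃′)}. -/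
open Classical in
/-- The probability that the binomial random graph `G(n,p)` satisfies the property `Q`. -/
noncomputable def probGnp (n : ℕ) (p : ℝ) (Q : SimpleGraph (Fin n) → Prop) : ℝ :=
  ∑ G : SimpleGraph (Fin n),
    if Q G then p ^ G.edgeSet.ncard * (1 - p) ^ (n.choose 2 - G.edgeSet.ncard) else 0
/-- `o` is an orientation of the simple graph `G`: every edge of `G` is assigned
exactly one direction, and there are no other arcs. -/
def IsOrientation {α : Type*} (G : SimpleGraph α) (o : α → α → Prop) : Prop :=
  (∀ u v, o u v → G.Adj u v) ∧ ∀ u v, G.Adj u v → (o u v ↔ ¬ o v u)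

/-- The digraph `o` contains a (not necessarily induced) copy of the oriented graph `H`
as a subdigraph. -/
def HasCopy {α β : Type*} (o : α → α → Prop) (H : β → β → Prop) : Prop :=
  ∃ f : β → α, Function.Injective f ∧ ∀ a b, H a b → o (f a) (f b)

/-- `G → H⃗`: every orientation of `G` contains a copy of `H`. -/
def Arrows {α β : Type*} (G : SimpleGraph α) (H : β → β → Prop) : Prop :=
  ∀ o : α → α → Prop, IsOrientation G o → HasCopy o H
/-- The 2-density associated to a (sub)graph with `v` vertices and `e` edges:
`(e-1)/(v-2)` if `v ≥ 3`, `1/2` for a single edge, and `0` otherwise. -/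
noncomputable def d2 (v e : ℕ) : ℝ :=
  if 3 ≤ v then (e - 1 : ℝ) / (v - 2 : ℝ) else if e = 1 then 1 / 2 else 0

/-- The maximum 2-density `m₂(H)` of a finite simple graph `H`. -/
noncomputable def m2 {α : Type*} [Fintype α] (H : SimpleGraph α) : ℝ :=
  sSup {x : ℝ | ∃ J : H.Subgraph, x = d2 J.verts.ncard J.edgeSet.ncard}

/-- The maximum 2-density of an oriented graph: that of its underlying graph. -/
noncomputable def m2Rel {β : Type*} [Fintype β] (H : β → β → Prop) : ℝ :=
  m2 (SimpleGraph.fromRel H)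
/-- A digraph is acyclic if it has no directed cycles, i.e. the transitive closure
of its arc relation is irreflexive. -/
def RelAcyclic {β : Type*} (H : β → β → Prop) : Prop :=
  Irreflexive (Relation.TransGen H)
/-- The rooted product `F⃗ ∘ H⃗` of an oriented graph `F` with an oriented graph `H`
rooted at `r`. -/
def rootedProd {β γ : Type*} (F : β → β → Prop) (H : γ → γ → Prop) (r : γ) :
    β × γ → β × γ → Prop :=
  fun x y => (x.2 = r ∧ y.2 = r ∧ F x.1 y.1) ∨ (x.1 = y.1 ∧ H x.2 y.2)

/-- The transitive tournament on 3 vertices. -/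
def TT3 : Fin 3 → Fin 3 → Prop := fun a b => a < b


/-! ## Hypergraph containers -/

open Classical in
/-- weighted degree of a set -/
noncomputable def wdeg {V : Type} [Fintype V] (w : Finset V → ℝ) (A : Finset V) : ℝ :=
  ∑ e : Finset V, if A ⊆ e then w e else 0

open Classical in
/-- link of a vertex -/
noncomputable def wlink {V : Type} [Fintype V] (v : V) (u : Finset V → ℝ) : Finset V → ℝ :=
  fun e => if v ∈ e then 0 else u (insert v e)

open Classical in
/-- residual weights: remove edges containing a saturated set -/
noncomputable def wres {V : Type} [Fintype V] (w w' : Finset V → ℝ) (K : ℕ → ℝ) : Finset V → ℝ :=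
  fun e => if ∃ A, A ⊆ e ∧ A.Nonempty ∧ K A.card < wdeg w' A then 0 else w e

/-- the weights on sets of lower uniformity built along a sequence of vertices -/
noncomputable def wstp {V : Type} [Fintype V] (w : Finset V → ℝ) (K : ℕ → ℝ) :
    List V → Finset V → ℝ
  | [] => fun _ => 0
  | v :: s => fun e => wstp w K s e + wlink v (wres w (wstp w K s) K) e

section cont
variable {V : Type} [Fintype V]

lemma wdeg_nonneg {w : Finset V → ℝ} (hw : ∀ e, 0 ≤ w e) (A : Finset V) : 0 ≤ wdeg w A := by
  unfold wdeg
  exact Finset.sum_nonneg (fun e _ => by split_ifs <;> simp [hw])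

lemma wdeg_add (w u : Finset V → ℝ) (A : Finset V) :
    wdeg (fun e => w e + u e) A = wdeg w A + wdeg u A := by
  unfold wdeg
  rw [← Finset.sum_add_distrib]
  exact Finset.sum_congr rfl (fun e _ => by split_ifs <;> simp)

lemma wdeg_mul (a : ℝ) (w : Finset V → ℝ) (A : Finset V) :
    wdeg (fun e => a * w e) A = a * wdeg w A := by
  unfold wdeg
  rw [Finset.mul_sum]
  exact Finset.sum_congr rfl (fun e _ => by split_ifs <;> simp)

lemma wdeg_mono {w u : Finset V → ℝ} (h : ∀ e, w e ≤ u e) (A : Finset V) :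
    wdeg w A ≤ wdeg u A := by
  unfold wdeg
  exact Finset.sum_le_sum (fun e _ => by split_ifs <;> simp [h])

lemma wdeg_anti {w : Finset V → ℝ} (hw : ∀ e, 0 ≤ w e) {A B : Finset V} (h : A ⊆ B) :
    wdeg w B ≤ wdeg w A := by
  unfold wdeg
  refine Finset.sum_le_sum (fun e _ => ?_)
  by_cases h1 : B ⊆ e
  · simp [h1, h.trans h1]
  · simp only [h1, if_false]; split_ifs <;> simp [hw]

open Classical in
lemma wdeg_link_eq (u : Finset V → ℝ) (v : V) (A : Finset V) (hv : v ∉ A) :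
    wdeg (wlink v u) A = wdeg u (insert v A) := by
  unfold wdeg wlink
  rw [← Finset.sum_filter, ← Finset.sum_filter, ← Finset.sum_filter_not_add_sum_filter _ (fun e => v ∈ e)]
  rw [Finset.sum_eq_zero (s := Finset.filter (fun e => v ∈ e) _), add_zero]
  · refine Finset.sum_nbij' (fun e => insert v e) (fun e => e.erase v) ?_ ?_ ?_ ?_ ?_
    · intro e he
      simp only [Finset.mem_filter, Finset.mem_univ, true_and] at he ⊢
      exact Finset.insert_subset_insert _ he.1
    · intro e he
      simp only [Finset.mem_filter, Finset.mem_univ, true_and] at he ⊢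
      refine ⟨fun a ha => Finset.mem_erase.2 ⟨fun h => hv (h ▸ ha), he (Finset.mem_insert_of_mem ha)⟩, by simp⟩
    · intro e he
      simp only [Finset.mem_filter, Finset.mem_univ, true_and] at he ⊢
      exact Finset.erase_insert he.2
    · intro e he
      simp only [Finset.mem_filter, Finset.mem_univ, true_and] at he ⊢
      exact Finset.insert_erase (he (Finset.mem_insert_self _ _))
    · intro e he
      simp only [Finset.mem_filter, Finset.mem_univ, true_and] at he ⊢
      simp [he.2]
  · intro e he
    simp only [Finset.mem_filter] at he
    simp [he.2]

lemma wdeg_link_zero (u : Finset V → ℝ) (v : V) (A : Finset V) (hv : v ∈ A) :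
    wdeg (wlink v u) A = 0 := by
  unfold wdeg wlink
  refine Finset.sum_eq_zero (fun e _ => ?_)
  by_cases h : A ⊆ e
  · simp [h, h hv]
  · simp [h]

lemma wres_nonneg {w w' : Finset V → ℝ} {K : ℕ → ℝ} (hw : ∀ e, 0 ≤ w e) (e : Finset V) :
    0 ≤ wres w w' K e := by
  unfold wres; split_ifs <;> simp [hw]

lemma wres_le {w w' : Finset V → ℝ} {K : ℕ → ℝ} (hw : ∀ e, 0 ≤ w e) (e : Finset V) :
    wres w w' K e ≤ w e := by
  unfold wres; split_ifs <;> simp [hw]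

lemma wres_ne {w w' : Finset V → ℝ} {K : ℕ → ℝ} {e : Finset V} (h : wres w w' K e ≠ 0) :
    w e ≠ 0 := by
  unfold wres at h; split_ifs at h
  · exact absurd rfl h
  · exact h

lemma wstp_nonneg {w : Finset V → ℝ} {K : ℕ → ℝ} (hw : ∀ e, 0 ≤ w e) (s : List V) :
    ∀ e, 0 ≤ wstp w K s e := by
  induction s with
  | nil => intro e; simp [wstp]
  | cons v s ih =>
    intro e
    simp only [wstp]
    refine add_nonneg (ih e) ?_
    unfold wlink
    split_ifs
    · exact le_rfl
    · exact wres_nonneg hw _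

open Classical in
lemma wstp_ne {w : Finset V → ℝ} {K : ℕ → ℝ} (s : List V) (e : Finset V)
    (h : wstp w K s e ≠ 0) : ∃ v ∈ s, v ∉ e ∧ w (insert v e) ≠ 0 := by
  induction s with
  | nil => simp [wstp] at h
  | cons v s ih =>
    simp only [wstp] at h
    by_cases h1 : wstp w K s e = 0
    · rw [h1, zero_add] at h
      unfold wlink at h
      split_ifs at h with h2
      · exact absurd rfl h
      · refine ⟨v, by simp, h2, ?_⟩
        convert wres_ne h
    · obtain ⟨x, hx, h2⟩ := ih h1
      exact ⟨x, by simp [hx], h2⟩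

open Classical in
lemma wstp_deg {w : Finset V → ℝ} {K D : ℕ → ℝ} (hw : ∀ e, 0 ≤ w e)
    (hK : ∀ j, 0 ≤ K j) (hD0 : ∀ j, 0 ≤ D j)
    (hD : ∀ A : Finset V, A.Nonempty → wdeg w A ≤ D A.card) (s : List V) (A : Finset V)
    (hA : A.Nonempty) : wdeg (wstp w K s) A ≤ K A.card + D (A.card + 1) := by
  induction s with
  | nil =>
    have : wdeg (wstp w K []) A = 0 := by simp [wdeg, wstp]
    rw [this]; exact add_nonneg (hK _) (hD0 _)
  | cons v s ih =>
    simp only [wstp]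
    rw [wdeg_add]
    by_cases hv : v ∈ A
    · rw [wdeg_link_zero _ _ _ hv, add_zero]; exact ih
    · rw [wdeg_link_eq _ _ _ hv]
      by_cases hs : K A.card < wdeg (wstp w K s) A
      · have : wdeg (wres w (wstp w K s) K) (insert v A) = 0 := by
          unfold wdeg
          refine Finset.sum_eq_zero (fun e _ => ?_)
          split_ifs with h
          · unfold wres
            rw [if_pos]
            exact ⟨A, (Finset.subset_insert _ _).trans h, hA, hs⟩
          · rfl
        rw [this, add_zero]; exact ih
      · push Not at hs
        refine add_le_add hs ?_
        refine (wdeg_mono (wres_le hw) _).trans ?_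
        have := hD (insert v A) (Finset.insert_nonempty _ _)
        rwa [Finset.card_insert_of_notMem hv] at this

lemma wstp_tot {w : Finset V → ℝ} {K D : ℕ → ℝ} (hw : ∀ e, 0 ≤ w e)
    (hD : ∀ A : Finset V, A.Nonempty → wdeg w A ≤ D A.card) (s : List V) :
    wdeg (wstp w K s) ∅ ≤ s.length * D 1 := by
  classical
  induction s with
  | nil =>
    simp [wdeg, wstp]
  | cons v s ih =>
    simp only [wstp]
    rw [wdeg_add, wdeg_link_eq _ _ _ (by simp)]
    have := hD {v} (by simp)
    have h2 := (wdeg_mono (wres_le (w' := wstp w K s) (K := K) hw) {v}).trans this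
    simp only [Finset.card_singleton] at h2
    simp only [List.length_cons, Nat.cast_add, Nat.cast_one, insert_empty_eq]
    linarith

lemma sum_wdeg {w : Finset V → ℝ} {l : ℕ} (hu : ∀ e, w e ≠ 0 → e.card = l) :
    ∑ A : Finset V, wdeg w A = 2 ^ l * wdeg w ∅ := by
  classical
  unfold wdeg
  rw [Finset.sum_comm, Finset.mul_sum]
  refine Finset.sum_congr rfl (fun e _ => ?_)
  rw [← Finset.sum_filter, Finset.sum_const]
  by_cases h : w e = 0
  · simp [h]
  · have : (Finset.univ.filter (fun A => A ⊆ e)) = e.powerset := by ext; simp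
    rw [this, Finset.card_powerset, hu e h]; simp

lemma sum_wdeg_single {w : Finset V → ℝ} {l : ℕ} (hu : ∀ e, w e ≠ 0 → e.card = l) :
    ∑ v : V, wdeg w {v} = l * wdeg w ∅ := by
  classical
  unfold wdeg
  rw [Finset.sum_comm, Finset.mul_sum]
  refine Finset.sum_congr rfl (fun e _ => ?_)
  rw [← Finset.sum_filter, Finset.sum_const]
  by_cases h : w e = 0
  · simp [h]
  · have : (Finset.univ.filter (fun v => {v} ⊆ e)) = e := by ext; simp
    rw [this, hu e h]; simp

lemma wres_tot {w w' : Finset V → ℝ} {K D : ℕ → ℝ} {l : ℕ} {m : ℝ} (hw : ∀ e, 0 ≤ w e)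
    (hw' : ∀ e, 0 ≤ w' e) (hu : ∀ e, w' e ≠ 0 → e.card = l) (hm : 0 < m)
    (hD0 : ∀ j, 0 < D j) (hK : ∀ j, K j = m * D j)
    (hD : ∀ A : Finset V, A.Nonempty → wdeg w A ≤ D A.card) :
    wdeg w ∅ ≤ wdeg (wres w w' K) ∅ + 2 ^ l / m * wdeg w' ∅ := by
  classical
  have hK0 : ∀ j, 0 < K j := fun j => by rw [hK]; exact mul_pos hm (hD0 j)
  have key : ∀ e, w e ≤ wres w w' K e +
      ∑ A : Finset V, if A.Nonempty ∧ A ⊆ e then wdeg w' A / K A.card * w e else 0 := by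
    intro e
    have hnn : ∀ A : Finset V,
        0 ≤ if A.Nonempty ∧ A ⊆ e then wdeg w' A / K A.card * w e else 0 := by
      intro A
      split_ifs
      · exact mul_nonneg (div_nonneg (wdeg_nonneg hw' _) (hK0 _).le) (hw e)
      · exact le_rfl
    unfold wres
    split_ifs with h
    · obtain ⟨A, hAe, hA, hs⟩ := h
      rw [zero_add]
      refine le_trans ?_ (Finset.single_le_sum (fun A _ => hnn A) (Finset.mem_univ A))
      rw [if_pos ⟨hA, hAe⟩]
      refine le_mul_of_one_le_left (hw e) ?_
      rw [one_le_div (hK0 _)]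
      exact hs.le
    · exact le_add_of_nonneg_right (Finset.sum_nonneg (fun A _ => hnn A))
  have h1 : wdeg w ∅ ≤ wdeg (wres w w' K) ∅ + ∑ e : Finset V, ∑ A : Finset V,
      if A.Nonempty ∧ A ⊆ e then wdeg w' A / K A.card * w e else 0 := by
    have : wdeg w ∅ = ∑ e, w e := by simp [wdeg]
    rw [this]
    have : wdeg (wres w w' K) ∅ = ∑ e, wres w w' K e := by simp [wdeg]
    rw [this, ← Finset.sum_add_distrib]
    exact Finset.sum_le_sum (fun e _ => key e)
  refine h1.trans (add_le_add le_rfl ?_)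
  rw [Finset.sum_comm]
  have h2 : 2 ^ l / m * wdeg w' ∅ = ∑ A : Finset V, 1 / m * wdeg w' A := by
    rw [← Finset.mul_sum, sum_wdeg hu]; ring
  rw [h2]
  refine Finset.sum_le_sum (fun A _ => ?_)
  by_cases hA : A.Nonempty
  · have : (∑ e : Finset V, if A.Nonempty ∧ A ⊆ e then wdeg w' A / K A.card * w e else 0)
        = wdeg w' A / K A.card * wdeg w A := by
      unfold wdeg
      rw [Finset.mul_sum]
      exact Finset.sum_congr rfl (fun e _ => by by_cases h : A ⊆ e <;> simp [hA, h])
    rw [this]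
    calc wdeg w' A / K A.card * wdeg w A ≤ wdeg w' A / K A.card * D A.card :=
          mul_le_mul_of_nonneg_left (hD A hA) (div_nonneg (wdeg_nonneg hw' _) (hK0 _).le)
      _ = 1 / m * wdeg w' A := by
          rw [hK]; have := (hD0 A.card).ne'; field_simp
  · simp only [hA, false_and, if_false, Finset.sum_const_zero]
    exact mul_nonneg (by positivity) (wdeg_nonneg hw' _)

lemma exists_lists (t : ℕ) : ∃ L : Finset (List V), L.card ≤ (Fintype.card V + 1) ^ t ∧
    ∀ s : List V, s.length ≤ t → s ∈ L := by
  classical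
  induction t with
  | zero => exact ⟨{[]}, by simp, by intro s hs; simpa using hs⟩
  | succ t ih =>
    obtain ⟨L, h1, h2⟩ := ih
    refine ⟨insert [] ((Finset.univ ×ˢ L).image (fun x => x.1 :: x.2)), ?_, ?_⟩
    · refine (Finset.card_insert_le _ _).trans ?_
      have := Finset.card_image_le (s := (Finset.univ ×ˢ L)) (f := fun x : V × List V => x.1 :: x.2)
      rw [Finset.card_product, Finset.card_univ] at this
      have h3 : Fintype.card V * L.card ≤ Fintype.card V * (Fintype.card V + 1) ^ t :=
        Nat.mul_le_mul_left _ h1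
      have h4 : 1 ≤ (Fintype.card V + 1) ^ t := Nat.one_le_pow _ _ (by omega)
      rw [pow_succ]
      nlinarith
    · intro s hs
      cases s with
      | nil => simp
      | cons v s =>
        simp only [List.length_cons] at hs
        have := h2 s (by omega)
        simp [this]

lemma exists_seq {w : Finset V → ℝ} {K : ℕ → ℝ} (b : ℝ) (I : Finset V) (t : ℕ) :
    ∃ s : List V, (∀ v ∈ s, v ∈ I) ∧ s.length ≤ t ∧ s.length * b ≤ wdeg (wstp w K s) ∅ ∧
      (s.length = t ∨ ∀ v ∈ I, wdeg (wres w (wstp w K s) K) {v} < b) := by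
  classical
  induction t with
  | zero => exact ⟨[], by simp, by simp, by simp [wdeg, wstp], by simp⟩
  | succ t ih =>
    obtain ⟨s, h1, h2, h3, h4⟩ := ih
    rcases h4 with h4 | h4
    · by_cases h : ∀ v ∈ I, wdeg (wres w (wstp w K s) K) {v} < b
      · exact ⟨s, h1, by omega, h3, Or.inr h⟩
      · push Not at h
        obtain ⟨v, hv, hb⟩ := h
        refine ⟨v :: s, ?_, by simp; omega, ?_, Or.inl (by simp [h4])⟩
        · intro x hx
          rcases List.mem_cons.1 hx with rfl | hx
          · exact hv
          · exact h1 x hx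
        · simp only [wstp]
          rw [wdeg_add, wdeg_link_eq _ _ _ (by simp)]
          simp only [List.length_cons, Nat.cast_add, Nat.cast_one, insert_empty_eq]
          linarith
    · exact ⟨s, h1, by omega, h3, Or.inr h4⟩

end cont

theorem container (l : ℕ) : ∀ α c : ℝ, 0 < α → 0 < c → ∃ δ : ℝ, 0 < δ ∧
    ∀ (V : Type) [Fintype V] (q : ℝ) (t : ℕ) (w : Finset V → ℝ), 0 < q →
      0 < Fintype.card V →
      q * Fintype.card V ≤ t → (t : ℝ) ≤ 2 * (q * Fintype.card V) →
      (∀ e, 0 ≤ w e) → (∀ e, w e ≠ 0 → e.card = l) → α ≤ wdeg w ∅ →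
      (∀ A : Finset V, A.Nonempty → wdeg w A ≤ c * q ^ (A.card - 1) / Fintype.card V) →
      ∃ 𝓑 : Finset (Finset V), 𝓑.card ≤ (Fintype.card V + 1) ^ (l * t) ∧
        (∀ B ∈ 𝓑, δ * Fintype.card V ≤ B.card ∧ ∀ b ∈ B, ∃ e, w e ≠ 0 ∧ b ∈ e) ∧
        ∀ I : Finset V, (∀ e, w e ≠ 0 → ¬ e ⊆ I) → ∃ B ∈ 𝓑, Disjoint B I := by
  classical
  induction l with
  | zero =>
    intro α c hα hc
    refine ⟨1, one_pos, ?_⟩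
    intro V _ q t w hq hn ht1 ht2 hw hu htot hdeg
    refine ⟨∅, by simp, by simp, ?_⟩
    intro I hI
    exfalso
    have h0 : w ∅ = 0 := by
      by_contra h
      exact hI ∅ h (by simp)
    have : wdeg w ∅ = 0 := by
      unfold wdeg
      refine Finset.sum_eq_zero (fun e _ => ?_)
      have : w e = 0 := by
        by_contra h
        have := hu e h
        rw [Finset.card_eq_zero] at this
        exact h (this ▸ h0)
      simp [this]
    linarith
  | succ l ih =>
    intro α c hα hc
    set M : ℝ := 2 ^ (l + 3) * c / α with hM
    have hMpos : 0 < M := by positivity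
    obtain ⟨δ, hδ, H⟩ := ih (α / 4) ((M + 1) * c) (by positivity) (by positivity)
    refine ⟨min δ (α / (2 * c)), lt_min hδ (by positivity), ?_⟩
    intro V _ q t w hq hn ht1 ht2 hw hu htot hdeg
    set n : ℕ := Fintype.card V with hndef
    have hnR : (0 : ℝ) < n := by exact_mod_cast hn
    set D : ℕ → ℝ := fun j => c * q ^ (j - 1) / n with hDdef
    set K : ℕ → ℝ := fun j => M * q * D j with hKdef
    have hD0 : ∀ j, 0 < D j := fun j => by simp only [hDdef]; positivity
    have hK0 : ∀ j, 0 ≤ K j := fun j => by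
      simp only [hKdef]; exact mul_nonneg (by positivity) (hD0 j).le
    obtain ⟨L, hL1, hL2⟩ := exists_lists (V := V) t
    set b : ℝ := α / 4 / n with hb
    have hbpos : 0 < b := by positivity
    have hu' : ∀ s e, wstp w K s e ≠ 0 → e.card = l := by
      intro s e h
      obtain ⟨v, _, hv, h2⟩ := wstp_ne s e h
      have := hu _ h2
      rw [Finset.card_insert_of_notMem hv] at this
      omega
    have hres : ∀ s : List V, s.length ≤ t →
        3 * α / 4 ≤ wdeg (wres w (wstp w K s) K) ∅ := by
      intro s hs
      have h1 := wres_tot (w := w) (w' := wstp w K s) (K := K) (D := D) (l := l) (m := M * q) hw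
        (wstp_nonneg hw s) (hu' s) (by positivity) hD0 (fun j => rfl) hdeg
      have h2 := wstp_tot (K := K) (D := D) hw hdeg s
      have h3 : (s.length : ℝ) * D 1 ≤ 2 * q * c := by
        have : D 1 = c / n := by simp [hDdef]
        rw [this]
        have : (s.length : ℝ) ≤ 2 * (q * n) := le_trans (by exact_mod_cast hs) ht2
        calc (s.length : ℝ) * (c / n) ≤ 2 * (q * n) * (c / n) := by gcongr
          _ = 2 * q * c := by field_simp
      have h4 : 2 ^ l / (M * q) * wdeg (wstp w K s) ∅ ≤ α / 4 := by
        calc 2 ^ l / (M * q) * wdeg (wstp w K s) ∅ ≤ 2 ^ l / (M * q) * (2 * q * c) := by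
              gcongr; exact h2.trans h3
          _ = α / 4 := by rw [hM]; field_simp; ring
      linarith
    -- family for each sequence
    have fam : ∀ s : List V, s.length ≤ t → ∃ 𝓑 : Finset (Finset V),
        𝓑.card ≤ (n + 1) ^ (l * t) ∧
        (∀ B ∈ 𝓑, min δ (α / (2 * c)) * n ≤ B.card ∧ ∀ b ∈ B, ∃ e, w e ≠ 0 ∧ b ∈ e) ∧
        ∀ I : Finset V, (∀ e, w e ≠ 0 → ¬ e ⊆ I) → (∀ v ∈ s, v ∈ I) →
          s.length * b ≤ wdeg (wstp w K s) ∅ →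
          (s.length = t ∨ ∀ v ∈ I, wdeg (wres w (wstp w K s) K) {v} < b) →
          ∃ B ∈ 𝓑, Disjoint B I := by
      intro s hs
      by_cases hcase : s.length = t ∧ s.length * b ≤ wdeg (wstp w K s) ∅
      · obtain ⟨hlen, hheavy⟩ := hcase
        obtain ⟨𝓑, h1, h2, h3⟩ := H V q t (fun e => 1 / q * wstp w K s e) hq hn ht1 ht2
          (fun e => mul_nonneg (by positivity) (wstp_nonneg hw s e))
          (fun e he => hu' s e (right_ne_zero_of_mul he))
          (by
            rw [wdeg_mul]
            rw [hlen] at hheavy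
            have : q * n * b ≤ t * b := by gcongr
            have h5 : q * n * b = q * (α / 4) := by rw [hb]; field_simp
            have h6 : q * (α / 4) ≤ wdeg (wstp w K s) ∅ := by linarith
            calc α / 4 = 1 / q * (q * (α / 4)) := by field_simp
              _ ≤ _ := by gcongr)
          (by
            intro A hA
            rw [wdeg_mul]
            have h5 := wstp_deg (K := K) (D := D) hw hK0 (fun j => (hD0 j).le) hdeg s A hA
            have hc1 : 1 ≤ A.card := hA.card_pos
            have h6 : K A.card + D (A.card + 1) = q * ((M + 1) * c * q ^ (A.card - 1) / n) := by
              simp only [hKdef, hDdef]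
              obtain ⟨j, hj⟩ : ∃ j, A.card = j + 1 := ⟨A.card - 1, by omega⟩
              rw [hj]
              simp only [Nat.add_sub_cancel]
              rw [pow_succ]
              ring
            rw [h6] at h5
            calc 1 / q * wdeg (wstp w K s) A ≤ 1 / q * (q * ((M + 1) * c * q ^ (A.card - 1) / n)) := by
                  gcongr
              _ = _ := by rw [← mul_assoc, one_div, inv_mul_cancel₀ hq.ne', one_mul])
        refine ⟨𝓑, h1, ?_, ?_⟩
        · intro B hB
          obtain ⟨h4, h5⟩ := h2 B hB
          refine ⟨le_trans ?_ h4, ?_⟩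
          · gcongr; exact min_le_left _ _
          · intro x hx
            obtain ⟨e, he, hxe⟩ := h5 x hx
            obtain ⟨v, _, _, h6⟩ := wstp_ne s e (right_ne_zero_of_mul he)
            exact ⟨insert v e, h6, Finset.mem_insert_of_mem hxe⟩
        · intro I hI hsI _ _
          refine h3 I ?_
          intro e he heI
          obtain ⟨v, hv, _, h6⟩ := wstp_ne s e (right_ne_zero_of_mul he)
          exact hI _ h6 (Finset.insert_subset (hsI v hv) heI)
      · refine ⟨{Finset.univ.filter (fun v => b ≤ wdeg (wres w (wstp w K s) K) {v})}, ?_, ?_, ?_⟩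
        · simp only [Finset.card_singleton]
          exact Nat.one_le_pow _ _ (by omega)
        · intro B hB
          rw [Finset.mem_singleton] at hB
          constructor
          · have h1 := hres s hs
            have hru : ∀ e, wres w (wstp w K s) K e ≠ 0 → e.card = l + 1 :=
              fun e he => hu e (wres_ne he)
            have h2 := sum_wdeg_single hru
            have h3 : ∑ v : V, wdeg (wres w (wstp w K s) K) {v} ≤ B.card * (c / n) + n * b := by
              rw [← Finset.sum_filter_add_sum_filter_not Finset.univ
                (fun v => b ≤ wdeg (wres w (wstp w K s) K) {v})]
              rw [← hB]
              refine add_le_add ?_ ?_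
              · rw [← nsmul_eq_mul]
                refine Finset.sum_le_card_nsmul _ _ _ (fun v _ => ?_)
                have := (wdeg_mono (wres_le (w' := wstp w K s) (K := K) hw) {v}).trans
                  (hdeg {v} (by simp))
                simpa using this
              · have h4 : ∑ x with ¬b ≤ wdeg (wres w (wstp w K s) K) {x},
                    wdeg (wres w (wstp w K s) K) {x} ≤
                    (Finset.univ.filter (fun x => ¬b ≤ wdeg (wres w (wstp w K s) K) {x})).card • b := by
                  refine Finset.sum_le_card_nsmul _ _ _ (fun v hv => ?_)
                  simp only [Finset.mem_filter, Finset.mem_univ, true_and, not_le] at hv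
                  exact hv.le
                refine h4.trans ?_
                rw [nsmul_eq_mul]
                gcongr
                exact Finset.card_le_univ _
            rw [h2] at h3
            have h5 : (n : ℝ) * b = α / 4 := by rw [hb]; field_simp
            rw [h5] at h3
            have h6 : 3 * α / 4 ≤ ((l + 1 : ℕ) : ℝ) * wdeg (wres w (wstp w K s) K) ∅ := by
              have : (1 : ℝ) ≤ ((l + 1 : ℕ) : ℝ) := by push_cast; linarith [Nat.cast_nonneg (α := ℝ) l]
              nlinarith
            have h7 : α / 2 ≤ B.card * (c / n) := by linarith
            calc min δ (α / (2 * c)) * n ≤ α / (2 * c) * n := by gcongr; exact min_le_right _ _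
              _ = (α / 2) * (n / c) := by field_simp
              _ ≤ (B.card * (c / n)) * (n / c) := by gcongr
              _ = B.card := by field_simp
          · intro x hx
            rw [hB] at hx
            simp only [Finset.mem_filter, Finset.mem_univ, true_and] at hx
            by_contra hcon
            push Not at hcon
            have : wdeg (wres w (wstp w K s) K) {x} = 0 := by
              unfold wdeg
              refine Finset.sum_eq_zero (fun e _ => ?_)
              split_ifs with h
              · by_contra h8
                exact hcon e (wres_ne h8) (h (by simp))
              · rfl
            linarith
        · intro I hI hsI hheavy hhalt
          refine ⟨_, Finset.mem_singleton_self _, ?_⟩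
          rcases hhalt with h | h
          · exact absurd ⟨h, hheavy⟩ hcase
          · rw [Finset.disjoint_left]
            intro x hx hxI
            simp only [Finset.mem_filter, Finset.mem_univ, true_and] at hx
            linarith [h x hxI]
    choose! 𝓕 hF1 hF2 hF3 using fam
    refine ⟨(L.filter (fun s => s.length ≤ t)).biUnion 𝓕, ?_, ?_, ?_⟩
    · refine (Finset.card_biUnion_le_card_mul _ _ ((n + 1) ^ (l * t)) ?_).trans ?_
      · intro s hs
        exact hF1 s (Finset.mem_filter.1 hs).2
      · rw [add_mul, one_mul, pow_add, mul_comm]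
        exact Nat.mul_le_mul_left _ ((Finset.card_filter_le _ _).trans hL1)
    · intro B hB
      obtain ⟨s, hs, hBs⟩ := Finset.mem_biUnion.1 hB
      exact hF2 s (Finset.mem_filter.1 hs).2 B hBs
    · intro I hI
      obtain ⟨s, h1, h2, h3, h4⟩ := exists_seq (w := w) (K := K) b I t
      obtain ⟨B, hB, hd⟩ := hF3 s h2 I hI h1 h3 h4
      exact ⟨B, Finset.mem_biUnion.2 ⟨s, Finset.mem_filter.2 ⟨hL2 s h2, h2⟩, hB⟩, hd⟩


/-! ## Supersaturation -/

lemma tourn_list {α : Type*} (T : α → α → Prop) (k : ℕ) : ∀ (S : Finset α),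
    (∀ u ∈ S, ∀ v ∈ S, u ≠ v → T u v ∨ T v u) → 2 ^ k ≤ S.card →
    ∃ l : List α, l.length = k ∧ l.Nodup ∧ (∀ x ∈ l, x ∈ S) ∧ l.Pairwise T := by
  classical
  induction k with
  | zero => intro S _ _; exact ⟨[], by simp⟩
  | succ k ih =>
    intro S hT hS
    have hpos : 0 < S.card := lt_of_lt_of_le (by positivity) hS
    obtain ⟨v, hv⟩ := Finset.card_pos.1 hpos
    set A := (S.erase v).filter (fun u => T v u) with hA
    set B := (S.erase v).filter (fun u => ¬ T v u) with hB
    have hAB : A.card + B.card = S.card - 1 := by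
      rw [← Finset.card_erase_of_mem hv]
      exact Finset.card_filter_add_card_filter_not _
    have h2 : 2 ^ (k + 1) = 2 ^ k + 2 ^ k := by ring
    have hAS : ∀ u ∈ A, u ∈ S ∧ u ≠ v ∧ T v u := by
      intro u hu
      simp only [hA, Finset.mem_filter, Finset.mem_erase] at hu
      exact ⟨hu.1.2, hu.1.1, hu.2⟩
    have hBS : ∀ u ∈ B, u ∈ S ∧ u ≠ v ∧ T u v := by
      intro u hu
      simp only [hB, Finset.mem_filter, Finset.mem_erase] at hu
      exact ⟨hu.1.2, hu.1.1, (hT v hv u hu.1.2 (Ne.symm hu.1.1)).resolve_left hu.2⟩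
    by_cases h : 2 ^ k ≤ A.card
    · obtain ⟨l, h1, h3, h4, h5⟩ := ih A
        (fun u hu w hw => hT u (hAS u hu).1 w (hAS w hw).1) h
      refine ⟨v :: l, by simp [h1], ?_, ?_, ?_⟩
      · rw [List.nodup_cons]
        exact ⟨fun hvl => (hAS v (h4 v hvl)).2.1 rfl, h3⟩
      · intro x hx
        rcases List.mem_cons.1 hx with rfl | hx
        · exact hv
        · exact (hAS x (h4 x hx)).1
      · rw [List.pairwise_cons]
        exact ⟨fun x hx => (hAS x (h4 x hx)).2.2, h5⟩
    · have h' : 2 ^ k ≤ B.card := by omega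
      obtain ⟨l, h1, h3, h4, h5⟩ := ih B
        (fun u hu w hw => hT u (hBS u hu).1 w (hBS w hw).1) h'
      refine ⟨l ++ [v], by simp [h1], ?_, ?_, ?_⟩
      · rw [List.nodup_append]
        refine ⟨h3, by simp, ?_⟩
        intro a ha b hb
        simp only [List.mem_singleton] at hb
        subst hb
        exact (hBS a (h4 a ha)).2.1
      · intro x hx
        rcases List.mem_append.1 hx with hx | hx
        · exact (hBS x (h4 x hx)).1
        · simp only [List.mem_singleton] at hx
          exact hx ▸ hv
      · rw [List.pairwise_append]
        refine ⟨h5, by simp, ?_⟩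
        intro a ha b hb
        simp only [List.mem_singleton] at hb
        subst hb
        exact (hBS a (h4 a ha)).2.2

lemma tourn_fun {α : Type*} (T : α → α → Prop) (k : ℕ) (S : Finset α)
    (hT : ∀ u ∈ S, ∀ v ∈ S, u ≠ v → T u v ∨ T v u) (hS : 2 ^ k ≤ S.card) :
    ∃ f : Fin k → α, Function.Injective f ∧ (∀ i, f i ∈ S) ∧ ∀ i j, i < j → T (f i) (f j) := by
  obtain ⟨l, rfl, h2, h3, h4⟩ := tourn_list T k S hT hS
  refine ⟨l.get, List.nodup_iff_injective_get.1 h2, fun i => h3 _ (List.get_mem _ _), ?_⟩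
  intro i j hij
  exact List.pairwise_iff_get.1 h4 i j hij

lemma exists_rank {β : Type*} [Fintype β] (F : β → β → Prop) (h : RelAcyclic F) :
    ∃ g : β → Fin (Fintype.card β), Function.Injective g ∧ ∀ a b, F a b → g a < g b := by
  classical
  have hpo : IsPartialOrder β (Relation.ReflTransGen F) :=
    { refl := fun a => Relation.ReflTransGen.refl
      trans := fun a b c => Relation.ReflTransGen.trans
      antisymm := by
        intro a b hab hba
        by_contra hne
        rcases Relation.reflTransGen_iff_eq_or_transGen.1 hab with h1 | h1
        · exact hne h1.symm
        · exact h a (h1.trans_left hba) }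
  obtain ⟨s, hs, hrs⟩ := extend_partialOrder (Relation.ReflTransGen F)
  have htr : ∀ a b c, s a b → s b c → s a c := fun a b c => hs.trans a b c
  have has : ∀ a b, s a b → s b a → a = b := fun a b => hs.antisymm a b
  have htot : ∀ a b, s a b ∨ s b a := fun a b => hs.total a b
  let rk : β → ℕ := fun a => (Finset.univ.filter (fun b => s b a ∧ b ≠ a)).card
  have hlt : ∀ a b, s a b → a ≠ b → rk a < rk b := by
    intro a b hab hne
    refine Finset.card_lt_card ?_
    rw [Finset.ssubset_iff_of_subset]
    · exact ⟨a, by simp [hab, hne], by simp⟩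
    · intro c hc
      simp only [Finset.mem_filter, Finset.mem_univ, true_and] at hc ⊢
      refine ⟨htr _ _ _ hc.1 hab, ?_⟩
      rintro rfl
      exact hne (has _ _ hab hc.1)
  have hb : ∀ a, rk a < Fintype.card β := by
    intro a
    rw [← Finset.card_univ]
    refine Finset.card_lt_card ?_
    rw [Finset.ssubset_iff_of_subset (Finset.subset_univ _)]
    exact ⟨a, by simp, by simp⟩
  refine ⟨fun a => ⟨rk a, hb a⟩, ?_, ?_⟩
  · intro a b hab
    by_contra hne
    have hab' : rk a = rk b := by simpa using hab
    rcases htot a b with h1 | h1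
    · exact absurd (hlt a b h1 hne) (by omega)
    · exact absurd (hlt b a h1 (Ne.symm hne)) (by omega)
  · intro a b hab
    refine hlt a b (hrs _ _ (Relation.ReflTransGen.single hab)) ?_
    rintro rfl
    exact h a (Relation.TransGen.single hab)

lemma count_comp {ι κ : Type*} [Fintype ι] [Fintype κ] [DecidableEq ι] [DecidableEq κ]
    {N : ℕ} (φ : ι → κ) (hφ : Function.Injective φ)
    (S : Finset (ι → Fin N)) :
    (Finset.univ.filter (fun g : κ → Fin N => g ∘ φ ∈ S)).card * N ^ Fintype.card ι ≤
      S.card * N ^ Fintype.card κ := by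
  classical
  have h1 : N ^ Fintype.card ι = (Finset.univ : Finset (ι → Fin N)).card := by simp
  have h2 : N ^ Fintype.card κ = (Finset.univ : Finset (κ → Fin N)).card := by simp
  rw [h1, h2, ← Finset.card_product, ← Finset.card_product]
  refine Finset.card_le_card_of_injOn
    (fun x => (x.1 ∘ φ, Function.extend φ x.2 x.1)) ?_ ?_
  · intro x hx
    simp only [Finset.coe_product, Set.mem_prod, Finset.mem_coe, Finset.mem_filter, Finset.mem_univ, true_and, and_true] at hx ⊢
    exact hx
  · rintro ⟨g, h⟩ _ ⟨g', h'⟩ _ heq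
    simp only [Prod.mk.injEq] at heq ⊢
    obtain ⟨e1, e2⟩ := heq
    constructor
    · funext x
      by_cases hx : ∃ y, φ y = x
      · obtain ⟨y, rfl⟩ := hx
        exact congrFun e1 y
      · have := congrFun e2 x
        rwa [Function.extend_apply' _ _ _ hx, Function.extend_apply' _ _ _ hx] at this
    · funext y
      have := congrFun e2 (φ y)
      rwa [hφ.extend_apply, hφ.extend_apply] at this

open Classical in
/-- copies of `F` inside an arc set `C` -/
noncomputable def copiesIn {β : Type*} [Fintype β] (F : β → β → Prop) {N : ℕ}
    (C : Finset (Fin N × Fin N)) : Finset (β → Fin N) :=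
  Finset.univ.filter (fun f => Function.Injective f ∧ ∀ a b, F a b → (f a, f b) ∈ C)

open Classical in
/-- ordered pairs not covered by `C`, including the diagonal -/
noncomputable def uncov {N : ℕ} (C : Finset (Fin N × Fin N)) : Finset (Fin N × Fin N) :=
  Finset.univ.filter (fun x => x.1 = x.2 ∨ (x ∉ C ∧ (x.2, x.1) ∉ C))

lemma supersat {β : Type*} [Fintype β] (F : β → β → Prop) (h : RelAcyclic F) :
    ∃ α γ : ℝ, 0 < α ∧ 0 < γ ∧ ∀ (N : ℕ) (C : Finset (Fin N × Fin N)), 0 < N →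
      ((copiesIn F C).card : ℝ) < α * (N : ℝ) ^ Fintype.card β →
      γ * (N : ℝ) ^ 2 ≤ (uncov C).card := by
  classical
  set k := Fintype.card β with hk
  obtain ⟨rk, hrk, hF⟩ : ∃ g : β → Fin k, Function.Injective g ∧ ∀ a b, F a b → g a < g b :=
    exists_rank F h
  set R : ℕ := 2 ^ k with hR
  have hRpos : (0 : ℝ) < R := by rw [hR]; push_cast; positivity
  refine ⟨1 / (2 * (R : ℝ) ^ k), 1 / (2 * (R : ℝ) ^ 2), by positivity, by positivity, ?_⟩
  intro N C hN hC
  have hNR : (0 : ℝ) < N := by exact_mod_cast hN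
  set P : Fin R × Fin R → Finset (Fin R → Fin N) := fun ij =>
    if ij.1 = ij.2 then ∅ else Finset.univ.filter (fun g => (g ij.1, g ij.2) ∈ uncov C) with hP
  set Q : (β → Fin R) → Finset (Fin R → Fin N) := fun φ =>
    if Function.Injective φ then Finset.univ.filter (fun g => g ∘ φ ∈ copiesIn F C) else ∅ with hQ
  have hcover : (Finset.univ : Finset (Fin R → Fin N)) ⊆
      Finset.univ.biUnion P ∪ Finset.univ.biUnion Q := by
    intro g _
    rw [Finset.mem_union]
    by_cases hg : ∃ ij : Fin R × Fin R, ij.1 ≠ ij.2 ∧ (g ij.1, g ij.2) ∈ uncov C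
    · left
      obtain ⟨ij, h1, h2⟩ := hg
      exact Finset.mem_biUnion.2 ⟨ij, by simp, by simp [hP, h1, h2]⟩
    · right
      push Not at hg
      have hg' : ∀ i j, i ≠ j → g i ≠ g j ∧ ((g i, g j) ∈ C ∨ (g j, g i) ∈ C) := by
        intro i j hij
        have := hg (i, j) hij
        simp only [uncov, Finset.mem_filter, Finset.mem_univ, true_and, not_or] at this
        refine ⟨this.1, ?_⟩
        by_contra hcon
        push Not at hcon
        exact this.2 hcon
      obtain ⟨f, hf1, _, hf2⟩ := tourn_fun (fun i j => (g i, g j) ∈ C) k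
        (Finset.univ : Finset (Fin R)) (fun u _ v _ huv => (hg' u v huv).2) (by simp [hR])
      refine Finset.mem_biUnion.2 ⟨f ∘ rk, by simp, ?_⟩
      have hinj : Function.Injective (f ∘ rk) := hf1.comp hrk
      simp only [hQ, hinj, if_true, copiesIn, Finset.mem_filter, Finset.mem_univ, true_and]
      refine ⟨?_, ?_⟩
      · intro a b hab
        by_contra hne
        exact (hg' _ _ (fun h => hne (hinj h))).1 hab
      · intro a b hab
        exact hf2 _ _ (hF a b hab)
  have hcard := (Finset.card_le_card hcover).trans (Finset.card_union_le _ _)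
  have hPc : ∀ ij, ((P ij).card : ℝ) ≤ (uncov C).card * ((N : ℝ) ^ R / (N : ℝ) ^ 2) := by
    intro ij
    by_cases hij : ij.1 = ij.2
    · simp only [hP, hij, if_true, Finset.card_empty, Nat.cast_zero]; positivity
    · simp only [hP, hij, if_false]
      have h1 := count_comp (N := N) (![ij.1, ij.2] : Fin 2 → Fin R)
        (by
          intro a b hab
          fin_cases a <;> fin_cases b <;> simp_all)
        (Finset.univ.filter (fun h : Fin 2 → Fin N => (h 0, h 1) ∈ uncov C))
      have h2 : (Finset.univ.filter (fun h : Fin 2 → Fin N => (h 0, h 1) ∈ uncov C)).card ≤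
          (uncov C).card := by
        refine Finset.card_le_card_of_injOn (fun h => (h 0, h 1)) ?_ ?_
        · intro h hh; simpa using hh
        · intro a _ b _ hab
          simp only [Prod.mk.injEq] at hab
          funext i; fin_cases i
          · exact hab.1
          · exact hab.2
      simp only [Finset.mem_filter, Finset.mem_univ, true_and, Function.comp, Matrix.cons_val_zero,
        Matrix.cons_val_one, Fintype.card_fin] at h1
      have h3 := h1.trans (Nat.mul_le_mul_right _ h2)
      rw [← mul_div_assoc, le_div_iff₀ (by positivity)]
      exact_mod_cast h3
  have hQc : ∀ φ, ((Q φ).card : ℝ) ≤ 1 / (2 * (R : ℝ) ^ k) * (N : ℝ) ^ R := by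
    intro φ
    by_cases hφ : Function.Injective φ
    · simp only [hQ, hφ, if_true]
      have h1 := count_comp (N := N) φ hφ (copiesIn F C)
      rw [← hk, Fintype.card_fin] at h1
      have h2 : ((Finset.univ.filter (fun g => g ∘ φ ∈ copiesIn F C)).card : ℝ) * (N : ℝ) ^ k ≤
        (copiesIn F C).card * (N : ℝ) ^ R := by exact_mod_cast h1
      have h3 : ((copiesIn F C).card : ℝ) * (N : ℝ) ^ R ≤
        1 / (2 * (R : ℝ) ^ k) * (N : ℝ) ^ k * (N : ℝ) ^ R := by gcongr
      have h4 : (0 : ℝ) < (N : ℝ) ^ k := by positivity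
      refine le_of_mul_le_mul_right ?_ h4
      linarith
    · simp only [hQ, hφ, if_false, Finset.card_empty, Nat.cast_zero]; positivity
  have hP2 : ((Finset.univ.biUnion P).card : ℝ) ≤
      (R : ℝ) ^ 2 * ((uncov C).card * ((N : ℝ) ^ R / (N : ℝ) ^ 2)) := by
    have : ((Finset.univ.biUnion P).card : ℝ) ≤ ∑ ij, ((P ij).card : ℝ) := by
      exact_mod_cast Finset.card_biUnion_le
    refine this.trans ((Finset.sum_le_card_nsmul _ _ _ (fun ij _ => hPc ij)).trans ?_)
    rw [nsmul_eq_mul]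
    simp [sq]
  have hQ2 : ((Finset.univ.biUnion Q).card : ℝ) ≤ 1 / 2 * (N : ℝ) ^ R := by
    have : ((Finset.univ.biUnion Q).card : ℝ) ≤ ∑ φ, ((Q φ).card : ℝ) := by
      exact_mod_cast Finset.card_biUnion_le
    refine this.trans ((Finset.sum_le_card_nsmul _ _ _ (fun φ _ => hQc φ)).trans ?_)
    rw [nsmul_eq_mul]
    simp only [Finset.card_univ, Fintype.card_fun, Fintype.card_fin, ← hk, Nat.cast_pow]
    apply le_of_eq
    field_simp
  have h5 : (N : ℝ) ^ R ≤ (R : ℝ) ^ 2 * ((uncov C).card * ((N : ℝ) ^ R / (N : ℝ) ^ 2)) +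
      1 / 2 * (N : ℝ) ^ R := by
    have h6 : ((Finset.univ : Finset (Fin R → Fin N)).card : ℝ) = (N : ℝ) ^ R := by simp
    rw [← h6]
    have : ((Finset.univ : Finset (Fin R → Fin N)).card : ℝ) ≤
      (Finset.univ.biUnion P).card + (Finset.univ.biUnion Q).card := by exact_mod_cast hcard
    rw [h6] at this ⊢
    linarith
  have h7 : (0 : ℝ) < (N : ℝ) ^ R := by positivity
  have h8 : (R : ℝ) ^ 2 * ((uncov C).card * ((N : ℝ) ^ R / (N : ℝ) ^ 2)) =
     ((R : ℝ) ^ 2 * (uncov C).card / (N : ℝ) ^ 2) * (N : ℝ) ^ R := by ring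
  rw [h8] at h5
  have h9 : 1 / 2 ≤ (R : ℝ) ^ 2 * (uncov C).card / (N : ℝ) ^ 2 := by
    refine le_of_mul_le_mul_right ?_ h7
    linarith
  rw [le_div_iff₀ (by positivity)] at h9
  rw [div_mul_eq_mul_div, div_le_iff₀ (by positivity)]
  linarith


/-! ## Containers for orientations avoiding `F` -/

open Classical in
/-- arcs of `F` -/
noncomputable def arcsOf {β : Type*} [Fintype β] (F : β → β → Prop) : Finset (β × β) :=
  Finset.univ.filter (fun x => F x.1 x.2)

open Classical in
/-- vertices spanned by a set of arcs -/
noncomputable def vertsOf {β : Type*} (A : Finset (β × β)) : Finset β :=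
  A.image Prod.fst ∪ A.image Prod.snd

open Classical in
/-- image of the arcs of `F` -/
noncomputable def imgArcs {β : Type*} {γ : Type*} (E : Finset (β × β)) (f : β → γ) :
    Finset (γ × γ) :=
  E.image (Prod.map f f)

open Classical in
/-- weights of the hypergraph of copies of `F` in `C` -/
noncomputable def copyW {β : Type*} [Fintype β] (F : β → β → Prop) {N : ℕ}
    (C : Finset (Fin N × Fin N)) : Finset (Fin N × Fin N) → ℝ :=
  fun S => 1 / (N : ℝ) ^ Fintype.card β *
    ((copiesIn F C).filter (fun f => imgArcs (arcsOf F) f = S)).card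

lemma mem_imgArcs {β : Type*} {γ : Type*} {E : Finset (β × β)} {f : β → γ} {y : γ × γ} :
    y ∈ imgArcs E f ↔ ∃ x ∈ E, Prod.map f f x = y := by
  classical
  unfold imgArcs
  exact Finset.mem_image

lemma card_imgArcs {β : Type*} {γ : Type*} {E : Finset (β × β)} {f : β → γ}
    (hf : Function.Injective f) : (imgArcs E f).card = E.card := by
  classical
  unfold imgArcs
  exact Finset.card_image_of_injective _ (hf.prodMap hf)

lemma mem_vertsOf {β : Type*} {A : Finset (β × β)} {b : β} :
    b ∈ vertsOf A ↔ ∃ x ∈ A, x.1 = b ∨ x.2 = b := by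
  classical
  unfold vertsOf
  rw [Finset.mem_union, Finset.mem_image, Finset.mem_image]
  constructor
  · rintro (⟨x, hx, h⟩ | ⟨x, hx, h⟩)
    · exact ⟨x, hx, Or.inl h⟩
    · exact ⟨x, hx, Or.inr h⟩
  · rintro ⟨x, hx, h | h⟩
    · exact Or.inl ⟨x, hx, h⟩
    · exact Or.inr ⟨x, hx, h⟩

lemma vertsOf_card_le {β : Type*} (A : Finset (β × β)) : (vertsOf A).card ≤ 2 * A.card := by
  classical
  unfold vertsOf
  refine (Finset.card_union_le _ _).trans ?_
  have h1 := Finset.card_image_le (s := A) (f := Prod.fst)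
  have h2 := Finset.card_image_le (s := A) (f := Prod.snd)
  omega

lemma copyW_nonneg {β : Type*} [Fintype β] (F : β → β → Prop) {N : ℕ}
    (C : Finset (Fin N × Fin N)) (S) : 0 ≤ copyW F C S := by
  unfold copyW; positivity

lemma copyW_ne {β : Type*} [Fintype β] (F : β → β → Prop) {N : ℕ}
    (C : Finset (Fin N × Fin N)) (S) (h : copyW F C S ≠ 0) :
    ∃ f, Function.Injective f ∧ (∀ a b, F a b → (f a, f b) ∈ C) ∧ imgArcs (arcsOf F) f = S := by
  classical
  have h1 : ((copiesIn F C).filter (fun f => imgArcs (arcsOf F) f = S)).card ≠ 0 := by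
    intro h0
    apply h
    unfold copyW
    rw [h0]; simp
  obtain ⟨f, hf⟩ := Finset.card_pos.1 (Nat.pos_of_ne_zero h1)
  simp only [copiesIn, Finset.mem_filter, Finset.mem_univ, true_and] at hf
  exact ⟨f, hf.1.1, hf.1.2, hf.2⟩

lemma copyW_card {β : Type*} [Fintype β] (F : β → β → Prop) {N : ℕ}
    (C : Finset (Fin N × Fin N)) (S) (h : copyW F C S ≠ 0) : S.card = (arcsOf F).card := by
  classical
  obtain ⟨f, hf, _, rfl⟩ := copyW_ne F C S h
  exact card_imgArcs hf

open Classical in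
lemma copyW_deg {β : Type*} [Fintype β] (F : β → β → Prop) {N : ℕ}
    (C : Finset (Fin N × Fin N)) (A) :
    wdeg (copyW F C) A = 1 / (N : ℝ) ^ Fintype.card β *
      ((copiesIn F C).filter (fun f => A ⊆ imgArcs (arcsOf F) f)).card := by
  unfold wdeg copyW
  have : ∀ e : Finset (Fin N × Fin N), (if A ⊆ e then 1 / (N : ℝ) ^ Fintype.card β *
    (((copiesIn F C).filter (fun f => imgArcs (arcsOf F) f = e)).card : ℝ) else 0) =
    1 / (N : ℝ) ^ Fintype.card β * ∑ f ∈ copiesIn F C,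
      if imgArcs (arcsOf F) f = e then (if A ⊆ imgArcs (arcsOf F) f then (1 : ℝ) else 0) else 0 := by
    intro e
    rw [Finset.card_filter]
    by_cases h : A ⊆ e
    · rw [if_pos h]
      push_cast
      congr 1
      refine Finset.sum_congr rfl (fun f _ => ?_)
      by_cases h2 : imgArcs (arcsOf F) f = e
      · simp [h2, h]
      · simp [h2]
    · rw [if_neg h]
      symm
      apply mul_eq_zero_of_right
      refine Finset.sum_eq_zero (fun f _ => ?_)
      by_cases h2 : imgArcs (arcsOf F) f = e
      · simp [h2, h]
      · simp [h2]
  refine (Finset.sum_congr rfl (fun e _ => ?_)).trans ((Finset.sum_congr rfl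
    (fun e _ => this e)).trans ?_)
  · split_ifs <;> rfl
  rw [← Finset.mul_sum, Finset.sum_comm]
  congr 1
  rw [Finset.card_filter]
  push_cast
  refine Finset.sum_congr rfl (fun f _ => ?_)
  rw [Finset.sum_ite_eq]
  simp

lemma copyW_deg_le {β : Type*} [Fintype β] (F : β → β → Prop) {N : ℕ} (hN : 0 < N) (q : ℝ)
    (hq : 0 < q)
    (hdens : ∀ A' ⊆ arcsOf F, A'.Nonempty →
      (N : ℝ) ^ 2 ≤ (N : ℝ) ^ (vertsOf A').card * q ^ (A'.card - 1))
    (C : Finset (Fin N × Fin N)) (A : Finset (Fin N × Fin N)) (hA : A.Nonempty) :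
    wdeg (copyW F C) A ≤
      (2 ^ (arcsOf F).card * (2 * (arcsOf F).card + 1) ^ Fintype.card β : ℝ) * q ^ (A.card - 1) /
        Fintype.card (Fin N × Fin N) := by
  classical
  have hNR : (0 : ℝ) < N := by exact_mod_cast hN
  set E := arcsOf F with hE
  set k := Fintype.card β with hk
  rw [copyW_deg]
  set P : Finset (β × β) → Finset (β → Fin N) := fun A' =>
    if A'.Nonempty ∧ A'.card = A.card then
      Fintype.piFinset (fun b => if b ∈ vertsOf A' then vertsOf A else Finset.univ) else ∅ with hP
  have hsub : (copiesIn F C).filter (fun f => A ⊆ imgArcs E f) ⊆ E.powerset.biUnion P := by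
    intro f hf
    simp only [copiesIn, Finset.mem_filter, Finset.mem_univ, true_and] at hf
    obtain ⟨⟨hinj, _⟩, hAf⟩ := hf
    set A' := E.filter (fun x => Prod.map f f x ∈ A) with hA'
    have himg : A'.image (Prod.map f f) = A := by
      ext y
      constructor
      · intro hy
        obtain ⟨x, hx, rfl⟩ := Finset.mem_image.1 hy
        exact (Finset.mem_filter.1 hx).2
      · intro hy
        obtain ⟨x, hx, rfl⟩ := mem_imgArcs.1 (hAf hy)
        exact Finset.mem_image.2 ⟨x, Finset.mem_filter.2 ⟨hx, hy⟩, rfl⟩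
    have hcard : A'.card = A.card := by
      rw [← himg, Finset.card_image_of_injective _ (hinj.prodMap hinj)]
    have hne : A'.Nonempty := by
      rw [← himg] at hA
      exact Finset.image_nonempty.1 hA
    refine Finset.mem_biUnion.2 ⟨A', Finset.mem_powerset.2 (Finset.filter_subset _ _), ?_⟩
    simp only [hP, hne, hcard, and_self, if_true, Fintype.mem_piFinset]
    intro b
    split_ifs with hb
    · obtain ⟨x, hx, h⟩ := mem_vertsOf.1 hb
      refine mem_vertsOf.2 ⟨Prod.map f f x, (Finset.mem_filter.1 hx).2, ?_⟩
      rcases h with rfl | rfl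
      · exact Or.inl rfl
      · exact Or.inr rfl
    · simp
  have hPc : ∀ A' ∈ E.powerset, ((P A').card : ℝ) ≤
      (2 * E.card + 1) ^ k * ((N : ℝ) ^ k * q ^ (A.card - 1) / (N : ℝ) ^ 2) := by
    intro A' hA'
    by_cases h : A'.Nonempty ∧ A'.card = A.card
    · simp only [hP, h, and_self, if_true]
      rw [Fintype.card_piFinset]
      have h1 : ∀ b : β, ((if b ∈ vertsOf A' then vertsOf A else Finset.univ).card : ℝ) =
          if b ∈ vertsOf A' then ((vertsOf A).card : ℝ) else (N : ℝ) := by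
        intro b; split_ifs <;> simp
      push_cast
      rw [Finset.prod_congr rfl (fun b _ => h1 b), Finset.prod_ite]
      simp only [Finset.prod_const]
      have h2 : (Finset.univ.filter (fun b => b ∈ vertsOf A')) = vertsOf A' := by ext; simp
      have h3 : (Finset.univ.filter (fun b => b ∉ vertsOf A')).card = k - (vertsOf A').card := by
        have := Finset.card_filter_add_card_filter_not (s := (Finset.univ : Finset β)) (fun b => b ∈ vertsOf A')
        rw [h2, Finset.card_univ, ← hk] at this
        omega
      rw [h2, h3]
      have hvk : (vertsOf A').card ≤ k := Finset.card_le_univ _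
      have h4 : ((vertsOf A).card : ℝ) ≤ 2 * E.card + 1 := by
        have h5 := vertsOf_card_le A
        have h6 := Finset.card_le_card (Finset.mem_powerset.1 hA')
        have : (vertsOf A).card ≤ 2 * E.card + 1 := by omega
        exact_mod_cast this
      have h5 : ((vertsOf A).card : ℝ) ^ (vertsOf A').card ≤ (2 * E.card + 1) ^ k := by
        calc ((vertsOf A).card : ℝ) ^ (vertsOf A').card ≤ (2 * E.card + 1) ^ (vertsOf A').card := by
              gcongr
          _ ≤ _ := pow_le_pow_right₀ (by linarith [Nat.cast_nonneg (α := ℝ) E.card]) hvk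
      refine mul_le_mul h5 ?_ (by positivity) (by positivity)
      rw [le_div_iff₀ (by positivity)]
      have h6 := hdens A' (Finset.mem_powerset.1 hA') h.1
      rw [h.2] at h6
      calc (N : ℝ) ^ (k - (vertsOf A').card) * (N : ℝ) ^ 2
          ≤ (N : ℝ) ^ (k - (vertsOf A').card) * ((N : ℝ) ^ (vertsOf A').card * q ^ (A.card - 1)) := by
            gcongr
        _ = _ := by rw [← mul_assoc, ← pow_add, Nat.sub_add_cancel hvk]
    · simp only [hP, h, if_false, Finset.card_empty, Nat.cast_zero]; positivity
  have h1 : (((copiesIn F C).filter (fun f => A ⊆ imgArcs E f)).card : ℝ) ≤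
      2 ^ E.card * ((2 * E.card + 1) ^ k * ((N : ℝ) ^ k * q ^ (A.card - 1) / (N : ℝ) ^ 2)) := by
    have h2 : (((copiesIn F C).filter (fun f => A ⊆ imgArcs E f)).card : ℝ) ≤
        ∑ A' ∈ E.powerset, ((P A').card : ℝ) := by
      exact_mod_cast (Finset.card_le_card hsub).trans Finset.card_biUnion_le
    refine h2.trans ((Finset.sum_le_card_nsmul _ _ _ hPc).trans ?_)
    rw [nsmul_eq_mul, Finset.card_powerset]
    push_cast
    exact le_rfl
  calc _ ≤ 1 / (N : ℝ) ^ k * (2 ^ E.card * ((2 * E.card + 1) ^ k * ((N : ℝ) ^ k * q ^ (A.card - 1) / (N : ℝ) ^ 2))) := by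
        gcongr
    _ = _ := by
      simp only [Fintype.card_prod, Fintype.card_fin]
      push_cast
      field_simp

lemma iterate_containers {β : Type*} [Fintype β] (F : β → β → Prop) (α : ℝ) (hα : 0 < α) :
    ∃ δ : ℝ, 0 < δ ∧ ∀ (N : ℕ) (q : ℝ) (t : ℕ), 0 < N → 0 < q →
      q * (N : ℝ) ^ 2 ≤ t → (t : ℝ) ≤ 2 * (q * (N : ℝ) ^ 2) →
      (∀ A' ⊆ arcsOf F, A'.Nonempty →
        (N : ℝ) ^ 2 ≤ (N : ℝ) ^ (vertsOf A').card * q ^ (A'.card - 1)) →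
      ∀ (j : ℕ) (C : Finset (Fin N × Fin N)), (C.card : ℝ) ≤ j * (δ * (N : ℝ) ^ 2) →
      ∃ 𝓒 : Finset (Finset (Fin N × Fin N)),
        𝓒.card ≤ (N ^ 2 + 1) ^ ((arcsOf F).card * t * j) ∧
        (∀ C' ∈ 𝓒, ((copiesIn F C').card : ℝ) < α * (N : ℝ) ^ Fintype.card β) ∧
        ∀ I : Finset (Fin N × Fin N), I ⊆ C →
          (∀ f : β → Fin N, Function.Injective f → ¬ ∀ a b, F a b → (f a, f b) ∈ I) →
          ∃ C' ∈ 𝓒, I ⊆ C' := by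
  classical
  obtain ⟨δ, hδ, H⟩ := container (arcsOf F).card α
    (2 ^ (arcsOf F).card * (2 * (arcsOf F).card + 1) ^ Fintype.card β : ℝ) hα (by positivity)
  refine ⟨δ, hδ, ?_⟩
  intro N q t hN hq ht1 ht2 hdens
  have hNR : (0 : ℝ) < N := by exact_mod_cast hN
  have hcardV : Fintype.card (Fin N × Fin N) = N ^ 2 := by simp [sq]
  have hstep : ∀ C : Finset (Fin N × Fin N),
      ¬ ((copiesIn F C).card : ℝ) < α * (N : ℝ) ^ Fintype.card β →
      ∃ 𝓑 : Finset (Finset (Fin N × Fin N)), 𝓑.card ≤ (N ^ 2 + 1) ^ ((arcsOf F).card * t) ∧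
        (∀ B ∈ 𝓑, δ * (N : ℝ) ^ 2 ≤ B.card ∧ B ⊆ C) ∧
        ∀ I : Finset (Fin N × Fin N),
          (∀ f : β → Fin N, Function.Injective f → ¬ ∀ a b, F a b → (f a, f b) ∈ I) →
          ∃ B ∈ 𝓑, Disjoint B I := by
    intro C hC
    push Not at hC
    obtain ⟨𝓑, h1, h2, h3⟩ := H (Fin N × Fin N) q t (copyW F C) hq (by rw [hcardV]; positivity)
      (by rw [hcardV]; exact_mod_cast ht1) (by rw [hcardV]; exact_mod_cast ht2)
      (copyW_nonneg F C) (copyW_card F C)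
      (by
        rw [copyW_deg]
        simp only [Finset.empty_subset, Finset.filter_true]
        rw [one_div, ← div_eq_inv_mul, le_div_iff₀ (by positivity)]
        exact hC)
      (copyW_deg_le F hN q hq hdens C)
    rw [hcardV] at h1
    refine ⟨𝓑, h1, ?_, ?_⟩
    · intro B hB
      obtain ⟨h4, h5⟩ := h2 B hB
      rw [hcardV] at h4
      push_cast at h4
      refine ⟨h4, ?_⟩
      intro b hb
      obtain ⟨e, he, hbe⟩ := h5 b hb
      obtain ⟨f, _, hf, rfl⟩ := copyW_ne F C e he
      obtain ⟨x, hx, rfl⟩ := mem_imgArcs.1 hbe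
      exact hf _ _ (Finset.mem_filter.1 hx).2
    · intro I hI
      refine h3 I ?_
      intro e he heI
      obtain ⟨f, hinj, hf, rfl⟩ := copyW_ne F C e he
      refine hI f hinj ?_
      intro a b hab
      exact heI (mem_imgArcs.2 ⟨(a, b), by simp [arcsOf, hab], rfl⟩)
  intro j
  induction j with
  | zero =>
    intro C hC
    simp only [Nat.cast_zero, zero_mul] at hC
    by_cases hcop : ((copiesIn F C).card : ℝ) < α * (N : ℝ) ^ Fintype.card β
    · exact ⟨{C}, by simp, by simpa using hcop, fun I hI _ => ⟨C, by simp, hI⟩⟩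
    · obtain ⟨𝓑, h1, h2, h3⟩ := hstep C hcop
      refine ⟨∅, by simp, by simp, ?_⟩
      intro I _ hI
      exfalso
      obtain ⟨B, hB, _⟩ := h3 I hI
      obtain ⟨h4, h5⟩ := h2 B hB
      have h6 : (B.card : ℝ) ≤ C.card := by exact_mod_cast Finset.card_le_card h5
      have : 0 < δ * (N : ℝ) ^ 2 := by positivity
      linarith
  | succ j ih =>
    intro C hC
    by_cases hcop : ((copiesIn F C).card : ℝ) < α * (N : ℝ) ^ Fintype.card β
    · exact ⟨{C}, by simp [Nat.one_le_pow], by simpa using hcop, fun I hI _ => ⟨C, by simp, hI⟩⟩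
    · obtain ⟨𝓑, h1, h2, h3⟩ := hstep C hcop
      have hB : ∀ B ∈ 𝓑, ((C \ B).card : ℝ) ≤ j * (δ * (N : ℝ) ^ 2) := by
        intro B hB
        obtain ⟨h4, h5⟩ := h2 B hB
        rw [Finset.card_sdiff_of_subset h5, Nat.cast_sub (Finset.card_le_card h5)]
        push_cast at hC
        linarith
      choose! 𝓕 hF1 hF2 hF3 using fun B (hBm : B ∈ 𝓑) => ih (C \ B) (hB B hBm)
      refine ⟨𝓑.biUnion 𝓕, ?_, ?_, ?_⟩
      · refine (Finset.card_biUnion_le_card_mul _ _ _ (fun B hB => hF1 B hB)).trans ?_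
        rw [mul_add, mul_one, pow_add, mul_comm]
        exact Nat.mul_le_mul_left _ h1
      · intro C' hC'
        obtain ⟨B, hBm, hC'B⟩ := Finset.mem_biUnion.1 hC'
        exact hF2 B hBm C' hC'B
      · intro I hIC hI
        obtain ⟨B, hBm, hd⟩ := h3 I hI
        obtain ⟨C', hC', hIC'⟩ := hF3 B hBm I
          (Finset.subset_sdiff.2 ⟨hIC, hd.symm⟩) hI
        exact ⟨C', Finset.mem_biUnion.2 ⟨B, hBm, hC'⟩, hIC'⟩

theorem orient_containers {β : Type*} [Fintype β] (F : β → β → Prop) (h : RelAcyclic F) :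
    ∃ γ : ℝ, ∃ κ : ℕ, 0 < γ ∧ ∀ (N : ℕ) (q : ℝ) (t : ℕ), 2 ≤ γ * N → 0 < N → 0 < q →
      q * (N : ℝ) ^ 2 ≤ t → (t : ℝ) ≤ 2 * (q * (N : ℝ) ^ 2) →
      (∀ A' ⊆ arcsOf F, A'.Nonempty →
        (N : ℝ) ^ 2 ≤ (N : ℝ) ^ (vertsOf A').card * q ^ (A'.card - 1)) →
      ∃ 𝓤 : Finset (Finset (Fin N × Fin N)),
        𝓤.card ≤ (N ^ 2 + 1) ^ (κ * t) ∧
        (∀ U ∈ 𝓤, γ / 2 * (N : ℝ) ^ 2 ≤ U.card ∧ ∀ x ∈ U, x.1 ≠ x.2) ∧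
        ∀ G : SimpleGraph (Fin N), ¬ Arrows G F →
          ∃ U ∈ 𝓤, ∀ x ∈ U, ¬ G.Adj x.1 x.2 := by
  classical
  obtain ⟨α, γ, hα, hγ, hsat⟩ := supersat F h
  obtain ⟨δ, hδ, H⟩ := iterate_containers F α hα
  refine ⟨γ, (arcsOf F).card * ⌈1 / δ⌉₊, hγ, ?_⟩
  intro N q t hNbig hN hq ht1 ht2 hdens
  have hNR : (0 : ℝ) < N := by exact_mod_cast hN
  obtain ⟨𝓒, h1, h2, h3⟩ := H N q t hN hq ht1 ht2 hdens ⌈1 / δ⌉₊ Finset.univ (by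
    simp only [Finset.card_univ, Fintype.card_prod, Fintype.card_fin]
    push_cast
    have h4 : 1 / δ ≤ (⌈1 / δ⌉₊ : ℝ) := Nat.le_ceil _
    calc (N : ℝ) * N = 1 / δ * (δ * (N : ℝ) ^ 2) := by field_simp
      _ ≤ _ := by gcongr)
  refine ⟨𝓒.image (fun C => (uncov C).filter (fun x => x.1 ≠ x.2)), ?_, ?_, ?_⟩
  · refine Finset.card_image_le.trans (h1.trans (le_of_eq ?_))
    congr 1; ring
  · intro U hU
    obtain ⟨C, hC, rfl⟩ := Finset.mem_image.1 hU
    refine ⟨?_, fun x hx => (Finset.mem_filter.1 hx).2⟩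
    have h4 := hsat N C hN (h2 C hC)
    have h5 := Finset.card_filter_add_card_filter_not (s := uncov C) (fun x => x.1 ≠ x.2)
    have h6 : ((uncov C).filter (fun x => ¬ x.1 ≠ x.2)).card ≤ N := by
      have : (Finset.univ : Finset (Fin N)).card = N := by simp
      refine le_trans ?_ this.le
      refine Finset.card_le_card_of_injOn Prod.fst (by intro x _; simp) ?_
      intro x hx y hy hxy
      simp only [Finset.coe_filter, Set.mem_setOf_eq, not_not] at hx hy
      exact Prod.ext hxy (by rw [← hx.2, ← hy.2, hxy])
    have h7 : ((uncov C).card : ℝ) ≤ ((uncov C).filter (fun x => x.1 ≠ x.2)).card + N := by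
      have : (uncov C).card ≤ ((uncov C).filter (fun x => x.1 ≠ x.2)).card + N := by omega
      exact_mod_cast this
    nlinarith
  · intro G hG
    unfold Arrows at hG
    push Not at hG
    obtain ⟨o, ho, hcopy⟩ := hG
    obtain ⟨C, hC, hIC⟩ := h3 (Finset.univ.filter (fun x => o x.1 x.2)) (Finset.subset_univ _) (by
      intro f hf hall
      refine hcopy ⟨f, hf, ?_⟩
      intro a b hab
      simpa using hall a b hab)
    refine ⟨_, Finset.mem_image_of_mem _ hC, ?_⟩
    intro x hx hadj
    simp only [uncov, Finset.mem_filter, Finset.mem_univ, true_and] at hx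
    obtain ⟨hx1, hx2⟩ := hx
    rcases hx1 with hx1 | ⟨hx3, hx4⟩
    · exact hx2 hx1
    · have h5 : ¬ o x.1 x.2 := fun h => hx3 (hIC (by simp [h]))
      have h6 : ¬ o x.2 x.1 := fun h => hx4 (hIC (by simp [h]))
      exact h5 ((ho.2 _ _ hadj).2 h6)


/-! ## The binomial random graph -/

open Classical in
/-- expectation over the random graph -/
noncomputable def expGnp (n : ℕ) (p : ℝ) (f : SimpleGraph (Fin n) → ℝ) : ℝ :=
  ∑ G : SimpleGraph (Fin n),
    p ^ G.edgeSet.ncard * (1 - p) ^ (n.choose 2 - G.edgeSet.ncard) * f G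

open Classical in
lemma prob_eq_exp (n : ℕ) (p : ℝ) (Q : SimpleGraph (Fin n) → Prop) :
    probGnp n p Q = expGnp n p (fun G => if Q G then 1 else 0) := by
  unfold probGnp expGnp
  exact Finset.sum_congr rfl (fun G _ => by by_cases h : Q G <;> simp [h])

lemma exp_add (n : ℕ) (p : ℝ) (f g : SimpleGraph (Fin n) → ℝ) :
    expGnp n p (fun G => f G + g G) = expGnp n p f + expGnp n p g := by
  unfold expGnp
  rw [← Finset.sum_add_distrib]
  exact Finset.sum_congr rfl (fun G _ => by ring)

lemma exp_mul (n : ℕ) (p a : ℝ) (f : SimpleGraph (Fin n) → ℝ) :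
    expGnp n p (fun G => a * f G) = a * expGnp n p f := by
  unfold expGnp
  rw [Finset.mul_sum]
  exact Finset.sum_congr rfl (fun G _ => by ring)

lemma exp_sum {ι : Type*} (s : Finset ι) (n : ℕ) (p : ℝ) (f : ι → SimpleGraph (Fin n) → ℝ) :
    expGnp n p (fun G => ∑ i ∈ s, f i G) = ∑ i ∈ s, expGnp n p (f i) := by
  unfold expGnp
  rw [Finset.sum_comm]
  exact Finset.sum_congr rfl (fun G _ => by rw [Finset.mul_sum])

lemma exp_mono (n : ℕ) (p : ℝ) (hp0 : 0 ≤ p) (hp1 : p ≤ 1) {f g : SimpleGraph (Fin n) → ℝ}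
    (h : ∀ G, f G ≤ g G) : expGnp n p f ≤ expGnp n p g := by
  unfold expGnp
  refine Finset.sum_le_sum (fun G _ => ?_)
  have : 0 ≤ 1 - p := by linarith
  exact mul_le_mul_of_nonneg_left (h G) (by positivity)

open Classical in
lemma exp_edges (n : ℕ) (p : ℝ) (φ : Finset (Sym2 (Fin n)) → ℝ) :
    expGnp n p (fun G => φ (G.edgeSet.toFinset)) =
      ∑ S ∈ (⊤ : SimpleGraph (Fin n)).edgeFinset.powerset,
        p ^ S.card * (1 - p) ^ ((⊤ : SimpleGraph (Fin n)).edgeFinset.card - S.card) * φ S := by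
  unfold expGnp
  refine Finset.sum_bij' (fun G _ => G.edgeSet.toFinset)
    (fun S _ => SimpleGraph.fromEdgeSet (S : Set (Sym2 (Fin n)))) ?_ ?_ ?_ ?_ ?_
  · intro G _
    rw [Finset.mem_powerset]
    intro e he
    rw [Set.mem_toFinset] at he
    rw [SimpleGraph.mem_edgeFinset]
    exact SimpleGraph.edgeSet_mono le_top he
  · intro S _; exact Finset.mem_univ _
  · intro G _
    simp
  · intro S hS
    ext e
    rw [Finset.mem_powerset] at hS
    refine (@Set.mem_toFinset _ _ (_) _).trans ?_
    rw [SimpleGraph.edgeSet_fromEdgeSet]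
    constructor
    · intro h; exact h.1
    · intro h
      refine ⟨h, ?_⟩
      have := hS h
      rw [SimpleGraph.mem_edgeFinset] at this
      exact SimpleGraph.not_isDiag_of_mem_edgeSet _ this
  · intro G _
    rw [SimpleGraph.card_edgeFinset_top_eq_card_choose_two, Fintype.card_fin,
      Set.ncard_eq_toFinset_card']

open Classical in
lemma prob_sub (n : ℕ) (p : ℝ) (A : Finset (Sym2 (Fin n))) (hA : ∀ e ∈ A, ¬ e.IsDiag) :
    expGnp n p (fun G => if ∀ e ∈ A, e ∈ G.edgeSet then 1 else 0) = p ^ A.card := by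
  have h := exp_edges n p (fun S => if A ⊆ S then 1 else 0)
  have h2 : (fun G : SimpleGraph (Fin n) => if ∀ e ∈ A, e ∈ G.edgeSet then (1 : ℝ) else 0) =
      fun G => if A ⊆ G.edgeSet.toFinset then 1 else 0 := by
    funext G
    simp [Finset.subset_iff]
  rw [h2, h]
  set E := (⊤ : SimpleGraph (Fin n)).edgeFinset with hE
  have hAE : A ⊆ E := by
    intro e he
    rw [hE, SimpleGraph.mem_edgeFinset, SimpleGraph.edgeSet_top]
    exact hA e he
  have h3 := Finset.sum_pow_mul_eq_add_pow p (1 - p) (E \ A)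
  rw [add_sub_cancel, one_pow] at h3
  have h8 : p ^ A.card = p ^ A.card * ∑ a ∈ (E \ A).powerset,
      p ^ a.card * (1 - p) ^ ((E \ A).card - a.card) := by rw [h3, mul_one]
  rw [h8, Finset.mul_sum]
  simp only [mul_ite, mul_one, mul_zero]
  rw [← Finset.sum_filter]
  refine Finset.sum_nbij' (fun S => S \ A) (fun S => S ∪ A) ?_ ?_ ?_ ?_ ?_
  · intro S hS
    simp only [Finset.mem_filter, Finset.mem_powerset] at hS ⊢
    exact Finset.sdiff_subset_sdiff hS.1 le_rfl
  · intro S hS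
    simp only [Finset.mem_filter, Finset.mem_powerset] at hS ⊢
    exact ⟨Finset.union_subset (hS.trans Finset.sdiff_subset) hAE, Finset.subset_union_right⟩
  · intro S hS
    simp only [Finset.mem_filter, Finset.mem_powerset] at hS ⊢
    exact Finset.sdiff_union_of_subset hS.2
  · intro S hS
    simp only [Finset.mem_powerset] at hS ⊢
    exact Finset.union_sdiff_cancel_right (Finset.subset_sdiff.1 hS).2
  · intro S hS
    simp only [Finset.mem_filter, Finset.mem_powerset] at hS ⊢
    have h4 := Finset.card_sdiff_add_card_eq_card hS.2
    have h5 := Finset.card_sdiff_add_card_eq_card hAE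
    have h6 := Finset.card_le_card hS.1
    have h7 : (E \ A).card - (S \ A).card = E.card - S.card := by omega
    rw [h7, ← mul_assoc, ← pow_add, ← h4, add_comm A.card]

open Classical in
lemma prob_disj (n : ℕ) (p : ℝ) (A : Finset (Sym2 (Fin n))) (hA : ∀ e ∈ A, ¬ e.IsDiag) :
    expGnp n p (fun G => if ∀ e ∈ A, e ∉ G.edgeSet then 1 else 0) = (1 - p) ^ A.card := by
  have h := exp_edges n p (fun S => if Disjoint A S then 1 else 0)
  have h2 : (fun G : SimpleGraph (Fin n) => if ∀ e ∈ A, e ∉ G.edgeSet then (1 : ℝ) else 0) =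
      fun G => if Disjoint A G.edgeSet.toFinset then 1 else 0 := by
    funext G
    simp [Finset.disjoint_left]
  rw [h2, h]
  set E := (⊤ : SimpleGraph (Fin n)).edgeFinset with hE
  have hAE : A ⊆ E := by
    intro e he
    rw [hE, SimpleGraph.mem_edgeFinset, SimpleGraph.edgeSet_top]
    exact hA e he
  have h3 := Finset.sum_pow_mul_eq_add_pow p (1 - p) (E \ A)
  rw [add_sub_cancel, one_pow] at h3
  have h8 : (1 - p) ^ A.card = (1 - p) ^ A.card * ∑ a ∈ (E \ A).powerset,
      p ^ a.card * (1 - p) ^ ((E \ A).card - a.card) := by rw [h3, mul_one]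
  rw [h8, Finset.mul_sum]
  simp only [mul_ite, mul_one, mul_zero]
  rw [← Finset.sum_filter]
  refine Finset.sum_congr ?_ ?_
  · ext S
    simp only [Finset.mem_filter, Finset.mem_powerset, Finset.subset_sdiff]
    rw [disjoint_comm]
  · intro S hS
    simp only [Finset.mem_powerset] at hS
    have h5 := Finset.card_sdiff_add_card_eq_card hAE
    have h6 := Finset.card_le_card hS
    have h7 : E.card - S.card = A.card + ((E \ A).card - S.card) := by omega
    rw [h7, pow_add]; ring

lemma exp_one (n : ℕ) (p : ℝ) : expGnp n p (fun _ => 1) = 1 := by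
  classical
  have := prob_sub n p ∅ (by simp)
  simpa using this

/-! ### Disjoint copies of `K₄` -/

/-- `G` contains `N` pairwise disjoint 4-cliques -/
def DisjK4 {n : ℕ} (N : ℕ) (G : SimpleGraph (Fin n)) : Prop :=
  ∃ T : Fin N → Finset (Fin n), (∀ i, (T i).card = 4 ∧ ∀ u ∈ T i, ∀ v ∈ T i, u ≠ v → G.Adj u v) ∧
    ∀ i j, i ≠ j → Disjoint (T i) (T j)

/-- pairs inside `T` -/
def edOf {n : ℕ} (T : Finset (Fin n)) : Finset (Sym2 (Fin n)) :=
  T.offDiag.image (fun x => s(x.1, x.2))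

lemma mem_edOf {n : ℕ} {T : Finset (Fin n)} {a b : Fin n} :
    s(a, b) ∈ edOf T ↔ a ∈ T ∧ b ∈ T ∧ a ≠ b := by
  unfold edOf
  simp only [Finset.mem_image, Finset.mem_offDiag, Prod.exists, Sym2.eq_iff]
  constructor
  · rintro ⟨x, y, ⟨h1, h2, h3⟩, ⟨rfl, rfl⟩ | ⟨rfl, rfl⟩⟩
    · exact ⟨h1, h2, h3⟩
    · exact ⟨h2, h1, Ne.symm h3⟩
  · intro h
    exact ⟨a, b, h, Or.inl ⟨rfl, rfl⟩⟩

lemma edOf_card {n : ℕ} (T : Finset (Fin n)) : (edOf T).card = T.card.choose 2 :=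
  Sym2.card_image_offDiag T

lemma edOf_inter {n : ℕ} (T T' : Finset (Fin n)) : edOf T ∩ edOf T' = edOf (T ∩ T') := by
  ext e
  induction e with | _ a b
  simp only [Finset.mem_inter, mem_edOf]
  tauto

lemma edOf_diag {n : ℕ} (T : Finset (Fin n)) : ∀ e ∈ edOf T, ¬ e.IsDiag := by
  intro e
  induction e with | _ a b
  intro h
  simpa using (mem_edOf.1 h).2.2

open Classical in
/-- clique indicator -/
noncomputable def xK {n : ℕ} (T : Finset (Fin n)) (G : SimpleGraph (Fin n)) : ℝ :=
  if ∀ e ∈ edOf T, e ∈ G.edgeSet then 1 else 0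

lemma xK_nonneg {n : ℕ} (T : Finset (Fin n)) (G : SimpleGraph (Fin n)) : 0 ≤ xK T G := by
  unfold xK; split_ifs <;> simp

lemma exp_xK {n : ℕ} (p : ℝ) (T : Finset (Fin n)) (hT : T.card = 4) :
    expGnp n p (xK T) = p ^ 6 := by
  have := prob_sub n p (edOf T) (edOf_diag T)
  rw [edOf_card, hT] at this
  exact this

lemma exp_xK_mul {n : ℕ} (p : ℝ) (T T' : Finset (Fin n)) (hT : T.card = 4) (hT' : T'.card = 4) :
    expGnp n p (fun G => xK T G * xK T' G) = p ^ (12 - (T ∩ T').card.choose 2) := by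
  classical
  have h := prob_sub n p (edOf T ∪ edOf T') (by
    intro e he
    rcases Finset.mem_union.1 he with h | h
    · exact edOf_diag T e h
    · exact edOf_diag T' e h)
  have h1 : (edOf T ∪ edOf T').card = 12 - (T ∩ T').card.choose 2 := by
    have := Finset.card_union_add_card_inter (edOf T) (edOf T')
    rw [edOf_inter, edOf_card, edOf_card, edOf_card, hT, hT'] at this
    have h2 : Nat.choose 4 2 = 6 := rfl
    rw [h2] at this
    omega
  rw [h1] at h
  rw [← h]
  congr 1
  funext G
  unfold xK
  by_cases h2 : ∀ e ∈ edOf T, e ∈ G.edgeSet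
  · by_cases h3 : ∀ e ∈ edOf T', e ∈ G.edgeSet
    · rw [if_pos h2, if_pos h3, if_pos, one_mul]
      intro e he
      rcases Finset.mem_union.1 he with h | h
      · exact h2 e h
      · exact h3 e h
    · rw [if_pos h2, if_neg h3, mul_zero, if_neg]
      intro h4
      exact h3 (fun e he => h4 e (Finset.mem_union_right _ he))
  · rw [if_neg h2, zero_mul, if_neg]
    intro h4
    exact h2 (fun e he => h4 e (Finset.mem_union_left _ he))

lemma count_inter {n : ℕ} (T : Finset (Fin n)) (hT : T.card = 4) (i : ℕ) :
    ((Finset.powersetCard 4 (Finset.univ : Finset (Fin n))).filter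
      (fun T' => (T ∩ T').card = i)).card ≤ 6 * n ^ (4 - i) := by
  classical
  have h1 : ((Finset.powersetCard 4 (Finset.univ : Finset (Fin n))).filter
      (fun T' => (T ∩ T').card = i)).card ≤
      (Finset.powersetCard i T ×ˢ Finset.powersetCard (4 - i) (Finset.univ : Finset (Fin n))).card := by
    refine Finset.card_le_card_of_injOn (fun T' => (T ∩ T', T' \ T)) ?_ ?_
    · intro T' hT'
      simp only [Finset.coe_filter, Finset.mem_powersetCard, Finset.subset_univ, true_and] at hT'
      simp only [Finset.coe_product, Set.mem_prod, Finset.mem_coe, Finset.mem_powersetCard,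
        Finset.subset_univ, true_and]
      refine ⟨⟨Finset.inter_subset_left, hT'.2⟩, ?_⟩
      have := Finset.card_inter_add_card_sdiff T' T
      rw [Finset.inter_comm, hT'.2, hT'.1] at this
      omega
    · intro A _ B _ hAB
      simp only [Prod.mk.injEq] at hAB
      have h2 : ∀ A : Finset (Fin n), A = (T ∩ A) ∪ (A \ T) := by
        intro A; ext x; simp only [Finset.mem_union, Finset.mem_inter, Finset.mem_sdiff]; tauto
      rw [h2 A, h2 B, hAB.1, hAB.2]
  refine h1.trans ?_
  rw [Finset.card_product, Finset.card_powersetCard, Finset.card_powersetCard, hT, Finset.card_univ,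
    Fintype.card_fin]
  refine Nat.mul_le_mul ?_ (Nat.choose_le_pow _ _)
  by_cases hi : i ≤ 4
  · interval_cases i <;> decide
  · rw [Nat.choose_eq_zero_of_lt (by omega)]; omega

open Classical in
/-- number of intersecting pairs of 4-cliques -/
noncomputable def yK {n : ℕ} (G : SimpleGraph (Fin n)) : ℝ :=
  ∑ T ∈ Finset.powersetCard 4 (Finset.univ : Finset (Fin n)),
    ∑ T' ∈ (Finset.powersetCard 4 (Finset.univ : Finset (Fin n))).filter
      (fun T' => T' ≠ T ∧ ¬ Disjoint T T'), xK T G * xK T' G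

lemma sigma_bound {n : ℕ} (p : ℝ) (hp : 0 ≤ p) (T : Finset (Fin n)) (hT : T.card = 4) :
    ∑ T' ∈ (Finset.powersetCard 4 (Finset.univ : Finset (Fin n))).filter
      (fun T' => T' ≠ T ∧ ¬ Disjoint T T'), p ^ (12 - (T ∩ T').card.choose 2) ≤
      6 * ((n : ℝ) ^ 3 * p ^ 12 + (n : ℝ) ^ 2 * p ^ 11 + n * p ^ 9) := by
  classical
  set 𝒯 := Finset.powersetCard 4 (Finset.univ : Finset (Fin n)) with h𝒯
  have hsub : 𝒯.filter (fun T' => T' ≠ T ∧ ¬ Disjoint T T') ⊆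
      (Finset.Icc 1 3).biUnion (fun i => 𝒯.filter (fun T' => (T ∩ T').card = i)) := by
    intro T' hT'
    rw [Finset.mem_filter] at hT'
    obtain ⟨h1, h2, h3⟩ := hT'
    refine Finset.mem_biUnion.2 ⟨(T ∩ T').card, ?_, Finset.mem_filter.2 ⟨h1, rfl⟩⟩
    rw [Finset.mem_Icc]
    constructor
    · rw [Finset.not_disjoint_iff_nonempty_inter] at h3
      exact h3.card_pos
    · by_contra hcon
      push Not at hcon
      have hT'4 : T'.card = 4 := (Finset.mem_powersetCard.1 h1).2
      have h4 : T ∩ T' = T := Finset.eq_of_subset_of_card_le Finset.inter_subset_left (by omega)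
      have h5 : T ∩ T' = T' := Finset.eq_of_subset_of_card_le Finset.inter_subset_right (by omega)
      exact h2 (h5.symm.trans h4)
  have hblock : ∀ i ∈ Finset.Icc 1 3,
      ∑ T' ∈ 𝒯.filter (fun T' => (T ∩ T').card = i), p ^ (12 - (T ∩ T').card.choose 2) ≤
      6 * (n : ℝ) ^ (4 - i) * p ^ (12 - i.choose 2) := by
    intro i _
    have h1 : ∀ T' ∈ 𝒯.filter (fun T' => (T ∩ T').card = i),
        p ^ (12 - (T ∩ T').card.choose 2) ≤ p ^ (12 - i.choose 2) := by
      intro T' hT'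
      rw [(Finset.mem_filter.1 hT').2]
    refine (Finset.sum_le_card_nsmul _ _ _ h1).trans ?_
    rw [nsmul_eq_mul]
    gcongr
    exact_mod_cast count_inter T hT i
  calc _ ≤ ∑ T' ∈ (Finset.Icc 1 3).biUnion (fun i => 𝒯.filter (fun T' => (T ∩ T').card = i)),
        p ^ (12 - (T ∩ T').card.choose 2) :=
          Finset.sum_le_sum_of_subset_of_nonneg hsub (fun _ _ _ => by positivity)
    _ = ∑ i ∈ Finset.Icc 1 3, ∑ T' ∈ 𝒯.filter (fun T' => (T ∩ T').card = i),
        p ^ (12 - (T ∩ T').card.choose 2) := by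
          refine Finset.sum_biUnion ?_
          intro i _ j _ hij
          simp only [Function.onFun]
          rw [Finset.disjoint_left]
          intro x hx hx'
          exact hij ((Finset.mem_filter.1 hx).2.symm.trans (Finset.mem_filter.1 hx').2)
    _ ≤ ∑ i ∈ Finset.Icc 1 3, 6 * (n : ℝ) ^ (4 - i) * p ^ (12 - i.choose 2) :=
          Finset.sum_le_sum hblock
    _ = _ := by
          have : Finset.Icc 1 3 = {1, 2, 3} := by decide
          rw [this]
          simp [Nat.choose]
          ring

lemma disjK4_of {n N : ℕ} (G : SimpleGraph (Fin n))
    (h : (N : ℝ) ≤ ∑ T ∈ Finset.powersetCard 4 (Finset.univ : Finset (Fin n)), xK T G - yK G) :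
    DisjK4 N G := by
  classical
  set 𝒯 := Finset.powersetCard 4 (Finset.univ : Finset (Fin n)) with h𝒯
  set S := 𝒯.filter (fun T => xK T G = 1 ∧ ∀ T' ∈ 𝒯, T' ≠ T → ¬ Disjoint T T' → xK T' G = 0) with hS
  have h01 : ∀ T : Finset (Fin n), xK T G = 0 ∨ xK T G = 1 := by
    intro T; unfold xK; split_ifs <;> simp
  have hle : ∑ T ∈ 𝒯, xK T G - yK G ≤ S.card := by
    unfold yK
    rw [← Finset.sum_sub_distrib, hS, Finset.card_filter]
    push_cast
    refine Finset.sum_le_sum (fun T hT => ?_)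
    have hnn : 0 ≤ ∑ T' ∈ 𝒯.filter (fun T' => T' ≠ T ∧ ¬ Disjoint T T'), xK T G * xK T' G :=
      Finset.sum_nonneg (fun T' _ => mul_nonneg (xK_nonneg _ _) (xK_nonneg _ _))
    split_ifs with hc
    · rw [hc.1] at hnn ⊢; linarith
    · rcases h01 T with h0 | h1
      · rw [h0] at hnn ⊢; linarith
      · have : ∃ T' ∈ 𝒯, T' ≠ T ∧ ¬ Disjoint T T' ∧ xK T' G ≠ 0 := by
          by_contra hcon
          push Not at hcon
          exact hc ⟨h1, hcon⟩
        obtain ⟨T', hT', h2, h3, h4⟩ := this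
        have h5 : xK T' G = 1 := (h01 T').resolve_left h4
        have h6 : xK T G * xK T' G ≤
            ∑ T' ∈ 𝒯.filter (fun T' => T' ≠ T ∧ ¬ Disjoint T T'), xK T G * xK T' G :=
          Finset.single_le_sum (f := fun T' => xK T G * xK T' G)
            (fun T' _ => mul_nonneg (xK_nonneg _ _) (xK_nonneg _ _))
            (Finset.mem_filter.2 ⟨hT', h2, h3⟩)
        rw [h1, h5] at h6
        rw [h1]
        linarith
  have hNS : N ≤ S.card := by exact_mod_cast h.trans hle
  obtain ⟨S', hS', hcard⟩ := Finset.exists_subset_card_eq hNS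
  let e := S'.equivFinOfCardEq hcard
  have hmem : ∀ i, ((e.symm i : S') : Finset (Fin n)) ∈ S := fun i => hS' (e.symm i).2
  refine ⟨fun i => (e.symm i : S'), ?_, ?_⟩
  · intro i
    have h1 := hmem i
    rw [hS, Finset.mem_filter] at h1
    refine ⟨(Finset.mem_powersetCard.1 h1.1).2, ?_⟩
    intro u hu v hv huv
    have h2 := h1.2.1
    unfold xK at h2
    split_ifs at h2 with h3
    · exact h3 s(u, v) (mem_edOf.2 ⟨hu, hv, huv⟩)
    · norm_num at h2
  · intro i j hij
    by_contra hd
    have h1 := hmem i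
    have h2 := hmem j
    rw [hS, Finset.mem_filter] at h1 h2
    have hne : ((e.symm j : S') : Finset (Fin n)) ≠ (e.symm i : S') := by
      intro h
      exact hij (e.symm.injective (Subtype.ext h)).symm
    have := h1.2.2 _ h2.1 hne hd
    rw [h2.2.1] at this
    norm_num at this

open Classical in
lemma prob_not_disjK4 {n N : ℕ} (p : ℝ) (hp0 : 0 ≤ p) (hp1 : p ≤ 1) (μ τ : ℝ) (hμ : 0 < μ)
    (hμe : μ = (n.choose 4 : ℝ) * p ^ 6)
    (hτ : τ = 6 * ((n : ℝ) ^ 3 * p ^ 6 + (n : ℝ) ^ 2 * p ^ 5 + n * p ^ 3))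
    (hN : (N : ℝ) ≤ μ / 4) :
    expGnp n p (fun G => if ¬ DisjK4 N G then 1 else 0) ≤ 4 * (1 + τ) / μ + 4 * τ := by
  set 𝒯 := Finset.powersetCard 4 (Finset.univ : Finset (Fin n)) with h𝒯
  have h𝒯c : (𝒯.card : ℝ) = n.choose 4 := by simp [h𝒯]
  have h4 : ∀ T ∈ 𝒯, T.card = 4 := fun T hT => (Finset.mem_powersetCard.1 hT).2
  have hσ : 6 * ((n : ℝ) ^ 3 * p ^ 12 + (n : ℝ) ^ 2 * p ^ 11 + n * p ^ 9) = τ * p ^ 6 := by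
    rw [hτ]; ring
  have hynn : ∀ G : SimpleGraph (Fin n), 0 ≤ yK G := fun G =>
    Finset.sum_nonneg (fun T _ => Finset.sum_nonneg
      (fun T' _ => mul_nonneg (xK_nonneg _ _) (xK_nonneg _ _)))
  -- expectation of the number of intersecting pairs
  have hY : expGnp n p yK ≤ τ * μ := by
    have h1 : expGnp n p yK = ∑ T ∈ 𝒯, ∑ T' ∈ 𝒯.filter (fun T' => T' ≠ T ∧ ¬ Disjoint T T'),
        p ^ (12 - (T ∩ T').card.choose 2) := by
      unfold yK
      rw [exp_sum]
      refine Finset.sum_congr rfl (fun T hT => ?_)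
      rw [exp_sum]
      refine Finset.sum_congr rfl (fun T' hT' => ?_)
      exact exp_xK_mul p T T' (h4 T hT) (h4 T' (Finset.mem_filter.1 hT').1)
    rw [h1]
    refine (Finset.sum_le_card_nsmul _ _ (τ * p ^ 6) (fun T hT => ?_)).trans ?_
    · rw [← hσ]
      convert sigma_bound p hp0 T (h4 T hT)
    · rw [nsmul_eq_mul, h𝒯c, hμe]
      apply le_of_eq; ring
  -- variance
  have hV : expGnp n p (fun G => (∑ T ∈ 𝒯, xK T G - μ) ^ 2) ≤ (1 + τ) * μ := by
    have hX : expGnp n p (fun G => ∑ T ∈ 𝒯, xK T G) = μ := by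
      rw [exp_sum, Finset.sum_congr rfl (fun T hT => exp_xK p T (h4 T hT)), Finset.sum_const,
        nsmul_eq_mul, h𝒯c, hμe]
    have h1 : ∀ G : SimpleGraph (Fin n), (∑ T ∈ 𝒯, xK T G - μ) ^ 2 =
        (∑ T ∈ 𝒯, ∑ T' ∈ 𝒯, xK T G * xK T' G) + ((-2 * μ) * (∑ T ∈ 𝒯, xK T G) + μ ^ 2 * 1) := by
      intro G
      rw [← Finset.sum_mul_sum]; ring
    have h2 : expGnp n p (fun G => (∑ T ∈ 𝒯, xK T G - μ) ^ 2) =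
        (∑ T ∈ 𝒯, ∑ T' ∈ 𝒯, p ^ (12 - (T ∩ T').card.choose 2)) - μ ^ 2 := by
      rw [show (fun G : SimpleGraph (Fin n) => (∑ T ∈ 𝒯, xK T G - μ) ^ 2) = _ from funext h1]
      rw [exp_add, exp_add, exp_mul, exp_mul, exp_one, hX, exp_sum]
      have : ∀ T ∈ 𝒯, expGnp n p (fun G => ∑ T' ∈ 𝒯, xK T G * xK T' G) =
          ∑ T' ∈ 𝒯, p ^ (12 - (T ∩ T').card.choose 2) := by
        intro T hT
        rw [exp_sum]
        exact Finset.sum_congr rfl (fun T' hT' => exp_xK_mul p T T' (h4 T hT) (h4 T' hT'))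
      rw [Finset.sum_congr rfl this]
      ring
    have h3 : ∀ T ∈ 𝒯, ∑ T' ∈ 𝒯, p ^ (12 - (T ∩ T').card.choose 2) ≤
        𝒯.card * p ^ 12 + (τ * p ^ 6 + p ^ 6) := by
      intro T hT
      have hs := sigma_bound p hp0 T (h4 T hT)
      rw [hσ] at hs
      have h5 : ∀ T' ∈ 𝒯, p ^ (12 - (T ∩ T').card.choose 2) ≤ p ^ 12 +
          ((if T' ≠ T ∧ ¬ Disjoint T T' then p ^ (12 - (T ∩ T').card.choose 2) else 0) +
            if T' = T then p ^ 6 else 0) := by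
        intro T' hT'
        have hp12 : 0 ≤ p ^ 12 := by positivity
        by_cases e1 : T' = T
        · subst e1
          rw [Finset.inter_self, h4 T' hT']
          have : 12 - Nat.choose 4 2 = 6 := rfl
          rw [this]
          simp [hp12]
        · by_cases e2 : Disjoint T T'
          · have : T ∩ T' = ∅ := Finset.disjoint_iff_inter_eq_empty.1 e2
            rw [this]
            simp [e1, e2]
          · simp [e1, e2, hp12]
      refine (Finset.sum_le_sum h5).trans ?_
      rw [Finset.sum_add_distrib, Finset.sum_add_distrib, Finset.sum_const, nsmul_eq_mul,
        ← Finset.sum_filter, Finset.sum_ite_eq' 𝒯 T, if_pos hT]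
      refine add_le_add le_rfl (add_le_add ?_ le_rfl)
      convert hs
    have h6 := Finset.sum_le_card_nsmul _ _ _ h3
    rw [nsmul_eq_mul] at h6
    rw [h2]
    have h7 : (𝒯.card : ℝ) * (𝒯.card * p ^ 12 + (τ * p ^ 6 + p ^ 6)) = μ ^ 2 + (1 + τ) * μ := by
      rw [hμe, h𝒯c]; ring
    linarith
  have hpt : ∀ G : SimpleGraph (Fin n), (if ¬ DisjK4 N G then (1 : ℝ) else 0) ≤
      4 / μ ^ 2 * (∑ T ∈ 𝒯, xK T G - μ) ^ 2 + 4 / μ * yK G := by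
    intro G
    have hn1 : 0 ≤ 4 / μ ^ 2 * (∑ T ∈ 𝒯, xK T G - μ) ^ 2 := by positivity
    have hn2 : 0 ≤ 4 / μ * yK G := mul_nonneg (by positivity) (hynn G)
    by_cases h : DisjK4 N G
    · rw [if_neg (not_not.2 h)]; linarith
    · rw [if_pos h]
      have h5 : ¬ (N : ℝ) ≤ ∑ T ∈ 𝒯, xK T G - yK G := fun h6 => h (disjK4_of G h6)
      push Not at h5
      by_cases h6 : μ / 4 ≤ yK G
      · have : 1 ≤ 4 / μ * yK G := by
          calc (1 : ℝ) = 4 / μ * (μ / 4) := by field_simp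
            _ ≤ _ := by gcongr
        linarith
      · push Not at h6
        have h7 : μ / 2 ≤ μ - ∑ T ∈ 𝒯, xK T G := by linarith
        have h8 : (μ / 2) ^ 2 ≤ (∑ T ∈ 𝒯, xK T G - μ) ^ 2 := by nlinarith
        have : 1 ≤ 4 / μ ^ 2 * (∑ T ∈ 𝒯, xK T G - μ) ^ 2 := by
          calc (1 : ℝ) = 4 / μ ^ 2 * (μ / 2) ^ 2 := by field_simp; norm_num
            _ ≤ _ := by gcongr
        linarith
  refine (exp_mono n p hp0 hp1 hpt).trans ?_
  rw [exp_add, exp_mul, exp_mul]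
  calc 4 / μ ^ 2 * expGnp n p (fun G => (∑ T ∈ 𝒯, xK T G - μ) ^ 2) + 4 / μ * expGnp n p (fun G => yK G)
      ≤ 4 / μ ^ 2 * ((1 + τ) * μ) + 4 / μ * (τ * μ) := by gcongr
    _ = _ := by field_simp


/-! ## Deterministic gluing and density lemmas -/

lemma tt3_of_K4 {n : ℕ} (G : SimpleGraph (Fin n)) (o : Fin n → Fin n → Prop)
    (ho : IsOrientation G o) (T : Finset (Fin n)) (hT : T.card = 4)
    (hcl : ∀ u ∈ T, ∀ v ∈ T, u ≠ v → G.Adj u v) :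
    ∃ g : Fin 3 → Fin n, Function.Injective g ∧ (∀ a, g a ∈ T) ∧ ∀ a b, a < b → o (g a) (g b) := by
  have htot : ∀ u ∈ T, ∀ v ∈ T, u ≠ v → o u v ∨ o v u := by
    intro u hu v hv huv
    have := ho.2 u v (hcl u hu v hv huv)
    tauto
  have mk : ∀ x ∈ T, ∀ y ∈ T, ∀ z ∈ T, x ≠ y → x ≠ z → y ≠ z → o x y → o x z → o y z →
      ∃ g : Fin 3 → Fin n, Function.Injective g ∧ (∀ a, g a ∈ T) ∧
        ∀ a b, a < b → o (g a) (g b) := by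
    intro x hx y hy z hz h1 h2 h3 o1 o2 o3
    refine ⟨![x, y, z], ?_, ?_, ?_⟩
    · intro a b hab
      fin_cases a <;> fin_cases b <;> simp_all
    · intro a; fin_cases a <;> simp_all
    · intro a b hab
      fin_cases a <;> fin_cases b <;> simp_all
  have key : ∀ a ∈ T, ∀ y ∈ T, ∀ z ∈ T, a ≠ y → a ≠ z → y ≠ z →
      (o a y ∧ o a z ∨ o y a ∧ o z a) →
      ∃ g : Fin 3 → Fin n, Function.Injective g ∧ (∀ a, g a ∈ T) ∧
        ∀ a b, a < b → o (g a) (g b) := by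
    intro a ha y hy z hz h1 h2 h3 h
    rcases h with ⟨p1, p2⟩ | ⟨p1, p2⟩ <;> rcases htot y hy z hz h3 with h4 | h4
    · exact mk a ha y hy z hz h1 h2 h3 p1 p2 h4
    · exact mk a ha z hz y hy h2 h1 h3.symm p2 p1 h4
    · exact mk y hy z hz a ha h3 h1.symm h2.symm h4 p1 p2
    · exact mk z hz y hy a ha h3.symm h2.symm h1.symm h4 p2 p1
  obtain ⟨a, s, has, hs, hsc⟩ := Finset.card_eq_succ.1 hT
  obtain ⟨b, c, d, hbc, hbd, hcd, rfl⟩ := Finset.card_eq_three.1 hsc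
  have ha : a ∈ T := by rw [← hs]; simp
  have hb : b ∈ T := by rw [← hs]; simp
  have hc : c ∈ T := by rw [← hs]; simp
  have hd : d ∈ T := by rw [← hs]; simp
  have hab : a ≠ b := by rintro rfl; simp at has
  have hac : a ≠ c := by rintro rfl; simp at has
  have had : a ≠ d := by rintro rfl; simp at has
  rcases htot a ha b hb hab with h1 | h1 <;> rcases htot a ha c hc hac with h2 | h2 <;>
    rcases htot a ha d hd had with h3 | h3
  · exact key a ha b hb c hc hab hac hbc (Or.inl ⟨h1, h2⟩)
  · exact key a ha b hb c hc hab hac hbc (Or.inl ⟨h1, h2⟩)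
  · exact key a ha b hb d hd hab had hbd (Or.inl ⟨h1, h3⟩)
  · exact key a ha c hc d hd hac had hcd (Or.inr ⟨h2, h3⟩)
  · exact key a ha c hc d hd hac had hcd (Or.inl ⟨h2, h3⟩)
  · exact key a ha b hb d hd hab had hbd (Or.inr ⟨h1, h3⟩)
  · exact key a ha b hb c hc hab hac hbc (Or.inr ⟨h1, h2⟩)
  · exact key a ha b hb c hc hab hac hbc (Or.inr ⟨h1, h2⟩)

lemma glue {β : Type*} (F : β → β → Prop) (r : Fin 3) {n N : ℕ} (G : SimpleGraph (Fin n))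
    (hA : ∀ e : Fin N → Fin n, Function.Injective e → Arrows (G.comap e) F)
    (hB : DisjK4 N G) : Arrows G (rootedProd F TT3 r) := by
  intro o ho
  obtain ⟨T, hT, hdisj⟩ := hB
  choose g hginj hgT hgo using fun i => tt3_of_K4 G o ho (T i) (hT i).1 (hT i).2
  have hsep : ∀ i j a b, g i a = g j b → i = j := by
    intro i j a b h
    by_contra hij
    exact Finset.disjoint_left.1 (hdisj i j hij) (hgT i a) (h ▸ hgT j b)
  have heinj : Function.Injective (fun i => g i r) := fun i j h => hsep i j r r h
  obtain ⟨f, hf, hfo⟩ := hA (fun i => g i r) heinj (fun i j => o (g i r) (g j r))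
    ⟨fun u v h => ho.1 _ _ h, fun u v h => ho.2 _ _ h⟩
  refine ⟨fun x => g (f x.1) x.2, ?_, ?_⟩
  · rintro ⟨a, b⟩ ⟨c, d⟩ h
    have h1 : f a = f c := hsep _ _ _ _ h
    have h2 : a = c := hf h1
    subst h2
    exact Prod.ext rfl (hginj _ h)
  · rintro ⟨a, b⟩ ⟨c, d⟩ (⟨h1, h2, h3⟩ | ⟨h1, h2⟩)
    · simp only at h1 h2 h3
      subst h1; subst h2
      exact hfo _ _ h3
    · simp only at h1 h2
      subst h1
      exact hgo _ _ _ h2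

lemma d2_le_m2 {α : Type*} [Fintype α] (H : SimpleGraph α) (J : H.Subgraph) :
    d2 J.verts.ncard J.edgeSet.ncard ≤ m2 H := by
  unfold m2
  refine le_csSup ?_ ⟨J, rfl⟩
  refine Set.Finite.bddAbove ((Set.finite_range
    (fun J : H.Subgraph => d2 J.verts.ncard J.edgeSet.ncard)).subset ?_)
  rintro x ⟨J, rfl⟩
  exact ⟨J, rfl⟩

lemma two_le_m2 {β : Type*} [Fintype β] [Nonempty β] (F : β → β → Prop) (r : Fin 3) :
    2 ≤ m2Rel (rootedProd F TT3 r) := by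
  classical
  obtain ⟨b⟩ := ‹Nonempty β›
  let s : Set (β × Fin 3) := Set.range (fun a : Fin 3 => (b, a))
  let J : (SimpleGraph.fromRel (rootedProd F TT3 r)).Subgraph :=
    (⊤ : SimpleGraph.Subgraph _).induce s
  have hv : J.verts.ncard = 3 := by
    change (Set.range (fun a : Fin 3 => (b, a))).ncard = 3
    have : Function.Injective (fun a : Fin 3 => (b, a)) := fun x y h => (Prod.ext_iff.1 h).2
    rw [← Set.image_univ, Set.ncard_image_of_injective _ this]
    simp
  have hadj : ∀ x y : Fin 3, x < y → s((b, x), (b, y)) ∈ J.edgeSet := by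
    intro x y hxy
    rw [SimpleGraph.Subgraph.mem_edgeSet]
    refine ⟨⟨x, rfl⟩, ⟨y, rfl⟩, ?_⟩
    rw [SimpleGraph.Subgraph.top_adj, SimpleGraph.fromRel_adj]
    refine ⟨?_, Or.inl (Or.inr ⟨rfl, hxy⟩)⟩
    intro h
    exact hxy.ne (Prod.ext_iff.1 h).2
  have he : 3 ≤ J.edgeSet.ncard := by
    refine (Set.two_lt_ncard (Set.toFinite _)).2
      ⟨_, hadj 0 1 (by decide), _, hadj 0 2 (by decide), _, hadj 1 2 (by decide), ?_, ?_, ?_⟩ <;>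
    simp
  refine le_trans ?_ (d2_le_m2 _ J)
  rw [hv]
  unfold d2
  rw [if_pos le_rfl]
  have : (3 : ℝ) ≤ J.edgeSet.ncard := by exact_mod_cast he
  push_cast
  norm_num
  linarith

lemma nonempty_of_m2 {β : Type*} [Fintype β] (F : β → β → Prop) (h : 1 < m2Rel F) :
    Nonempty β := by
  by_contra hne
  rw [not_nonempty_iff] at hne
  have : m2Rel F ≤ 1 := by
    unfold m2Rel m2
    refine csSup_le ⟨_, ⊥, rfl⟩ ?_
    rintro x ⟨J, rfl⟩
    have h0 : J.verts.ncard = 0 := by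
      rw [Set.eq_empty_of_isEmpty J.verts, Set.ncard_empty]
    unfold d2
    rw [h0, if_neg (by norm_num)]
    split_ifs <;> norm_num
  linarith

lemma sparse_of_m2 {β : Type*} [Fintype β] (F : β → β → Prop)
    (hor : ∀ a b, F a b → ¬ F b a) (hm2 : m2Rel F < 2) (A : Finset (β × β))
    (hA : A ⊆ arcsOf F) (hne : A.Nonempty) :
    (A.card = 1 ∧ (vertsOf A).card = 2) ∨
      (3 ≤ (vertsOf A).card ∧ A.card ≤ 2 * ((vertsOf A).card - 2)) := by
  classical
  have hF : ∀ x ∈ A, F x.1 x.2 := fun x hx => (Finset.mem_filter.1 (hA hx)).2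
  have hirr : ∀ a, ¬ F a a := fun a h => hor a a h h
  have hne' : ∀ x ∈ A, x.1 ≠ x.2 := by
    intro x hx h
    have := hF x hx
    rw [h] at this
    exact hirr _ this
  have hv1 : ∀ x ∈ A, x.1 ∈ vertsOf A := fun x hx => mem_vertsOf.2 ⟨x, hx, Or.inl rfl⟩
  have hv2 : ∀ x ∈ A, x.2 ∈ vertsOf A := fun x hx => mem_vertsOf.2 ⟨x, hx, Or.inr rfl⟩
  obtain ⟨x0, hx0⟩ := hne
  have hge : 2 ≤ (vertsOf A).card :=
    Finset.one_lt_card.2 ⟨x0.1, hv1 _ hx0, x0.2, hv2 _ hx0, hne' _ hx0⟩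
  have hinj : Set.InjOn (fun x : β × β => s(x.1, x.2)) (A : Set (β × β)) := by
    intro x hx y hy hxy
    simp only [Sym2.eq_iff] at hxy
    rcases hxy with ⟨h1, h2⟩ | ⟨h1, h2⟩
    · exact Prod.ext h1 h2
    · exfalso
      have := hF x hx
      rw [h1, h2] at this
      exact hor _ _ this (hF y hy)
  by_cases h3 : 3 ≤ (vertsOf A).card
  · right
    refine ⟨h3, ?_⟩
    let J : (SimpleGraph.fromRel F).Subgraph :=
      { verts := (vertsOf A : Set β)
        Adj := fun u v => (u, v) ∈ A ∨ (v, u) ∈ A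
        adj_sub := by
          intro u v h
          rw [SimpleGraph.fromRel_adj]
          rcases h with h | h
          · exact ⟨hne' _ h, Or.inl (hF _ h)⟩
          · exact ⟨(hne' _ h).symm, Or.inr (hF _ h)⟩
        edge_vert := by
          intro u v h
          rcases h with h | h
          · exact hv1 _ h
          · exact hv2 _ h
        symm := ⟨fun u v h => h.symm⟩ }
    have hJv : J.verts.ncard = (vertsOf A).card := Set.ncard_coe_finset _
    have hJe : J.edgeSet.ncard = A.card := by
      have : J.edgeSet = (fun x : β × β => s(x.1, x.2)) '' (A : Set (β × β)) := by
        ext e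
        induction e with | _ a b
        rw [SimpleGraph.Subgraph.mem_edgeSet]
        change ((a, b) ∈ A ∨ (b, a) ∈ A) ↔ _
        constructor
        · rintro (h | h)
          · exact ⟨_, h, rfl⟩
          · exact ⟨_, h, Sym2.eq_swap⟩
        · rintro ⟨⟨x, y⟩, h, h2⟩
          simp only [Sym2.eq_iff] at h2
          rcases h2 with ⟨rfl, rfl⟩ | ⟨rfl, rfl⟩
          · exact Or.inl h
          · exact Or.inr h
      rw [this, Set.InjOn.ncard_image hinj, Set.ncard_coe_finset]
    have h4 := (d2_le_m2 _ J).trans_lt hm2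
    rw [hJv, hJe] at h4
    unfold d2 at h4
    rw [if_pos h3] at h4
    obtain ⟨m, hm⟩ := Nat.exists_eq_add_of_le h3
    rw [hm] at h4 ⊢
    push_cast at h4
    rw [div_lt_iff₀ (by linarith [Nat.cast_nonneg (α := ℝ) m])] at h4
    have h5 : (A.card : ℝ) < (2 * (m + 1) + 1 : ℕ) := by push_cast; linarith
    have h6 : A.card < 2 * (m + 1) + 1 := by exact_mod_cast h5
    omega
  · left
    have h2 : (vertsOf A).card = 2 := by omega
    refine ⟨?_, h2⟩
    refine le_antisymm (Finset.card_le_one.2 ?_) (Finset.card_pos.2 ⟨x0, hx0⟩)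
    intro x hx y hy
    obtain ⟨a, b, hab, hv⟩ := Finset.card_eq_two.1 h2
    have e1 := hv1 x hx
    have e2 := hv2 x hx
    have e3 := hv1 y hy
    have e4 := hv2 y hy
    have n1 := hne' x hx
    have n2 := hne' y hy
    rw [hv, Finset.mem_insert, Finset.mem_singleton] at e1 e2 e3 e4
    refine hinj hx hy ?_
    simp only [Sym2.eq_iff]
    grind


/-! ## The union bound -/

lemma card_image_edges {n N : ℕ} (e : Fin N → Fin n) (he : Function.Injective e)
    (U : Finset (Fin N × Fin N)) :
    U.card ≤ 2 * (U.image (fun x => s(e x.1, e x.2))).card := by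
  classical
  refine Finset.card_le_mul_card_image U 2 ?_
  intro b hb
  obtain ⟨x, hx, rfl⟩ := Finset.mem_image.1 hb
  refine (Finset.card_le_card (t := {x, x.swap}) ?_).trans Finset.card_le_two
  intro y hy
  have h := (Finset.mem_filter.1 hy).2
  simp only [Sym2.eq_iff] at h
  rw [Finset.mem_insert, Finset.mem_singleton]
  rcases h with ⟨h1, h2⟩ | ⟨h1, h2⟩
  · exact Or.inl (Prod.ext (he h1) (he h2))
  · exact Or.inr (Prod.ext (he h1) (he h2))

open Classical in
lemma union_bound {β : Type*} (F : β → β → Prop) {n N : ℕ} (p : ℝ) (hp0 : 0 ≤ p) (hp1 : p ≤ 1)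
    (𝓤 : Finset (Finset (Fin N × Fin N))) (m : ℕ)
    (h1 : ∀ U ∈ 𝓤, 2 * m ≤ U.card ∧ ∀ x ∈ U, x.1 ≠ x.2)
    (h2 : ∀ G : SimpleGraph (Fin N), ¬ Arrows G F → ∃ U ∈ 𝓤, ∀ x ∈ U, ¬ G.Adj x.1 x.2) :
    expGnp n p (fun G => if ¬ ∀ e : Fin N → Fin n, Function.Injective e → Arrows (G.comap e) F
      then 1 else 0) ≤ (n : ℝ) ^ N * (𝓤.card * (1 - p) ^ m) := by
  have hpp : 0 ≤ 1 - p := by linarith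
  set S := (Finset.univ : Finset (Fin N → Fin n)).filter Function.Injective with hS
  let ind : (Fin N → Fin n) → Finset (Fin N × Fin N) → SimpleGraph (Fin n) → ℝ := fun e U G =>
    if ∀ s ∈ U.image (fun x => s(e x.1, e x.2)), s ∉ G.edgeSet then 1 else 0
  have hnn : ∀ e U G, 0 ≤ ind e U G := by
    intro e U G
    change 0 ≤ ite _ _ _
    split_ifs <;> norm_num
  have hpt : ∀ G : SimpleGraph (Fin n),
      (if ¬ ∀ e : Fin N → Fin n, Function.Injective e → Arrows (G.comap e) F
        then (1 : ℝ) else 0) ≤ ∑ e ∈ S, ∑ U ∈ 𝓤, ind e U G := by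
    intro G
    by_cases h : ∀ e : Fin N → Fin n, Function.Injective e → Arrows (G.comap e) F
    · rw [if_neg (not_not.2 h)]
      exact Finset.sum_nonneg (fun e _ => Finset.sum_nonneg (fun U _ => hnn e U G))
    · rw [if_pos h]
      push Not at h
      obtain ⟨e, he, hna⟩ := h
      obtain ⟨U, hU, hUG⟩ := h2 _ hna
      have h3 : ind e U G = 1 := by
        refine if_pos ?_
        intro s hs
        obtain ⟨x, hx, rfl⟩ := Finset.mem_image.1 hs
        exact hUG x hx
      calc (1 : ℝ) = ind e U G := h3.symm
        _ ≤ ∑ U ∈ 𝓤, ind e U G := Finset.single_le_sum (f := fun U => ind e U G)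
            (fun U _ => hnn e U G) hU
        _ ≤ _ := Finset.single_le_sum (f := fun e => ∑ U ∈ 𝓤, ind e U G)
            (fun e _ => Finset.sum_nonneg (fun U _ => hnn e U G))
            (Finset.mem_filter.2 ⟨Finset.mem_univ _, he⟩)
  refine (exp_mono n p hp0 hp1 hpt).trans ?_
  rw [exp_sum]
  have h4 : ∀ e ∈ S, expGnp n p (fun G => ∑ U ∈ 𝓤, ind e U G) ≤ 𝓤.card * (1 - p) ^ m := by
    intro e he
    have hinj : Function.Injective e := (Finset.mem_filter.1 he).2
    rw [exp_sum]
    refine (Finset.sum_le_card_nsmul _ _ ((1 - p) ^ m) ?_).trans (le_of_eq (nsmul_eq_mul _ _))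
    intro U hU
    have h5 := prob_disj n p (U.image (fun x => s(e x.1, e x.2))) (by
      intro s hs
      obtain ⟨x, hx, rfl⟩ := Finset.mem_image.1 hs
      simp only [Sym2.mk_isDiag_iff]
      exact fun h => (h1 U hU).2 x hx (hinj h))
    refine (le_of_eq h5).trans ?_
    refine pow_le_pow_of_le_one hpp (by linarith) ?_
    have := card_image_edges e hinj U
    have := (h1 U hU).1
    omega
  refine (Finset.sum_le_card_nsmul _ _ _ h4).trans ?_
  rw [nsmul_eq_mul]
  have h6 : (S.card : ℝ) ≤ (n : ℝ) ^ N := by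
    have : S.card ≤ n ^ N := by
      refine (Finset.card_filter_le _ _).trans (le_of_eq ?_)
      simp
    exact_mod_cast this
  gcongr


/-! ## Asymptotics -/

lemma expo_bound {n N κ t m : ℕ} {γ p q a b : ℝ} (hn : 2 ≤ n) (hNn : N ≤ n)
    (hp0 : 0 ≤ p) (hp1 : p ≤ 1)
    (ht : (t : ℝ) ≤ 2 * (q * (N : ℝ) ^ 2)) (hm : γ / 4 * (N : ℝ) ^ 2 - 1 ≤ m)
    (ha : Real.log n ≤ a * (p * N)) (hb : 6 * κ * q * Real.log n ≤ b * p)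
    (hab : a + b ≤ γ / 8) :
    (n : ℝ) ^ N * (((N : ℝ) ^ 2 + 1) ^ (κ * t) * (1 - p) ^ m) ≤
      Real.exp (1 - γ / 8 * (p * (N : ℝ) ^ 2)) := by
  set L := Real.log n with hL
  have hnR : (2 : ℝ) ≤ n := by exact_mod_cast hn
  have hL0 : 0 ≤ L := Real.log_nonneg (by linarith)
  have hNR : (N : ℝ) ≤ n := by exact_mod_cast hNn
  have hN0 : (0 : ℝ) ≤ N := Nat.cast_nonneg _
  have e1 : (n : ℝ) ^ N = Real.exp (N * L) := by
    rw [mul_comm, Real.exp_mul, hL, Real.exp_log (by linarith), Real.rpow_natCast]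
  have e2 : ((N : ℝ) ^ 2 + 1) ^ (κ * t) ≤ Real.exp (3 * L * (κ * t)) := by
    have h3 : (N : ℝ) ^ 2 + 1 ≤ Real.exp (3 * L) := by
      have : Real.exp (3 * L) = (n : ℝ) ^ 3 := by
        rw [mul_comm, Real.exp_mul, hL, Real.exp_log (by linarith)]
        norm_cast
      rw [this]
      nlinarith [pow_le_pow_left₀ hN0 hNR 2, sq_nonneg ((n : ℝ) - 2)]
    calc ((N : ℝ) ^ 2 + 1) ^ (κ * t) ≤ (Real.exp (3 * L)) ^ (κ * t) := by gcongr
      _ = _ := by rw [← Real.exp_nat_mul]; congr 1; push_cast; ring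
  have e3 : (1 - p) ^ m ≤ Real.exp (-(p * m)) := by
    have h3 : 1 - p ≤ Real.exp (-p) := by linarith [Real.add_one_le_exp (-p)]
    calc (1 - p) ^ m ≤ (Real.exp (-p)) ^ m := pow_le_pow_left₀ (by linarith) h3 _
      _ = _ := by rw [← Real.exp_nat_mul]; congr 1; ring
  calc (n : ℝ) ^ N * (((N : ℝ) ^ 2 + 1) ^ (κ * t) * (1 - p) ^ m)
      ≤ Real.exp (N * L) * (Real.exp (3 * L * (κ * t)) * Real.exp (-(p * m))) := by
        rw [e1]
        have : 0 ≤ (1 - p) ^ m := pow_nonneg (by linarith) _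
        gcongr
    _ = Real.exp (N * L + (3 * L * (κ * t) + -(p * m))) := by
        rw [Real.exp_add, Real.exp_add]
    _ ≤ _ := by
        apply Real.exp_le_exp.2
        have f1 : N * L ≤ a * p * (N : ℝ) ^ 2 := by nlinarith
        have f2 : 3 * L * (κ * t) ≤ b * p * (N : ℝ) ^ 2 := by
          calc 3 * L * (κ * t) ≤ 3 * L * (κ * (2 * (q * (N : ℝ) ^ 2))) := by gcongr
            _ = (6 * κ * q * L) * (N : ℝ) ^ 2 := by ring
            _ ≤ _ := by gcongr
        have f3 : p * (γ / 4 * (N : ℝ) ^ 2 - 1) ≤ p * m := by gcongr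
        have f4 : (a + b) * (p * (N : ℝ) ^ 2) ≤ γ / 8 * (p * (N : ℝ) ^ 2) := by gcongr
        nlinarith

lemma choose_four {n : ℕ} (hn : 6 ≤ n) : (n : ℝ) ^ 4 / 384 ≤ n.choose 4 := by
  have h := Nat.pow_le_choose (α := ℝ) 4 n
  refine le_trans ?_ h
  have h2 : (n : ℝ) / 2 ≤ ((n + 1 - 4 : ℕ) : ℝ) := by
    rw [Nat.cast_sub (by omega)]
    have : (6 : ℝ) ≤ n := by exact_mod_cast hn
    push_cast
    linarith
  have h3 : ((n : ℝ) / 2) ^ 4 ≤ ((n + 1 - 4 : ℕ) : ℝ) ^ 4 := by gcongr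
  have h4 : ((Nat.factorial 4 : ℕ) : ℝ) = 24 := by norm_num [Nat.factorial]
  rw [h4]
  have : ((n : ℝ) / 2) ^ 4 / 24 ≤ ((n + 1 - 4 : ℕ) : ℝ) ^ 4 / 24 := by gcongr
  refine le_trans (le_of_eq ?_) this
  ring

open Classical in
lemma eventB {n N : ℕ} {ε p : ℝ} (hn : 6 ≤ n) (hε0 : 0 < ε) (hε : ε ≤ 1 / 32)
    (hp : p = (n : ℝ) ^ (-(1 / 2) - ε)) (hN : (N : ℝ) ≤ 2 * (n : ℝ) ^ (1 - 7 * ε))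
    (hbig : 3072 ≤ (n : ℝ) ^ ε) :
    expGnp n p (fun G => if ¬ DisjK4 N G then 1 else 0) ≤ 30000 * (n : ℝ) ^ (-ε) := by
  have hnR : (6 : ℝ) ≤ n := by exact_mod_cast hn
  have hn0 : (0 : ℝ) < n := by linarith
  have hn1 : (1 : ℝ) ≤ n := by linarith
  have hp0 : 0 < p := by rw [hp]; positivity
  have hp1 : p ≤ 1 := by
    rw [hp]; exact Real.rpow_le_one_of_one_le_of_nonpos hn1 (by linarith)
  have hpow : ∀ i j : ℕ, (n : ℝ) ^ i * p ^ j = (n : ℝ) ^ ((i : ℝ) + (-(1 / 2) - ε) * j) := by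
    intro i j
    rw [Real.rpow_add hn0, Real.rpow_mul hn0.le, Real.rpow_natCast, Real.rpow_natCast, hp]
  set x := (n : ℝ) ^ (-ε) with hx
  have hx0 : 0 < x := by positivity
  have hx1 : x ≤ 1 := Real.rpow_le_one_of_one_le_of_nonpos hn1 (by linarith)
  set μ := (n.choose 4 : ℝ) * p ^ 6 with hμ
  set τ := 6 * ((n : ℝ) ^ 3 * p ^ 6 + (n : ℝ) ^ 2 * p ^ 5 + n * p ^ 3) with hτ
  have hμl : (n : ℝ) ^ (1 - 6 * ε) / 384 ≤ μ := by
    have h1 := hpow 4 6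
    have h2 : ((4 : ℕ) : ℝ) + (-(1 / 2) - ε) * (6 : ℕ) = 1 - 6 * ε := by push_cast; ring
    rw [h2] at h1
    rw [← h1, hμ]
    have := choose_four hn
    calc (n : ℝ) ^ 4 * p ^ 6 / 384 = (n : ℝ) ^ 4 / 384 * p ^ 6 := by ring
      _ ≤ _ := by gcongr
  have hμ0 : 0 < μ := lt_of_lt_of_le (by positivity) hμl
  have hτ18 : τ ≤ 18 * x := by
    have h1 := hpow 3 6
    have h2 := hpow 2 5
    have h3 := hpow 1 3
    rw [pow_one] at h3
    have g1 : (n : ℝ) ^ 3 * p ^ 6 ≤ x := by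
      rw [h1]; refine Real.rpow_le_rpow_of_exponent_le hn1 ?_; push_cast; linarith
    have g2 : (n : ℝ) ^ 2 * p ^ 5 ≤ x := by
      rw [h2]; refine Real.rpow_le_rpow_of_exponent_le hn1 ?_; push_cast; linarith
    have g3 : (n : ℝ) * p ^ 3 ≤ x := by
      rw [h3]; refine Real.rpow_le_rpow_of_exponent_le hn1 ?_; push_cast; linarith
    rw [hτ]; linarith
  have hNμ : (N : ℝ) ≤ μ / 4 := by
    have h1 : (n : ℝ) ^ (1 - 6 * ε) = (n : ℝ) ^ ε * (n : ℝ) ^ (1 - 7 * ε) := by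
      rw [← Real.rpow_add hn0]; congr 1; ring
    have h2 : 3072 * (n : ℝ) ^ (1 - 7 * ε) ≤ (n : ℝ) ^ (1 - 6 * ε) := by
      rw [h1]; gcongr
    linarith
  refine (prob_not_disjK4 p hp0.le hp1 μ τ hμ0 hμ hτ hNμ).trans ?_
  have hinv : 1 / μ ≤ 384 * x := by
    rw [div_le_iff₀ hμ0]
    have h1 : x * (n : ℝ) ^ (1 - 6 * ε) = (n : ℝ) ^ (1 - 7 * ε) := by
      rw [hx, ← Real.rpow_add hn0]; congr 1; ring
    have h2 : 1 ≤ (n : ℝ) ^ (1 - 7 * ε) := Real.one_le_rpow hn1 (by linarith)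
    calc (1 : ℝ) ≤ x * (n : ℝ) ^ (1 - 6 * ε) := by rw [h1]; exact h2
      _ = 384 * x * ((n : ℝ) ^ (1 - 6 * ε) / 384) := by ring
      _ ≤ _ := by gcongr
  have hτ0 : 0 ≤ τ := by rw [hτ]; positivity
  calc 4 * (1 + τ) / μ + 4 * τ = 4 * (1 + τ) * (1 / μ) + 4 * τ := by ring
    _ ≤ 4 * (1 + 18 * 1) * (384 * x) + 4 * (18 * x) := by
      gcongr
      exact hτ18.trans (by linarith)
    _ ≤ _ := by linarith

open Classical in
lemma eventA {β : Type*} [Fintype β] [Nonempty β] (F : β → β → Prop)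
    (hor : ∀ a b, F a b → ¬ F b a) (hacyclic : RelAcyclic F) (hm2 : m2Rel F < 2) :
    ∃ γ : ℝ, ∃ κ : ℕ, 0 < γ ∧ ∀ (n N : ℕ) (ε p : ℝ), 6 ≤ n → 0 < ε →
      ε * Fintype.card β ≤ 1 / 32 → p = (n : ℝ) ^ (-(1 / 2) - ε) →
      N = ⌈(n : ℝ) ^ (1 - 7 * ε)⌉₊ → 3072 ≤ (n : ℝ) ^ ε → 2 ≤ γ * (n : ℝ) ^ (1 - 7 * ε) →
      (n : ℝ) ^ (-(1 / 4) : ℝ) * Real.log n + 6 * κ * (n : ℝ) ^ (-ε) * Real.log n ≤ γ / 8 →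
      expGnp n p (fun G => if ¬ ∀ e : Fin N → Fin n, Function.Injective e → Arrows (G.comap e) F
        then 1 else 0) ≤ Real.exp (1 - γ / 8 * (n : ℝ) ^ (1 / 4 : ℝ)) := by
  obtain ⟨γ, κ, hγ, H⟩ := orient_containers F hacyclic
  refine ⟨γ, κ, hγ, ?_⟩
  intro n N ε p hn hε0 hεk hp hN hbig hγN hlog
  have hk1 : (1 : ℝ) ≤ Fintype.card β := by exact_mod_cast Fintype.card_pos
  have hε : ε ≤ 1 / 32 := by nlinarith
  have hnR : (6 : ℝ) ≤ n := by exact_mod_cast hn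
  have hn0 : (0 : ℝ) < n := by linarith
  have hn1 : (1 : ℝ) ≤ n := by linarith
  have hp0 : 0 < p := by rw [hp]; positivity
  have hp1 : p ≤ 1 := by
    rw [hp]; exact Real.rpow_le_one_of_one_le_of_nonpos hn1 (by linarith)
  set M := (n : ℝ) ^ (1 - 7 * ε) with hM
  have hM1 : 1 ≤ M := Real.one_le_rpow hn1 (by linarith)
  have hMN : M ≤ N := by rw [hN]; exact Nat.le_ceil _
  have hN2 : (N : ℝ) ≤ 2 * M := by
    rw [hN]; linarith [Nat.ceil_lt_add_one (show 0 ≤ M by linarith)]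
  have hN0 : (0 : ℝ) < N := by linarith
  have hNn : N ≤ n := by
    have h1 : (n : ℝ) = (n : ℝ) ^ (7 * ε) * M := by
      rw [hM, ← Real.rpow_add hn0, show 7 * ε + (1 - 7 * ε) = 1 by ring, Real.rpow_one]
    have h2 : (n : ℝ) ^ ε ≤ (n : ℝ) ^ (7 * ε) :=
      Real.rpow_le_rpow_of_exponent_le hn1 (by linarith)
    have h3 : 2 * M ≤ (n : ℝ) ^ (7 * ε) * M := by gcongr; linarith
    have : (N : ℝ) ≤ n := by linarith
    exact_mod_cast this
  set q := (n : ℝ) ^ (-(1 / 2) - 2 * ε) with hq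
  have hq0 : 0 < q := by positivity
  have hq1 : q ≤ 1 := Real.rpow_le_one_of_one_le_of_nonpos hn1 (by linarith)
  have hqN : 1 ≤ q * (N : ℝ) ^ 2 := by
    have h1 : q * M ^ 2 = (n : ℝ) ^ (3 / 2 - 16 * ε) := by
      rw [hq, hM, ← Real.rpow_natCast, ← Real.rpow_mul hn0.le, ← Real.rpow_add hn0]
      congr 1; push_cast; ring
    calc (1 : ℝ) ≤ (n : ℝ) ^ (3 / 2 - 16 * ε) := Real.one_le_rpow hn1 (by linarith)
      _ = q * M ^ 2 := h1.symm
      _ ≤ _ := by gcongr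
  set t := ⌈q * (N : ℝ) ^ 2⌉₊ with ht
  have ht1 : q * (N : ℝ) ^ 2 ≤ t := Nat.le_ceil _
  have ht2 : (t : ℝ) ≤ 2 * (q * (N : ℝ) ^ 2) := by
    linarith [Nat.ceil_lt_add_one (show 0 ≤ q * (N : ℝ) ^ 2 by positivity)]
  obtain ⟨𝓤, hU1, hU2, hU3⟩ := H N q t (hγN.trans (by gcongr)) (by exact_mod_cast hN0) hq0 ht1 ht2
    (by
      intro A hA hne
      rcases sparse_of_m2 F hor hm2 A hA hne with ⟨h1, h2⟩ | ⟨h1, h2⟩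
      · rw [h1, h2]; simp
      · obtain ⟨m, hm⟩ := Nat.exists_eq_add_of_le' (show 2 ≤ (vertsOf A).card by omega)
        rw [hm] at h1 h2 ⊢
        have hmk : m ≤ Fintype.card β := by
          have := Finset.card_le_univ (vertsOf A)
          omega
        have hmkR : (m : ℝ) ≤ Fintype.card β := by exact_mod_cast hmk
        have hεm : ε * m ≤ 1 / 32 := le_trans (by gcongr) hεk
        obtain ⟨l, hl⟩ := Nat.exists_eq_add_of_le' (show 1 ≤ m by omega)
        have h3 : q ^ (2 * l + 1) ≤ q ^ (A.card - 1) :=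
          pow_le_pow_of_le_one hq0.le hq1 (by omega)
        have h4 : 1 ≤ M ^ m * q ^ (2 * l + 1) := by
          have : M ^ m * q ^ (2 * l + 1) =
              (n : ℝ) ^ ((1 - 7 * ε) * m + (-(1 / 2) - 2 * ε) * (2 * l + 1 : ℕ)) := by
            rw [Real.rpow_add hn0, Real.rpow_mul hn0.le, Real.rpow_mul hn0.le,
              Real.rpow_natCast, Real.rpow_natCast]
          rw [this]
          refine Real.one_le_rpow hn1 ?_
          rw [hl] at hεm ⊢
          push_cast at hεm ⊢
          nlinarith
        have h5 : 1 ≤ (N : ℝ) ^ m * q ^ (A.card - 1) := h4.trans (by gcongr)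
        rw [pow_add]
        calc (N : ℝ) ^ 2 = 1 * (N : ℝ) ^ 2 := by ring
          _ ≤ ((N : ℝ) ^ m * q ^ (A.card - 1)) * (N : ℝ) ^ 2 := by gcongr
          _ = _ := by ring)
  set m := ⌊γ / 4 * (N : ℝ) ^ 2⌋₊ with hm
  have hm1 : (m : ℝ) ≤ γ / 4 * (N : ℝ) ^ 2 := Nat.floor_le (by positivity)
  have hm3 : γ / 4 * (N : ℝ) ^ 2 - 1 ≤ m := by
    linarith [Nat.lt_floor_add_one (γ / 4 * (N : ℝ) ^ 2)]
  have hub := union_bound (n := n) F p hp0.le hp1 𝓤 m (by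
    intro U hU
    refine ⟨?_, (hU2 U hU).2⟩
    have h1 := (hU2 U hU).1
    have : ((2 * m : ℕ) : ℝ) ≤ U.card := by push_cast; linarith
    exact_mod_cast this) hU3
  refine hub.trans ?_
  have hpN : (n : ℝ) ^ (1 / 4 : ℝ) ≤ p * N := by
    have h1 : p * M = (n : ℝ) ^ (1 / 2 - 8 * ε) := by
      rw [hp, hM, ← Real.rpow_add hn0]; congr 1; ring
    calc (n : ℝ) ^ (1 / 4 : ℝ) ≤ (n : ℝ) ^ (1 / 2 - 8 * ε) :=
          Real.rpow_le_rpow_of_exponent_le hn1 (by linarith)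
      _ = p * M := h1.symm
      _ ≤ _ := by gcongr
  have hL0 : 0 ≤ Real.log n := Real.log_nonneg hn1
  have hmain := expo_bound (n := n) (N := N) (κ := κ) (t := t) (m := m) (γ := γ) (p := p) (q := q)
    (a := (n : ℝ) ^ (-(1 / 4) : ℝ) * Real.log n) (b := 6 * κ * (n : ℝ) ^ (-ε) * Real.log n)
    (by omega) hNn hp0.le hp1 ht2 hm3 (by
      have h1 : (n : ℝ) ^ (-(1 / 4) : ℝ) * (n : ℝ) ^ (1 / 4 : ℝ) = 1 := by
        rw [← Real.rpow_add hn0]; norm_num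
      calc Real.log n = ((n : ℝ) ^ (-(1 / 4) : ℝ) * (n : ℝ) ^ (1 / 4 : ℝ)) * Real.log n := by
            rw [h1, one_mul]
        _ = (n : ℝ) ^ (-(1 / 4) : ℝ) * Real.log n * (n : ℝ) ^ (1 / 4 : ℝ) := by ring
        _ ≤ _ := by gcongr) (by
      have h1 : q = (n : ℝ) ^ (-ε) * p := by
        rw [hq, hp, ← Real.rpow_add hn0]; congr 1; ring
      rw [h1]
      apply le_of_eq; ring) hlog
  have hcard : (𝓤.card : ℝ) ≤ ((N : ℝ) ^ 2 + 1) ^ (κ * t) := by exact_mod_cast hU1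
  have h1p : 0 ≤ 1 - p := by linarith
  calc (n : ℝ) ^ N * (𝓤.card * (1 - p) ^ m)
      ≤ (n : ℝ) ^ N * (((N : ℝ) ^ 2 + 1) ^ (κ * t) * (1 - p) ^ m) := by gcongr
    _ ≤ _ := hmain
    _ ≤ _ := by
      apply Real.exp_le_exp.2
      have h1 : (n : ℝ) ^ (1 / 4 : ℝ) ≤ p * (N : ℝ) ^ 2 := by
        have : p * N ≤ p * (N : ℝ) ^ 2 := by
          have h2 : (N : ℝ) ≤ (N : ℝ) ^ 2 := by nlinarith
          gcongr
        linarith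
      have : γ / 8 * (n : ℝ) ^ (1 / 4 : ℝ) ≤ γ / 8 * (p * (N : ℝ) ^ 2) := by gcongr
      linarith

open Filter in
/-- If `F⃗` is acyclic with `1 < m₂(F⃗) < 2`, then there is a choice of `p = p(n)` with
`p(n)·n^{1/m₂(F⃗∘TT⃗₃′)} → 0` for which a.a.s. `G(n,p) → F⃗∘TT⃗₃′`; hence
`p_{F⃗∘TT⃗₃′} ≪ n^{-1/m₂(F⃗∘TT⃗₃′)}`. -/
theorem stmt2 {β : Type*} [Fintype β] (F : β → β → Prop)
    (hor : ∀ a b, F a b → ¬ F b a) (hacyclic : RelAcyclic F)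
    (hm1 : 1 < m2Rel F) (hm2 : m2Rel F < 2) (r : Fin 3) :
    ∃ p : ℕ → ℝ, (∀ n, 0 ≤ p n ∧ p n ≤ 1) ∧
      Tendsto (fun n => p n * (n : ℝ) ^ (1 / m2Rel (rootedProd F TT3 r))) atTop (nhds 0) ∧
      Tendsto (fun n => probGnp n (p n) (fun G => Arrows G (rootedProd F TT3 r)))
        atTop (nhds 1) := by
  classical
  have : Nonempty β := nonempty_of_m2 F hm1
  have hk1 : (1 : ℝ) ≤ Fintype.card β := by exact_mod_cast Fintype.card_pos
  obtain ⟨γ, κ, hγ, hA⟩ := eventA F hor hacyclic hm2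
  obtain ⟨ε, hε0, hεk⟩ : ∃ ε : ℝ, 0 < ε ∧ ε * Fintype.card β ≤ 1 / 32 := by
    refine ⟨1 / (32 * Fintype.card β), by positivity, le_of_eq ?_⟩
    field_simp
  have hε : ε ≤ 1 / 32 := by nlinarith
  have hp : ∀ n : ℕ, 0 ≤ (n : ℝ) ^ (-(1 / 2) - ε) ∧ (n : ℝ) ^ (-(1 / 2) - ε) ≤ 1 := by
    intro n
    refine ⟨by positivity, ?_⟩
    rcases Nat.eq_zero_or_pos n with h | h
    · rw [h, Nat.cast_zero, Real.zero_rpow (by linarith)]; norm_num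
    · exact Real.rpow_le_one_of_one_le_of_nonpos (by exact_mod_cast h) (by linarith)
  have hcast : Tendsto (fun n : ℕ => (n : ℝ)) atTop atTop := tendsto_natCast_atTop_atTop
  have hneg : Tendsto (fun n : ℕ => (n : ℝ) ^ (-ε)) atTop (nhds 0) :=
    (tendsto_rpow_neg_atTop hε0).comp hcast
  refine ⟨fun n => (n : ℝ) ^ (-(1 / 2) - ε), hp, ?_, ?_⟩
  · refine tendsto_of_tendsto_of_tendsto_of_le_of_le' tendsto_const_nhds hneg ?_ ?_
    · exact Eventually.of_forall (fun n => mul_nonneg (hp n).1 (by positivity))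
    · filter_upwards [eventually_ge_atTop 1] with n hn
      have hn1 : (1 : ℝ) ≤ n := by exact_mod_cast hn
      have h2 := two_le_m2 F r
      have h3 : 1 / m2Rel (rootedProd F TT3 r) ≤ 1 / 2 := by
        apply one_div_le_one_div_of_le <;> linarith
      rw [← Real.rpow_add (by linarith)]
      exact Real.rpow_le_rpow_of_exponent_le hn1 (by linarith)
  · have hlog : ∀ δ : ℝ, 0 < δ →
        Tendsto (fun n : ℕ => (n : ℝ) ^ (-δ) * Real.log n) atTop (nhds 0) := by
      intro δ hδ
      have h1 := ((isLittleO_log_rpow_atTop hδ).tendsto_div_nhds_zero).comp hcast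
      refine h1.congr (fun n => ?_)
      simp only [Function.comp]
      rw [Real.rpow_neg (Nat.cast_nonneg n)]
      rw [div_eq_inv_mul]
    have hL : Tendsto (fun n : ℕ => (n : ℝ) ^ (-(1 / 4) : ℝ) * Real.log n +
        6 * κ * (n : ℝ) ^ (-ε) * Real.log n) atTop (nhds 0) := by
      have h1 := (hlog (1 / 4) (by norm_num)).add ((hlog ε hε0).const_mul (6 * κ : ℝ))
      rw [mul_zero, add_zero] at h1
      refine h1.congr (fun n => ?_)
      ring
    have hlow : Tendsto (fun n : ℕ => 1 - Real.exp (1 - γ / 8 * (n : ℝ) ^ (1 / 4 : ℝ)) -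
        30000 * (n : ℝ) ^ (-ε)) atTop (nhds 1) := by
      have h1 : Tendsto (fun n : ℕ => γ / 8 * (n : ℝ) ^ (1 / 4 : ℝ)) atTop atTop :=
        ((tendsto_rpow_atTop (by norm_num)).comp hcast).const_mul_atTop (by positivity)
      have h2 : Tendsto (fun n : ℕ => 1 - γ / 8 * (n : ℝ) ^ (1 / 4 : ℝ)) atTop atBot := by
        simp only [sub_eq_add_neg]
        exact tendsto_atBot_add_const_left _ _ (tendsto_neg_atTop_atBot.comp h1)
      have h3 := (tendsto_const_nhds (x := (1 : ℝ)).sub (Real.tendsto_exp_atBot.comp h2)).sub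
        (hneg.const_mul 30000)
      simpa using h3
    refine tendsto_of_tendsto_of_tendsto_of_le_of_le' hlow tendsto_const_nhds ?_ ?_
    · have ev1 : ∀ᶠ n : ℕ in atTop, 3072 ≤ (n : ℝ) ^ ε :=
        ((tendsto_rpow_atTop hε0).comp hcast).eventually_ge_atTop 3072
      have ev2 : ∀ᶠ n : ℕ in atTop, 2 ≤ γ * (n : ℝ) ^ (1 - 7 * ε) :=
        (((tendsto_rpow_atTop (by linarith)).comp hcast).const_mul_atTop hγ).eventually_ge_atTop 2
      have ev3 := hL.eventually_le_const (show 0 < γ / 8 by positivity)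
      filter_upwards [ev1, ev2, ev3, eventually_ge_atTop 6] with n g1 g2 g3 hn
      set N := ⌈(n : ℝ) ^ (1 - 7 * ε)⌉₊ with hN
      have hn1 : (1 : ℝ) ≤ n := by
        have : (6 : ℝ) ≤ n := by exact_mod_cast hn
        linarith
      have bA := hA n N ε _ hn hε0 hεk rfl hN g1 g2 g3
      have hN2 : (N : ℝ) ≤ 2 * (n : ℝ) ^ (1 - 7 * ε) := by
        have h1 : 1 ≤ (n : ℝ) ^ (1 - 7 * ε) := Real.one_le_rpow hn1 (by linarith)
        rw [hN]
        linarith [Nat.ceil_lt_add_one (show 0 ≤ (n : ℝ) ^ (1 - 7 * ε) by linarith)]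
      have bB := eventB (N := N) hn hε0 hε rfl hN2 g1
      rw [prob_eq_exp]
      set p := (n : ℝ) ^ (-(1 / 2) - ε) with hpdef
      have hsum : expGnp n p (fun _ => 1) ≤ expGnp n p (fun G =>
          (if Arrows G (rootedProd F TT3 r) then 1 else 0) +
          ((if ¬ ∀ e : Fin N → Fin n, Function.Injective e → Arrows (G.comap e) F
            then 1 else 0) + (if ¬ DisjK4 N G then 1 else 0))) := by
        refine exp_mono n p (hp n).1 (hp n).2 (fun G => ?_)
        by_cases c1 : ∀ e : Fin N → Fin n, Function.Injective e → Arrows (G.comap e) F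
        · by_cases c2 : DisjK4 N G
          · rw [if_pos (glue F r G c1 c2), if_neg (not_not.2 c1), if_neg (not_not.2 c2)]
            norm_num
          · rw [if_pos c2, if_neg (not_not.2 c1)]
            have : (0 : ℝ) ≤ if Arrows G (rootedProd F TT3 r) then 1 else 0 := by
              split_ifs <;> norm_num
            linarith
        · rw [if_pos c1]
          have h1 : (0 : ℝ) ≤ if Arrows G (rootedProd F TT3 r) then 1 else 0 := by
            split_ifs <;> norm_num
          have h2 : (0 : ℝ) ≤ if ¬ DisjK4 N G then 1 else 0 := by
            split_ifs <;> norm_num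
          linarith
      rw [exp_one, exp_add, exp_add] at hsum
      linarith
    · refine Eventually.of_forall (fun n => ?_)
      simp only
      rw [prob_eq_exp]
      refine le_trans ?_ (le_of_eq (exp_one n ((n : ℝ) ^ (-(1 / 2) - ε))))
      refine exp_mono n _ (hp n).1 (hp n).2 (fun G => ?_)
      split_ifs <;> norm_num
end

section
/- There exists an absolute constant b > 0 such that for every constant δ with 0 < δ ≤ 1/6 the following holds with p = p(n) = n^{δ−2/3}: a.a.s. the random graph G(n,p) satisfies G(n,p) → F⃗∘TT⃗₃′ simultaneously for every oriented forest F⃗ with v(F⃗) ≤ b·n^{7δ−2/3}/(log n)², where TT⃗₃′ is the transitive tournament on 3 vertices with an arbitrary choice of root. -/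
/-- Expectation over the `p`-random subset of `s`. -/
noncomputable def Ex {ι : Type*} (p : ℝ) (s : Finset ι) (f : Finset ι → ℝ) : ℝ :=
  ∑ t ∈ s.powerset, p ^ t.card * (1 - p) ^ (s.card - t.card) * f t

set_option linter.unusedSectionVars false

section ExLemmas
variable {ι : Type*} [DecidableEq ι] {p : ℝ}

lemma Ex_empty (f : Finset ι → ℝ) : Ex p ∅ f = f ∅ := by simp [Ex]

lemma Ex_insert {a : ι} {s : Finset ι} (ha : a ∉ s) (f : Finset ι → ℝ) :
    Ex p (insert a s) f = (1 - p) * Ex p s f + p * Ex p s (fun t => f (insert a t)) := by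
  unfold Ex
  rw [Finset.sum_powerset_insert ha, Finset.mul_sum, Finset.mul_sum]
  congr 1
  · refine Finset.sum_congr rfl fun t ht => ?_
    have h1 : t.card ≤ s.card := Finset.card_le_card (Finset.mem_powerset.1 ht)
    rw [Finset.card_insert_of_notMem ha, Nat.succ_sub h1, pow_succ]
    ring
  · refine Finset.sum_congr rfl fun t ht => ?_
    have h2 : a ∉ t := fun h => ha (Finset.mem_powerset.1 ht h)
    rw [Finset.card_insert_of_notMem ha, Finset.card_insert_of_notMem h2, Nat.add_sub_add_right,
      pow_succ]
    ring

lemma Ex_add (s : Finset ι) (f g : Finset ι → ℝ) :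
    Ex p s (fun t => f t + g t) = Ex p s f + Ex p s g := by
  simp [Ex, mul_add, Finset.sum_add_distrib]

lemma Ex_sub (s : Finset ι) (f g : Finset ι → ℝ) :
    Ex p s (fun t => f t - g t) = Ex p s f - Ex p s g := by
  simp [Ex, mul_sub, Finset.sum_sub_distrib]

lemma Ex_mul (s : Finset ι) (c : ℝ) (f : Finset ι → ℝ) :
    Ex p s (fun t => c * f t) = c * Ex p s f := by
  simp only [Ex, Finset.mul_sum]
  refine Finset.sum_congr rfl fun t _ => by ring

lemma Ex_sum {κ : Type*} (s : Finset ι) (A : Finset κ) (f : κ → Finset ι → ℝ) :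
    Ex p s (fun t => ∑ k ∈ A, f k t) = ∑ k ∈ A, Ex p s (f k) := by
  simp only [Ex, Finset.mul_sum]
  rw [Finset.sum_comm]

lemma Ex_mono (h0 : 0 ≤ p) (h1 : p ≤ 1) (s : Finset ι) {f g : Finset ι → ℝ}
    (h : ∀ t ⊆ s, f t ≤ g t) : Ex p s f ≤ Ex p s g := by
  refine Finset.sum_le_sum fun t ht => ?_
  have : 0 ≤ 1 - p := by linarith
  exact mul_le_mul_of_nonneg_left (h t (Finset.mem_powerset.1 ht)) (by positivity)

lemma Ex_const (s : Finset ι) (c : ℝ) : Ex p s (fun _ => c) = c := by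
  induction s using Finset.induction_on with
  | empty => simp [Ex_empty]
  | insert a s ha ih => rw [Ex_insert ha, ih]; ring

lemma Ex_congr (s : Finset ι) {f g : Finset ι → ℝ}
    (h : ∀ t ⊆ s, f t = g t) : Ex p s f = Ex p s g :=
  Finset.sum_congr rfl fun t ht => by rw [h t (Finset.mem_powerset.1 ht)]

lemma Ex_subset (s A : Finset ι) (hA : A ⊆ s) :
    Ex p s (fun t => if A ⊆ t then 1 else 0) = p ^ A.card := by
  induction s using Finset.induction_on generalizing A with
  | empty => obtain rfl := Finset.subset_empty.1 hA; simp [Ex_empty]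
  | insert a s ha ih =>
    rw [Ex_insert ha]
    by_cases h : a ∈ A
    · have e1 : Ex p s (fun t => if A ⊆ t then (1 : ℝ) else 0) = 0 := by
        refine (Ex_congr s fun t ht => ?_).trans (Ex_const s 0)
        exact if_neg fun hh => ha (ht (hh h))
      have e2 : Ex p s (fun t => if A ⊆ insert a t then (1 : ℝ) else 0) = p ^ (A.erase a).card := by
        rw [← ih (A.erase a) (by rwa [← Finset.subset_insert_iff])]
        simp only [Finset.subset_insert_iff]
      rw [e1, e2, ← Finset.card_erase_add_one h, pow_succ]; ring
    · have hA' : A ⊆ s := (Finset.subset_insert_iff_of_notMem h).1 hA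
      simp only [Finset.subset_insert_iff_of_notMem h]
      rw [ih A hA']; ring

lemma Ex_disjoint (s A : Finset ι) (hA : A ⊆ s) :
    Ex p s (fun t => if Disjoint A t then 1 else 0) = (1 - p) ^ A.card := by
  induction s using Finset.induction_on generalizing A with
  | empty => obtain rfl := Finset.subset_empty.1 hA; simp [Ex_empty]
  | insert a s ha ih =>
    rw [Ex_insert ha]
    by_cases h : a ∈ A
    · have e1 : Ex p s (fun t => if Disjoint A (insert a t) then (1 : ℝ) else 0) = 0 := by
        refine (Ex_congr s fun t ht => ?_).trans (Ex_const s 0)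
        exact if_neg fun hh => Finset.disjoint_left.1 hh h (Finset.mem_insert_self a t)
      have e2 : Ex p s (fun t => if Disjoint A t then (1 : ℝ) else 0)
          = (1 - p) ^ (A.erase a).card := by
        rw [← ih (A.erase a) (by rwa [← Finset.subset_insert_iff])]
        refine Ex_congr s fun t ht => ?_
        have : a ∉ t := fun h => ha (ht h)
        congr 1
        rw [← Finset.insert_erase h, Finset.disjoint_insert_left]
        simp [this]
      rw [e1, e2, ← Finset.card_erase_add_one h, pow_succ]; ring
    · have hA' : A ⊆ s := (Finset.subset_insert_iff_of_notMem h).1 hA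
      simp only [Finset.disjoint_insert_right, h, not_false_eq_true, true_and]
      rw [ih A hA']; ring

lemma Ex_sq_le (h0 : 0 ≤ p) (h1 : p ≤ 1) (s : Finset ι) (f : Finset ι → ℝ) :
    (Ex p s f) ^ 2 ≤ Ex p s (fun t => f t ^ 2) := by
  have h : Ex p s (fun _ => 0) ≤ Ex p s (fun t => (f t ^ 2 - (2 * Ex p s f) * f t) + (Ex p s f) ^ 2) :=
    Ex_mono h0 h1 s fun t _ => by nlinarith [sq_nonneg (f t - Ex p s f)]
  rw [Ex_const, Ex_add, Ex_sub, Ex_mul, Ex_const] at h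
  nlinarith

/-- Efron–Stein inequality on the cube. -/
lemma efron_stein (h0 : 0 ≤ p) (h1 : p ≤ 1) (s : Finset ι) (f : Finset ι → ℝ) :
    Ex p s (fun t => f t ^ 2) - (Ex p s f) ^ 2 ≤
      p * ∑ a ∈ s, Ex p s (fun t => (f (insert a t) - f (t.erase a)) ^ 2) := by
  induction s using Finset.induction_on generalizing f with
  | empty => simp [Ex_empty]
  | insert a s ha ih =>
    have i0 := ih f
    have i1 := ih (fun t => f (insert a t))
    rw [Finset.sum_insert ha, Ex_insert ha, Ex_insert ha f]
    have ea : Ex p (insert a s) (fun t => (f (insert a t) - f (t.erase a)) ^ 2)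
        = Ex p s (fun t => (f (insert a t) - f t) ^ 2) := by
      rw [Ex_insert ha]
      have c1 : Ex p s (fun t => (f (insert a t) - f (t.erase a)) ^ 2)
          = Ex p s (fun t => (f (insert a t) - f t) ^ 2) :=
        Ex_congr s fun t ht => by rw [Finset.erase_eq_of_notMem fun h => ha (ht h)]
      have c2 : Ex p s (fun t => (f (insert a (insert a t)) - f ((insert a t).erase a)) ^ 2)
          = Ex p s (fun t => (f (insert a t) - f t) ^ 2) :=
        Ex_congr s fun t ht => by
          rw [Finset.erase_insert fun h => ha (ht h), Finset.insert_idem]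
      rw [c1, c2]; ring
    have eb : ∑ b ∈ s, Ex p (insert a s) (fun t => (f (insert b t) - f (t.erase b)) ^ 2)
        = (1 - p) * ∑ b ∈ s, Ex p s (fun t => (f (insert b t) - f (t.erase b)) ^ 2)
        + p * ∑ b ∈ s, Ex p s (fun t => (f (insert a (insert b t)) - f (insert a (t.erase b))) ^ 2) := by
      rw [Finset.mul_sum, Finset.mul_sum, ← Finset.sum_add_distrib]
      refine Finset.sum_congr rfl fun b hb => ?_
      have hab : a ≠ b := fun h => ha (h ▸ hb)
      rw [Ex_insert ha]
      congr 2
      refine Ex_congr s fun t ht => ?_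
      rw [Finset.insert_comm, Finset.erase_insert_of_ne hab]
    have hs := Ex_sq_le h0 h1 s (fun t => f (insert a t) - f t)
    rw [Ex_sub] at hs
    rw [ea, eb]
    set A := Ex p s f
    set B := Ex p s (fun t => f (insert a t))
    set S := ∑ b ∈ s, Ex p s (fun t => (f (insert b t) - f (t.erase b)) ^ 2)
    set T := ∑ b ∈ s, Ex p s (fun t => (f (insert a (insert b t)) - f (insert a (t.erase b))) ^ 2)
    set D := Ex p s (fun t => (f (insert a t) - f t) ^ 2)
    have h1' : 0 ≤ 1 - p := by linarith
    have j0 := mul_le_mul_of_nonneg_left i0 h1'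
    have j1 := mul_le_mul_of_nonneg_left i1 h0
    have j2 := mul_le_mul_of_nonneg_left hs (mul_nonneg h0 h1')
    have hD : 0 ≤ D := le_trans (sq_nonneg _) hs
    have j3 : p * (1 - p) * D ≤ p * D := by nlinarith [mul_nonneg (mul_nonneg h0 h0) hD]
    nlinarith

open Classical in
/-- Chebyshev, lower tail. -/
lemma cheb (h0 : 0 ≤ p) (h1 : p ≤ 1) (s : Finset ι) (f : Finset ι → ℝ) (c x V : ℝ) (hx : 0 < x)
    (hc : c + x ≤ Ex p s f) (hV : Ex p s (fun t => f t ^ 2) - (Ex p s f) ^ 2 ≤ V) :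
    Ex p s (fun t => if f t < c then 1 else 0) ≤ V / x ^ 2 := by
  rw [le_div_iff₀ (by positivity), mul_comm, ← Ex_mul]
  refine le_trans ?_ hV
  have : Ex p s (fun t => f t ^ 2) - (Ex p s f) ^ 2
      = Ex p s (fun t => (f t ^ 2 - (2 * Ex p s f) * f t) + (Ex p s f) ^ 2) := by
    rw [Ex_add, Ex_sub, Ex_mul, Ex_const]; ring
  rw [this]
  refine Ex_mono h0 h1 s fun t _ => ?_
  split_ifs with h
  · nlinarith
  · nlinarith [sq_nonneg (f t - Ex p s f)]

end ExLemmas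


lemma acyclic_leaf {V : Type*} [Finite V] [Nonempty V] (G : SimpleGraph V) (h : G.IsAcyclic) :
    ∃ u c, ∀ w, G.Adj u w → w = c := by
  obtain ⟨u, v, p, hp, hmax⟩ := SimpleGraph.Walk.exists_isPath_forall_isPath_length_le_length G
  refine ⟨u, p.snd, fun w hw => ?_⟩
  refine h.eq_snd_of_adj_start hp hw ?_
  by_contra hn
  have := hmax w v (SimpleGraph.Walk.cons hw.symm p) (by
    rw [SimpleGraph.Walk.cons_isPath_iff]; exact ⟨hp, hn⟩)
  simp at this

open Classical in
/-- A vertex with in-degree at least its out-degree. -/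
lemma exists_balanced {V : Type*} (o : V → V → Prop) (U : Finset V) (hU : U.Nonempty) :
    ∃ v ∈ U, (U.filter (fun w => o v w)).card ≤ (U.filter (fun w => o w v)).card := by
  by_contra! h
  have h2 := Finset.sum_lt_sum_of_nonempty hU h
  have h3 := Finset.sum_card_bipartiteAbove_eq_sum_card_bipartiteBelow o (s := U) (t := U)
  unfold Finset.bipartiteAbove Finset.bipartiteBelow at h3
  omega

open Classical in
/-- There is a stable set absorbing at least half of the vertices. -/
lemma half_absorb {V : Type*} (o : V → V → Prop) (ho : ∀ v, ¬ o v v) (U : Finset V) :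
    ∃ S ⊆ U, (∀ u ∈ S, ∀ v ∈ S, ¬ o u v) ∧
      U.card ≤ 2 * (U.filter (fun u => u ∈ S ∨ ∃ s ∈ S, o u s)).card := by
  induction hk : U.card using Nat.strong_induction_on generalizing U with
  | _ k ih =>
    subst hk
    rcases U.eq_empty_or_nonempty with rfl | hU
    · exact ⟨∅, by simp⟩
    obtain ⟨v, hv, hd⟩ := exists_balanced o U hU
    set A := U.filter (fun w => o v w)
    set B := U.filter (fun w => o w v)
    set U' := U.filter (fun w => w ≠ v ∧ ¬ o v w ∧ ¬ o w v)
    have hlt : U'.card < U.card := by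
      apply Finset.card_lt_card
      refine ⟨Finset.filter_subset _ _, fun h => ?_⟩
      have := h hv
      simp [U'] at this
    obtain ⟨S, hS, hst, hc⟩ := ih _ hlt U' rfl
    refine ⟨insert v S, ?_, ?_, ?_⟩
    · intro x hx
      rcases Finset.mem_insert.1 hx with rfl | hx
      · exact hv
      · exact (Finset.mem_filter.1 (hS hx)).1
    · intro a ha b hb
      rcases Finset.mem_insert.1 ha with ha' | ha' <;> rcases Finset.mem_insert.1 hb with hb' | hb'
      · rw [ha', hb']; exact ho _
      · rw [ha']; exact (Finset.mem_filter.1 (hS hb')).2.2.1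
      · rw [hb']; exact (Finset.mem_filter.1 (hS ha')).2.2.2
      · exact hst a ha' b hb'
    · set C := U'.filter (fun u => u ∈ S ∨ ∃ s ∈ S, o u s)
      have h1 : U.card ≤ U'.card + (1 + (B.card + A.card)) := by
        calc U.card ≤ (U' ∪ ({v} ∪ (B ∪ A))).card := by
              apply Finset.card_le_card
              intro x hx
              simp only [U', A, B, Finset.mem_union, Finset.mem_filter, Finset.mem_singleton]
              tauto
          _ ≤ U'.card + ({v} ∪ (B ∪ A)).card := Finset.card_union_le _ _
          _ ≤ _ := by
            have e1 := Finset.card_union_le ({v} : Finset V) (B ∪ A)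
            have e2 := Finset.card_union_le B A
            simp at e1
            simp only [Finset.singleton_union]
            omega
      have h2 : C.card + (1 + B.card) ≤
          (U.filter (fun u => u ∈ insert v S ∨ ∃ s ∈ insert v S, o u s)).card := by
        have hvB : v ∉ B := by simp [B, ho]
        have hdis : Disjoint C (insert v B) := by
          rw [Finset.disjoint_left]
          intro x hx hx'
          simp only [C, U', B, Finset.mem_filter, Finset.mem_insert] at hx hx'
          tauto
        rw [add_comm 1, ← Finset.card_insert_of_notMem hvB, ← Finset.card_union_of_disjoint hdis]
        apply Finset.card_le_card
        intro x hx
        simp only [C, U', B, Finset.mem_filter, Finset.mem_insert, Finset.mem_union] at hx ⊢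
        rcases hx with ⟨⟨h1, _⟩, h | ⟨s, hs, h⟩⟩ | h | h
        · exact ⟨h1, Or.inl (Or.inr h)⟩
        · exact ⟨h1, Or.inr ⟨s, Or.inr hs, h⟩⟩
        · exact ⟨h ▸ hv, Or.inl (Or.inl h)⟩
        · exact ⟨h.1, Or.inr ⟨v, Or.inl rfl, h.2⟩⟩
      omega

open Classical in
/-- There is a small absorbing set. -/
lemma absorb {V : Type*} (o : V → V → Prop) (ho : ∀ v, ¬ o v v) (K : ℕ) (L : ℕ) (U : Finset V)
    (hK : ∀ S ⊆ U, (∀ u ∈ S, ∀ v ∈ S, ¬ o u v) → S.card ≤ K) (hL : U.card < 2 ^ L) :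
    ∃ S ⊆ U, S.card ≤ K * L ∧ ∀ u ∈ U, u ∉ S → ∃ s ∈ S, o u s := by
  induction L generalizing U with
  | zero =>
    have : U = ∅ := by simpa using hL
    exact ⟨∅, by simp [this]⟩
  | succ L ih =>
    obtain ⟨S, hS, hst, hc⟩ := half_absorb o ho U
    set C := U.filter (fun u => u ∈ S ∨ ∃ s ∈ S, o u s) with hC
    have hcard : (U \ C).card + C.card = U.card :=
      Finset.card_sdiff_add_card_eq_card (Finset.filter_subset _ _)
    obtain ⟨S', hS', hc', hd'⟩ := ih (U \ C)
      (fun T hT => hK T (hT.trans Finset.sdiff_subset)) (by rw [pow_succ] at hL; omega)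
    refine ⟨S ∪ S', Finset.union_subset hS (hS'.trans Finset.sdiff_subset), ?_, ?_⟩
    · have := Finset.card_union_le S S'
      have := hK S hS hst
      rw [mul_add]; omega
    · intro u hu hus
      simp only [Finset.mem_union, not_or] at hus
      by_cases h : u ∈ C
      · rcases (Finset.mem_filter.1 h).2 with h | ⟨s, hs, h⟩
        · exact absurd h hus.1
        · exact ⟨s, Finset.mem_union_left _ hs, h⟩
      · obtain ⟨s, hs, h⟩ := hd' u (Finset.mem_sdiff.2 ⟨hu, h⟩) hus.2
        exact ⟨s, Finset.mem_union_right _ hs, h⟩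

open Classical in
/-- Embedding oriented forests in oriented graphs with small stability number. -/
lemma embed_forest {V : Type*} (o : V → V → Prop) (ho : ∀ v, ¬ o v v) (K : ℕ) (L : ℕ) (k : ℕ)
    (hKL : 0 < K * L) (U : Finset V)
    (hK : ∀ S ⊆ U, (∀ u ∈ S, ∀ v ∈ S, ¬ o u v) → S.card ≤ K) (hL : U.card < 2 ^ L)
    (hU : k * (K * L) ≤ U.card)
    (β : Type) [Fintype β] (hβ : Fintype.card β = k) (F : β → β → Prop)
    (hF : ∀ a b, F a b → ¬ F b a) (hac : (SimpleGraph.fromRel F).IsAcyclic) :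
    ∃ f : β → V, Function.Injective f ∧ (∀ a, f a ∈ U) ∧ ∀ a b, F a b → o (f a) (f b) := by
  induction k generalizing U β with
  | zero =>
    have : IsEmpty β := Fintype.card_eq_zero_iff.1 hβ
    exact ⟨fun b => isEmptyElim b, fun b => isEmptyElim b, fun b => isEmptyElim b,
      fun b => isEmptyElim b⟩
  | succ k ih =>
    have : Nonempty β := Fintype.card_pos_iff.1 (by omega)
    obtain ⟨l, c, hlc⟩ := acyclic_leaf _ hac
    have hFirr : ∀ a, ¬ F a a := fun a h => hF a a h h
    have hnb : ∀ a, F l a ∨ F a l → a = c := fun a h => hlc a (by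
      rw [SimpleGraph.fromRel_adj]
      refine ⟨?_, h⟩
      rintro rfl
      exact hFirr _ (by tauto))
    -- an absorbing or dominating set, according to the direction of the leaf
    have key : ∃ S ⊆ U, S.card ≤ K * L ∧
        ((F c l → ∀ u ∈ U, u ∉ S → ∃ s ∈ S, o u s) ∧ (F l c → ∀ u ∈ U, u ∉ S → ∃ s ∈ S, o s u))
        ∧ ∀ u ∈ U, u ∉ S → S.Nonempty := by
      by_cases h : F c l
      · obtain ⟨S, h1, h2, h3⟩ := absorb o ho K L U hK hL
        refine ⟨S, h1, h2, ⟨fun _ => h3, fun h' => absurd h' (hF _ _ h)⟩, fun u hu hus => ?_⟩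
        obtain ⟨s, hs, _⟩ := h3 u hu hus
        exact ⟨s, hs⟩
      · obtain ⟨S, h1, h2, h3⟩ := absorb (fun x y => o y x) ho K L U
          (fun S hS h => hK S hS fun u hu v hv => h v hv u hu) hL
        refine ⟨S, h1, h2, ⟨fun h' => absurd h' h, fun _ => h3⟩, fun u hu hus => ?_⟩
        obtain ⟨s, hs, _⟩ := h3 u hu hus
        exact ⟨s, hs⟩
    obtain ⟨S, hSU, hSc, ⟨hd1, hd2⟩, hne⟩ := key
    have hcard : (U \ S).card + S.card = U.card := Finset.card_sdiff_add_card_eq_card hSU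
    have hcU : k * (K * L) ≤ (U \ S).card := by
      rw [add_mul] at hU; omega
    obtain ⟨f, hfi, hfU, hf⟩ := ih (U \ S) (fun T hT => hK T (hT.trans Finset.sdiff_subset))
      (by omega) hcU {x : β // x ≠ l} (by
        rw [Fintype.card_subtype_compl, hβ]; simp) (fun a b => F a b) (fun a b => hF a b)
      (hac.comap (⟨Subtype.val, by
        intro a b h
        rw [SimpleGraph.fromRel_adj] at h ⊢
        exact ⟨fun h' => h.1 (Subtype.ext h'), h.2⟩⟩ : _ →g SimpleGraph.fromRel F)
        Subtype.val_injective)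
    -- choose the image of the leaf
    have hUne : U.Nonempty := by
      rw [← Finset.card_pos]
      have : 1 * (K * L) ≤ (k + 1) * (K * L) := Nat.mul_le_mul_right _ (by omega)
      omega
    have hSne : S.Nonempty := by
      obtain ⟨u, hu⟩ := hUne
      by_cases h : u ∈ S
      · exact ⟨u, h⟩
      · exact hne u hu h
    have hs : ∃ s ∈ S, ∀ a : {x : β // x ≠ l}, (F a l → o (f a) s) ∧ (F l a → o s (f a)) := by
      by_cases hcl : c = l
      · obtain ⟨s, hs⟩ := hSne
        refine ⟨s, hs, fun a => ⟨fun h => ?_, fun h => ?_⟩⟩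
        · exact absurd ((hnb a (Or.inr h)).trans hcl) a.2
        · exact absurd ((hnb a (Or.inl h)).trans hcl) a.2
      · have hm := Finset.mem_sdiff.1 (hfU ⟨c, hcl⟩)
        by_cases h1 : F c l
        · obtain ⟨s, hs, h⟩ := hd1 h1 _ hm.1 hm.2
          refine ⟨s, hs, fun a => ⟨fun h' => ?_, fun h' => ?_⟩⟩
          · have : a = ⟨c, hcl⟩ := Subtype.ext (hnb a (Or.inr h'))
            rw [this]; exact h
          · have := hnb a (Or.inl h')
            rw [this] at h'
            exact absurd h' (hF _ _ h1)
        · by_cases h2 : F l c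
          · obtain ⟨s, hs, h⟩ := hd2 h2 _ hm.1 hm.2
            refine ⟨s, hs, fun a => ⟨fun h' => ?_, fun h' => ?_⟩⟩
            · have := hnb a (Or.inr h')
              rw [this] at h'
              exact absurd h' h1
            · have : a = ⟨c, hcl⟩ := Subtype.ext (hnb a (Or.inl h'))
              rw [this]; exact h
          · obtain ⟨s, hs⟩ := hSne
            refine ⟨s, hs, fun a => ⟨fun h' => ?_, fun h' => ?_⟩⟩
            · have := hnb a (Or.inr h')
              rw [this] at h'
              exact absurd h' h1
            · have := hnb a (Or.inl h')
              rw [this] at h'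
              exact absurd h' h2
    obtain ⟨s, hsS, hs⟩ := hs
    refine ⟨fun x => if h : x = l then s else f ⟨x, h⟩, ?_, ?_, ?_⟩
    · intro x y hxy
      by_cases hx : x = l <;> by_cases hy : y = l
      · rw [hx, hy]
      · simp only [hx, hy, dite_true, dite_false] at hxy
        exact absurd (hxy ▸ hsS) (Finset.mem_sdiff.1 (hfU ⟨y, hy⟩)).2
      · simp only [hx, hy, dite_true, dite_false] at hxy
        exact absurd (hxy ▸ hsS) (Finset.mem_sdiff.1 (hfU ⟨x, hx⟩)).2
      · simp only [hx, hy, dite_false] at hxy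
        exact congrArg Subtype.val (hfi hxy)
    · intro x
      by_cases hx : x = l
      · simp only [hx, dite_true]; exact hSU hsS
      · simp only [hx, dite_false]; exact (Finset.mem_sdiff.1 (hfU ⟨x, hx⟩)).1
    · intro x y hxy
      by_cases hx : x = l <;> by_cases hy : y = l
      · rw [hx, hy] at hxy; exact absurd hxy (hFirr _)
      · simp only [hx, hy, dite_true, dite_false]
        exact (hs ⟨y, hy⟩).2 (hx ▸ hxy)
      · simp only [hx, hy, dite_true, dite_false]
        exact (hs ⟨x, hx⟩).1 (hy ▸ hxy)
      · simp only [hx, hy, dite_false]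
        exact hf _ _ hxy

/-- Every tournament on four vertices contains a transitive triangle. -/
lemma tournament4 {V : Type*} (o : V → V → Prop) (Q : Finset V) (hQ : Q.card = 4)
    (hor : ∀ u ∈ Q, ∀ v ∈ Q, u ≠ v → (o u v ↔ ¬ o v u)) :
    ∃ g : Fin 3 → V, Function.Injective g ∧ (∀ i, g i ∈ Q) ∧ ∀ i j, i < j → o (g i) (g j) := by
  classical
  obtain ⟨a, b, c, d, hab, hac, had, hbc, hbd, hcd, rfl⟩ := Finset.card_eq_four.1 hQ
  have h : ∃ x ∈ ({a, b, c, d} : Finset V), ∃ y ∈ ({a, b, c, d} : Finset V),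
      ∃ z ∈ ({a, b, c, d} : Finset V), x ≠ y ∧ x ≠ z ∧ y ≠ z ∧ o x y ∧ o x z ∧ o y z := by
    have h1 := hor a (by simp) b (by simp) hab
    have h2 := hor a (by simp) c (by simp) hac
    have h3 := hor a (by simp) d (by simp) had
    have h4 := hor b (by simp) c (by simp) hbc
    have h5 := hor b (by simp) d (by simp) hbd
    have h6 := hor c (by simp) d (by simp) hcd
    clear hor hQ
    grind
  obtain ⟨x, hx, y, hy, z, hz, hxy, hxz, hyz, oxy, oxz, oyz⟩ := h
  refine ⟨![x, y, z], ?_, ?_, ?_⟩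
  · intro i j hij
    fin_cases i <;> fin_cases j <;> simp_all
  · intro i
    fin_cases i <;> assumption
  · intro i j hij
    fin_cases i <;> fin_cases j <;> first | assumption | (exact absurd hij (by decide))


section Packing
open Finset

/-- all pairs -/
def E2 (n : ℕ) : Finset (Finset (Fin n)) := powersetCard 2 univ
/-- all quadruples -/
def P4 (n : ℕ) : Finset (Finset (Fin n)) := powersetCard 4 univ

/-- the copies of `K₄` in the graph with edge set `t` -/
def fam {n : ℕ} (t : Finset (Finset (Fin n))) : Finset (Finset (Fin n)) :=
  (P4 n).filter (fun K => powersetCard 2 K ⊆ t)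

open Classical in
/-- the families of disjoint copies of `K₄` -/
noncomputable def packs {n : ℕ} (t : Finset (Finset (Fin n))) : Finset (Finset (Finset (Fin n))) :=
  (fam t).powerset.filter (fun Q => ∀ A ∈ Q, ∀ B ∈ Q, A ≠ B → Disjoint A B)

/-- the packing number -/
noncomputable def nu {n : ℕ} (t : Finset (Finset (Fin n))) : ℕ := (packs t).sup card

variable {n : ℕ}

lemma mem_packs {t : Finset (Finset (Fin n))} {Q : Finset (Finset (Fin n))} :
    Q ∈ packs t ↔ Q ⊆ fam t ∧ ∀ K ∈ Q, ∀ K' ∈ Q, K ≠ K' → Disjoint K K' := by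
  simp [packs]

lemma mem_fam {t : Finset (Finset (Fin n))} {K : Finset (Fin n)} :
    K ∈ fam t ↔ K ∈ P4 n ∧ powersetCard 2 K ⊆ t := by
  simp [fam]

lemma mem_P4 {K : Finset (Fin n)} : K ∈ P4 n ↔ K.card = 4 := by
  simp [P4, mem_powersetCard]

lemma le_nu {t : Finset (Finset (Fin n))} {Q : Finset (Finset (Fin n))} (h : Q ∈ packs t) :
    Q.card ≤ nu t := Finset.le_sup (f := card) h

lemma exists_nu (t : Finset (Finset (Fin n))) : ∃ Q ∈ packs t, Q.card = nu t := by
  obtain ⟨Q, h, h'⟩ := Finset.exists_mem_eq_sup (packs t) ⟨∅, by simp [mem_packs]⟩ card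
  exact ⟨Q, h, h'.symm⟩

lemma nu_mono {t t' : Finset (Finset (Fin n))} (h : t ⊆ t') : nu t ≤ nu t' := by
  obtain ⟨Q, hQ, hc⟩ := exists_nu t
  rw [← hc]
  apply le_nu
  rw [mem_packs] at hQ ⊢
  refine ⟨fun K hK => ?_, hQ.2⟩
  have := mem_fam.1 (hQ.1 hK)
  exact mem_fam.2 ⟨this.1, this.2.trans h⟩

lemma nu_diff (t : Finset (Finset (Fin n))) (e : Finset (Fin n)) :
    ((nu (insert e t) : ℝ) - nu (t.erase e)) ^ 2 ≤
      ∑ K ∈ (P4 n).filter (fun K => e ∈ powersetCard 2 K),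
        if (powersetCard 2 K).erase e ⊆ t then (1 : ℝ) else 0 := by
  have hnn : (0 : ℝ) ≤ ∑ K ∈ (P4 n).filter (fun K => e ∈ powersetCard 2 K),
        if (powersetCard 2 K).erase e ⊆ t then (1 : ℝ) else 0 :=
    Finset.sum_nonneg fun K _ => by split_ifs <;> norm_num
  have hm : nu (t.erase e) ≤ nu (insert e t) :=
    nu_mono ((erase_subset e t).trans (subset_insert e t))
  rcases hm.eq_or_lt with h | h
  · rw [h]; simpa using hnn
  obtain ⟨Q, hQ, hc⟩ := exists_nu (insert e t)
  obtain ⟨hQ1, hQ2⟩ := mem_packs.1 hQ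
  -- members not using e survive
  have hsurv : ∀ K ∈ Q, e ∉ powersetCard 2 K → K ∈ fam (t.erase e) := by
    intro K hK he
    obtain ⟨h1, h2⟩ := mem_fam.1 (hQ1 hK)
    refine mem_fam.2 ⟨h1, fun x hx => ?_⟩
    have hxe : x ≠ e := fun h => he (h ▸ hx)
    exact mem_erase.2 ⟨hxe, (mem_insert.1 (h2 hx)).resolve_left hxe⟩
  have hex : ∃ K ∈ Q, e ∈ powersetCard 2 K := by
    by_contra! hcon
    have : Q ∈ packs (t.erase e) := mem_packs.2 ⟨fun K hK => hsurv K hK (hcon K hK), hQ2⟩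
    have := le_nu this
    omega
  obtain ⟨K, hK, heK⟩ := hex
  have hle : nu (insert e t) ≤ nu (t.erase e) + 1 := by
    have : Q.erase K ∈ packs (t.erase e) := by
      refine mem_packs.2 ⟨fun K' hK' => hsurv K' (mem_of_mem_erase hK') fun he => ?_,
        fun A hA B hB => hQ2 A (mem_of_mem_erase hA) B (mem_of_mem_erase hB)⟩
      have hd := hQ2 K' (mem_of_mem_erase hK') K hK (ne_of_mem_erase hK')
      rw [mem_powersetCard] at he heK
      have : e.Nonempty := by rw [← card_pos]; omega
      obtain ⟨x, hx⟩ := this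
      exact Finset.disjoint_left.1 hd (he.1 hx) (heK.1 hx)
    have := le_nu this
    rw [card_erase_of_mem hK] at this
    omega
  have heq : nu (insert e t) = nu (t.erase e) + 1 := by omega
  rw [heq]
  push_cast
  have hmem : K ∈ (P4 n).filter (fun K => e ∈ powersetCard 2 K) :=
    mem_filter.2 ⟨(mem_fam.1 (hQ1 hK)).1, heK⟩
  have hs := Finset.single_le_sum (f := fun K => if (powersetCard 2 K).erase e ⊆ t then (1 : ℝ) else 0)
    (fun K _ => by split_ifs <;> norm_num) hmem
  have hsub : (powersetCard 2 K).erase e ⊆ t := by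
    rw [← subset_insert_iff]; exact (mem_fam.1 (hQ1 hK)).2
  simp only [hsub, if_true] at hs
  calc _ = (1 : ℝ) := by ring
    _ ≤ _ := hs

lemma P2_subset (K : Finset (Fin n)) : powersetCard 2 K ⊆ E2 n :=
  powersetCard_mono (subset_univ K)

lemma P2_card {K : Finset (Fin n)} (h : K ∈ P4 n) : (powersetCard 2 K).card = 6 := by
  rw [card_powersetCard, mem_P4.1 h]; rfl

lemma P4_card : (P4 n).card = n.choose 4 := by simp [P4]

lemma nu_var {p : ℝ} (h0 : 0 ≤ p) (h1 : p ≤ 1) :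
    Ex p (E2 n) (fun t => (nu t : ℝ) ^ 2) - (Ex p (E2 n) (fun t => (nu t : ℝ))) ^ 2 ≤
      6 * ((n.choose 4 : ℝ) * p ^ 6) := by
  refine (efron_stein h0 h1 (E2 n) (fun t => (nu t : ℝ))).trans ?_
  have hb : ∀ e ∈ E2 n, Ex p (E2 n) (fun t => ((nu (insert e t) : ℝ) - nu (t.erase e)) ^ 2) ≤
      ∑ K ∈ (P4 n).filter (fun K => e ∈ powersetCard 2 K), p ^ 5 := by
    intro e _
    refine (Ex_mono h0 h1 _ fun t _ => nu_diff t e).trans ?_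
    rw [Ex_sum]
    refine Finset.sum_le_sum fun K hK => ?_
    obtain ⟨hK4, heK⟩ := mem_filter.1 hK
    rw [Ex_subset _ _ ((erase_subset _ _).trans (P2_subset K)), card_erase_of_mem heK, P2_card hK4]
  have h2 := Finset.sum_le_sum hb
  have h3 : ∑ e ∈ E2 n, ∑ K ∈ (P4 n).filter (fun K => e ∈ powersetCard 2 K), p ^ 5
      = ∑ K ∈ P4 n, ∑ e ∈ powersetCard 2 K, p ^ 5 := by
    apply Finset.sum_comm'
    intro e K
    rw [mem_filter]
    constructor
    · rintro ⟨_, h, h'⟩; exact ⟨h', h⟩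
    · rintro ⟨h, h'⟩; exact ⟨P2_subset K h, h', h⟩
  have h4 : ∑ K ∈ P4 n, ∑ e ∈ powersetCard 2 K, p ^ 5 = ∑ K ∈ P4 n, 6 * p ^ 5 :=
    Finset.sum_congr rfl fun K hK => by
      rw [Finset.sum_const, P2_card hK]; simp
  rw [h3, h4, Finset.sum_const, P4_card] at h2
  calc _ ≤ p * (n.choose 4 • (6 * p ^ 5)) := mul_le_mul_of_nonneg_left h2 h0
    _ = _ := by simp only [nsmul_eq_mul]; ring

/-- the quadruples meeting a given one -/
def meet (K : Finset (Fin n)) : Finset (Finset (Fin n)) :=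
  (P4 n).filter (fun K' => K' ≠ K ∧ ¬ Disjoint K K')

lemma nu_lower (t : Finset (Finset (Fin n))) :
    ∑ K ∈ P4 n, ((if powersetCard 2 K ⊆ t then (1 : ℝ) else 0) -
      ∑ K' ∈ meet K, if powersetCard 2 K ∪ powersetCard 2 K' ⊆ t then (1 : ℝ) else 0) ≤ nu t := by
  set I := (fam t).filter (fun K => ∀ K' ∈ meet K, ¬ powersetCard 2 K' ⊆ t) with hI
  have hIp : I ∈ packs t := by
    refine mem_packs.2 ⟨filter_subset _ _, fun K hK K' hK' hne => ?_⟩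
    by_contra hd
    obtain ⟨h1, h2⟩ := mem_filter.1 hK
    obtain ⟨h3, h4⟩ := mem_filter.1 hK'
    exact h2 K' (mem_filter.2 ⟨(mem_fam.1 h3).1, hne.symm, hd⟩) (mem_fam.1 h3).2
  have hIc : (I.card : ℝ) ≤ nu t := by exact_mod_cast le_nu hIp
  refine le_trans ?_ hIc
  have hIsub : I ⊆ P4 n := fun K hK => (mem_fam.1 (mem_filter.1 hK).1).1
  have : (I.card : ℝ) = ∑ K ∈ P4 n, if K ∈ I then (1 : ℝ) else 0 := by
    rw [Finset.sum_ite_mem, Finset.inter_eq_right.2 hIsub]; simp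
  rw [this]
  refine Finset.sum_le_sum fun K hK => ?_
  have hnn : ∀ K' ∈ meet K, (0 : ℝ) ≤
      if powersetCard 2 K ∪ powersetCard 2 K' ⊆ t then (1 : ℝ) else 0 :=
    fun K' _ => by split_ifs <;> norm_num
  have hsn := Finset.sum_nonneg hnn
  by_cases h1 : powersetCard 2 K ⊆ t
  · by_cases h2 : K ∈ I
    · simp only [h1, h2, if_true]; linarith
    · have : ∃ K' ∈ meet K, powersetCard 2 K' ⊆ t := by
        by_contra! hc
        exact h2 (mem_filter.2 ⟨mem_fam.2 ⟨hK, h1⟩, hc⟩)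
      obtain ⟨K', hK', hs⟩ := this
      have := Finset.single_le_sum hnn hK'
      rw [if_pos (union_subset h1 hs)] at this
      simp only [h1, h2, if_true, if_false]
      linarith
  · have : (0 : ℝ) ≤ if K ∈ I then (1 : ℝ) else 0 := by split_ifs <;> norm_num
    simp only [h1, if_false]; linarith

lemma meet_count (K : Finset (Fin n)) (hK : K ∈ P4 n) (j : ℕ) :
    ((P4 n).filter (fun K' => (K ∩ K').card = j)).card ≤ (Nat.choose 4 j) * n.choose (4 - j) := by
  have : (powersetCard j K ×ˢ powersetCard (4 - j) (univ : Finset (Fin n))).card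
      = (Nat.choose 4 j) * n.choose (4 - j) := by
    rw [card_product, card_powersetCard, card_powersetCard, mem_P4.1 hK]; simp
  rw [← this]
  apply Finset.card_le_card_of_injOn (fun K' => (K ∩ K', K' \ K))
  · intro K' hK'
    obtain ⟨h1, h2⟩ := mem_filter.1 hK'
    have h3 := mem_P4.1 h1
    have := card_sdiff_add_card_inter K' K
    rw [inter_comm] at this
    simp only [mem_coe, mem_product, mem_powersetCard]
    exact ⟨⟨inter_subset_left, h2⟩, subset_univ _, by omega⟩
  · intro A _ B _ h
    simp only [Prod.mk.injEq] at h
    rw [← sdiff_union_inter A K, ← sdiff_union_inter B K, h.2, inter_comm A, inter_comm B, h.1]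

lemma meet_sum {p : ℝ} (h0 : 0 ≤ p) (K : Finset (Fin n)) (hK : K ∈ P4 n) :
    ∑ K' ∈ meet K, p ^ (powersetCard 2 K ∪ powersetCard 2 K').card ≤
      p ^ 6 * (2 / 3 * (n : ℝ) ^ 3 * p ^ 6 + 3 * (n : ℝ) ^ 2 * p ^ 5 + 4 * n * p ^ 3) := by
  have hcard : ∀ K' ∈ meet K, p ^ (powersetCard 2 K ∪ powersetCard 2 K').card
      = (if (K ∩ K').card = 1 then p ^ 12 else 0) + (if (K ∩ K').card = 2 then p ^ 11 else 0)
        + (if (K ∩ K').card = 3 then p ^ 9 else 0) := by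
    intro K' hK'
    obtain ⟨h4, hne, hd⟩ := mem_filter.1 hK'
    have e1 := card_union_add_card_inter (powersetCard 2 K) (powersetCard 2 K')
    have e2 : powersetCard 2 K ∩ powersetCard 2 K' = powersetCard 2 (K ∩ K') := by
      ext x; simp only [mem_inter, mem_powersetCard, subset_inter_iff]; tauto
    rw [e2, P2_card h4, P2_card hK, card_powersetCard] at e1
    have l1 : 0 < (K ∩ K').card := by
      rw [card_pos]; exact Finset.not_disjoint_iff_nonempty_inter.1 hd
    have l2 : (K ∩ K').card < 4 := by
      by_contra! hge
      have a1 : K ∩ K' = K := eq_of_subset_of_card_le inter_subset_left (by rw [mem_P4.1 hK]; exact hge)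
      have a2 : K ∩ K' = K' :=
        eq_of_subset_of_card_le inter_subset_right (by rw [mem_P4.1 h4]; exact hge)
      exact hne (a2.symm.trans a1)
    generalize (K ∩ K').card = j at *
    interval_cases j
    · have : (powersetCard 2 K ∪ powersetCard 2 K').card = 12 := by simpa using e1
      rw [this]; norm_num
    · have : (powersetCard 2 K ∪ powersetCard 2 K').card = 11 := by simpa using e1
      rw [this]; norm_num
    · have : (powersetCard 2 K ∪ powersetCard 2 K').card = 9 := by
        have : Nat.choose 3 2 = 3 := rfl
        omega
      rw [this]; norm_num
  rw [Finset.sum_congr rfl hcard]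
  have hle : ∑ K' ∈ meet K, ((if (K ∩ K').card = 1 then p ^ 12 else 0) +
      (if (K ∩ K').card = 2 then p ^ 11 else 0) + (if (K ∩ K').card = 3 then p ^ 9 else 0)) ≤
      ∑ K' ∈ P4 n, ((if (K ∩ K').card = 1 then p ^ 12 else 0) +
      (if (K ∩ K').card = 2 then p ^ 11 else 0) + (if (K ∩ K').card = 3 then p ^ 9 else 0)) :=
    Finset.sum_le_sum_of_subset_of_nonneg (filter_subset _ _) fun K' _ _ => by positivity
  refine hle.trans ?_
  rw [Finset.sum_add_distrib, Finset.sum_add_distrib]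
  simp only [← Finset.sum_filter, Finset.sum_const, nsmul_eq_mul]
  have c1 : (((P4 n).filter (fun K' => (K ∩ K').card = 1)).card : ℝ) ≤ 2 / 3 * (n : ℝ) ^ 3 := by
    have a : (((P4 n).filter (fun K' => (K ∩ K').card = 1)).card : ℝ) ≤ 4 * (n.choose 3 : ℝ) := by
      exact_mod_cast meet_count K hK 1
    have b := Nat.choose_le_pow_div (α := ℝ) 3 n
    norm_num [Nat.factorial] at b
    linarith
  have c2 : (((P4 n).filter (fun K' => (K ∩ K').card = 2)).card : ℝ) ≤ 3 * (n : ℝ) ^ 2 := by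
    have a : (((P4 n).filter (fun K' => (K ∩ K').card = 2)).card : ℝ) ≤ 6 * (n.choose 2 : ℝ) := by
      exact_mod_cast meet_count K hK 2
    have b := Nat.choose_le_pow_div (α := ℝ) 2 n
    norm_num [Nat.factorial] at b
    linarith
  have c3 : (((P4 n).filter (fun K' => (K ∩ K').card = 3)).card : ℝ) ≤ 4 * (n : ℝ) := by
    have a : (((P4 n).filter (fun K' => (K ∩ K').card = 3)).card : ℝ) ≤ 4 * (n.choose 1 : ℝ) := by
      exact_mod_cast meet_count K hK 3
    simpa using a
  have d1 := mul_le_mul_of_nonneg_right c1 (pow_nonneg h0 12)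
  have d2 := mul_le_mul_of_nonneg_right c2 (pow_nonneg h0 11)
  have d3 := mul_le_mul_of_nonneg_right c3 (pow_nonneg h0 9)
  calc _ ≤ 2 / 3 * (n : ℝ) ^ 3 * p ^ 12 + 3 * (n : ℝ) ^ 2 * p ^ 11 + 4 * (n : ℝ) * p ^ 9 := by
        linarith
    _ = _ := by ring

lemma nu_mean {p : ℝ} (h0 : 0 ≤ p) (h1 : p ≤ 1) :
    (n.choose 4 : ℝ) * p ^ 6 *
      (1 - (2 / 3 * (n : ℝ) ^ 3 * p ^ 6 + 3 * (n : ℝ) ^ 2 * p ^ 5 + 4 * n * p ^ 3)) ≤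
      Ex p (E2 n) (fun t => (nu t : ℝ)) := by
  refine le_trans ?_ (Ex_mono h0 h1 (E2 n) fun t _ => nu_lower t)
  rw [Ex_sum, ← P4_card, mul_assoc, ← nsmul_eq_mul, ← Finset.sum_const]
  refine Finset.sum_le_sum fun K hK => ?_
  rw [Ex_sub, Ex_sum, Ex_subset _ _ (P2_subset K), P2_card hK]
  have : ∑ K' ∈ meet K, Ex p (E2 n)
      (fun t => if powersetCard 2 K ∪ powersetCard 2 K' ⊆ t then (1 : ℝ) else 0)
      = ∑ K' ∈ meet K, p ^ (powersetCard 2 K ∪ powersetCard 2 K').card :=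
    Finset.sum_congr rfl fun K' _ => Ex_subset _ _ (union_subset (P2_subset K) (P2_subset K'))
  rw [this]
  have := meet_sum h0 K hK
  linarith

open Classical in
/-- Independent sets. -/
lemma indep_prob {p : ℝ} (h0 : 0 ≤ p) (h1 : p ≤ 1) (s : ℕ) :
    Ex p (E2 n) (fun t => if ∃ W : Finset (Fin n), W.card = s ∧ Disjoint (powersetCard 2 W) t
      then 1 else 0) ≤ (n.choose s : ℝ) * (1 - p) ^ (s.choose 2) := by
  have : (n.choose s : ℝ) * (1 - p) ^ (s.choose 2) = Ex p (E2 n) (fun t =>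
      ∑ W ∈ powersetCard s (univ : Finset (Fin n)),
        if Disjoint (powersetCard 2 W) t then (1 : ℝ) else 0) := by
    rw [Ex_sum]
    have : ∀ W ∈ powersetCard s (univ : Finset (Fin n)),
        Ex p (E2 n) (fun t => if Disjoint (powersetCard 2 W) t then (1 : ℝ) else 0)
          = (1 - p) ^ (s.choose 2) := by
      intro W hW
      rw [Ex_disjoint _ _ (P2_subset W), card_powersetCard, (mem_powersetCard.1 hW).2]
    rw [Finset.sum_congr rfl this, Finset.sum_const, card_powersetCard]
    simp
  rw [this]
  refine Ex_mono h0 h1 _ fun t _ => ?_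
  have hnn : ∀ W ∈ powersetCard s (univ : Finset (Fin n)), (0 : ℝ) ≤
      if Disjoint (powersetCard 2 W) t then (1 : ℝ) else 0 :=
    fun K' _ => by split_ifs <;> norm_num
  split_ifs with h
  · obtain ⟨W, hW, hd⟩ := h
    have := Finset.single_le_sum hnn (mem_powersetCard.2 ⟨subset_univ W, hW⟩)
    rwa [if_pos hd] at this
  · exact Finset.sum_nonneg hnn

end Packing

section Assembly
open Finset

/-- the graph with edge set `t` -/
def gOf {n : ℕ} (t : Finset (Finset (Fin n))) : SimpleGraph (Fin n) where
  Adj u v := u ≠ v ∧ {u, v} ∈ t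
  symm := ⟨fun u v h => ⟨h.1.symm, by rw [Finset.pair_comm]; exact h.2⟩⟩
  loopless := ⟨fun u h => h.1 rfl⟩

lemma ncard_gOf {n : ℕ} (t : Finset (Finset (Fin n))) (ht : t ⊆ E2 n) :
    (gOf t).edgeSet.ncard = t.card := by
  rw [← Set.ncard_coe_finset t]
  apply Set.ncard_congr (fun e _ => e.toFinset)
  · intro e
    induction e using Sym2.ind with
    | _ u v =>
      intro h
      have h : u ≠ v ∧ {u, v} ∈ t := h
      rw [Sym2.toFinset_mk_eq]
      exact h.2
  · intro e e' _ _ h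
    ext x
    rw [← Sym2.mem_toFinset, ← Sym2.mem_toFinset, h]
  · intro b hb
    have hb : b ∈ t := hb
    obtain ⟨u, v, huv, rfl⟩ := card_eq_two.1 (mem_powersetCard.1 (ht hb)).2
    exact ⟨s(u, v), ⟨huv, hb⟩, Sym2.toFinset_mk_eq⟩

open Classical in
lemma probGnp_eq (n : ℕ) (p : ℝ) (Q : SimpleGraph (Fin n) → Prop) :
    probGnp n p Q = Ex p (E2 n) (fun t => if Q (gOf t) then 1 else 0) := by
  unfold probGnp Ex
  symm
  have hc : (E2 n).card = n.choose 2 := by simp [E2]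
  refine Finset.sum_bij' (fun t _ => gOf t)
    (fun G _ => (E2 n).filter (fun e => ∃ u v, G.Adj u v ∧ e = {u, v})) ?_ ?_ ?_ ?_ ?_
  · intro t _; exact mem_univ _
  · intro G _; rw [mem_powerset]; exact filter_subset _ _
  · intro t ht
    rw [mem_powerset] at ht
    ext e
    rw [mem_filter]
    constructor
    · rintro ⟨_, u, v, h, rfl⟩; exact h.2
    · intro he
      refine ⟨ht he, ?_⟩
      obtain ⟨u, v, huv, rfl⟩ := card_eq_two.1 (mem_powersetCard.1 (ht he)).2
      exact ⟨u, v, ⟨huv, he⟩, rfl⟩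
  · intro G _
    ext u v
    constructor
    · rintro ⟨hne, h⟩
      obtain ⟨_, u', v', h', heq⟩ := mem_filter.1 h
      have : s(u, v) = s(u', v') := by
        ext x
        have := Finset.ext_iff.1 heq x
        simpa using this
      rw [← SimpleGraph.mem_edgeSet, this]
      exact h'
    · intro h
      refine ⟨h.ne, mem_filter.2 ⟨?_, u, v, h, rfl⟩⟩
      exact mem_powersetCard.2 ⟨subset_univ _, card_pair h.ne⟩
  · intro t ht
    rw [mem_powerset] at ht
    rw [ncard_gOf t ht, hc]
    by_cases h : Q (gOf t) <;> simp [h]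

/-- The deterministic part. -/
lemma arrows_of {n : ℕ} (t : Finset (Finset (Fin n))) (K : ℕ) (hK1 : 0 < K)
    (hK : ¬ ∃ W : Finset (Fin n), W.card = K + 1 ∧ Disjoint (powersetCard 2 W) t)
    (m : ℕ) (F : Fin m → Fin m → Prop) (r : Fin 3) (hF : ∀ a b, F a b → ¬ F b a)
    (hac : (SimpleGraph.fromRel F).IsAcyclic) (hm : m * (K * (Nat.log 2 n + 1)) ≤ nu t) :
    Arrows (gOf t) (rootedProd F TT3 r) := by
  classical
  intro o ⟨ho1, ho2⟩
  obtain ⟨Q, hQ, hQc⟩ := exists_nu t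
  obtain ⟨hQ1, hQ2⟩ := mem_packs.1 hQ
  have hT : ∀ A : Q, ∃ g : Fin 3 → Fin n, Function.Injective g ∧ (∀ i, g i ∈ A.1) ∧
      ∀ i j, i < j → o (g i) (g j) := by
    rintro ⟨A, hA⟩
    obtain ⟨h4, hsub⟩ := mem_fam.1 (hQ1 hA)
    refine tournament4 o A (mem_P4.1 h4) fun u hu v hv huv => ?_
    refine ho2 u v ⟨huv, hsub (mem_powersetCard.2 ⟨?_, card_pair huv⟩)⟩
    intro x hx
    rcases mem_insert.1 hx with rfl | hx
    · exact hu
    · rw [mem_singleton.1 hx]; exact hv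
  choose g hgi hgm hg using hT
  have hdisj : ∀ A B : Q, ∀ i j, g A i = g B j → A = B := by
    intro A B i j h
    by_contra hne
    have := hQ2 A.1 A.2 B.1 B.2 (fun h => hne (Subtype.ext h))
    exact Finset.disjoint_left.1 this (hgm A i) (h ▸ hgm B j)
  have hirr : ∀ v, ¬ o v v := fun v h => (ho1 v v h).1 rfl
  have hlogn : nu t < 2 ^ (Nat.log 2 n + 1) := by
    have h1 : nu t ≤ n := by
      rw [← hQc, ← Fintype.card_coe]
      have := Fintype.card_le_of_injective (fun A : Q => g A 0) fun A B h => hdisj A B _ _ h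
      simpa using this
    exact lt_of_le_of_lt h1 (Nat.lt_pow_succ_log_self (by norm_num) n)
  have hcardQ : (univ : Finset Q).card = nu t := by rw [← hQc]; simp
  obtain ⟨f, hfi, -, hf⟩ := embed_forest (fun A B : Q => o (g A r) (g B r)) (fun A => hirr _) K
    (Nat.log 2 n + 1) m (Nat.mul_pos hK1 (Nat.succ_pos _)) univ
    (by
      intro S _ hS
      by_contra! hcon
      obtain ⟨S', hS', hc'⟩ := Finset.exists_subset_card_eq (Nat.succ_le_of_lt hcon)
      refine hK ⟨S'.image (fun A => g A r), ?_, ?_⟩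
      · rw [card_image_of_injective _ fun A B h => hdisj A B _ _ h, hc']
      · rw [Finset.disjoint_left]
        intro e he het
        obtain ⟨hesub, hec⟩ := mem_powersetCard.1 he
        obtain ⟨u, v, huv, rfl⟩ := card_eq_two.1 hec
        obtain ⟨A, hA, hAu⟩ := mem_image.1 (hesub (mem_insert_self u {v}))
        obtain ⟨B, hB, hBv⟩ := mem_image.1 (hesub (mem_insert_of_mem (mem_singleton_self v)))
        have hadj : (gOf t).Adj u v := ⟨huv, het⟩
        have hn1 := hS A (hS' hA) B (hS' hB)
        have hn2 := hS B (hS' hB) A (hS' hA)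
        have := ho2 u v hadj
        simp only [hAu, hBv] at hn1 hn2
        tauto)
    (by rw [hcardQ]; exact hlogn) (by rw [hcardQ]; exact hm) (Fin m) (by simp) F hF hac
  refine ⟨fun x => g (f x.1) x.2, ?_, ?_⟩
  · rintro ⟨a, i⟩ ⟨b, j⟩ h
    have h1 : f a = f b := hdisj _ _ _ _ h
    have h2 := hfi h1
    subst h2
    have h3 : i = j := hgi _ h
    rw [h3]
  · rintro ⟨a, i⟩ ⟨b, j⟩ h
    rcases h with ⟨h1, h2, h3⟩ | ⟨h1, h2⟩
    · simp only at h1 h2 h3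
      subst h1 h2
      exact hf a b h3
    · simp only at h1 h2
      subst h1
      exact hg _ _ _ h2

open Classical in
/-- Quantitative form. -/
lemma prob_lower {n : ℕ} {p : ℝ} (h0 : 0 ≤ p) (h1 : p ≤ 1) (Q : SimpleGraph (Fin n) → Prop)
    (K : ℕ) (c V x : ℝ) (hx : 0 < x) (hc : c + x ≤ Ex p (E2 n) (fun t => (nu t : ℝ)))
    (hV : 6 * ((n.choose 4 : ℝ) * p ^ 6) ≤ V)
    (hQ : ∀ t : Finset (Finset (Fin n)), c ≤ nu t →
      (¬ ∃ W : Finset (Fin n), W.card = K + 1 ∧ Disjoint (powersetCard 2 W) t) → Q (gOf t)) :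
    1 - V / x ^ 2 - (n.choose (K + 1) : ℝ) * (1 - p) ^ ((K + 1).choose 2) ≤ probGnp n p Q ∧
      probGnp n p Q ≤ 1 := by
  rw [probGnp_eq]
  constructor
  · have a1 := cheb h0 h1 (E2 n) (fun t => (nu t : ℝ)) c x V hx hc ((nu_var h0 h1).trans hV)
    have a2 := indep_prob (n := n) h0 h1 (K + 1)
    have a3 : Ex p (E2 n) (fun t => (1 - (if (nu t : ℝ) < c then 1 else 0)) -
        (if ∃ W : Finset (Fin n), W.card = K + 1 ∧ Disjoint (powersetCard 2 W) t
      then 1 else 0)) ≤ Ex p (E2 n) (fun t => if Q (gOf t) then (1 : ℝ) else 0) := by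
      refine Ex_mono h0 h1 _ fun t _ => ?_
      by_cases b1 : (nu t : ℝ) < c
      · have : (0 : ℝ) ≤ if Q (gOf t) then (1 : ℝ) else 0 := by split_ifs <;> norm_num
        refine le_trans ?_ this
        rw [if_pos b1]
        split_ifs <;> norm_num
      · by_cases b2 : ∃ W : Finset (Fin n), W.card = K + 1 ∧ Disjoint (powersetCard 2 W) t
        · have : (0 : ℝ) ≤ if Q (gOf t) then (1 : ℝ) else 0 := by split_ifs <;> norm_num
          refine le_trans ?_ this
          rw [if_pos b2]
          split_ifs <;> norm_num
        · rw [if_neg b1, if_neg b2, if_pos (hQ t (not_lt.1 b1) b2)]; norm_num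
    rw [Ex_sub, Ex_sub, Ex_const] at a3
    linarith
  · calc _ ≤ Ex p (E2 n) (fun _ => (1 : ℝ)) :=
        Ex_mono h0 h1 _ fun t _ => by split_ifs <;> norm_num
      _ = 1 := Ex_const _ _

end Assembly



lemma union_bound_s3 (n K : ℕ) (p : ℝ) (hn : 1 ≤ n) (h0 : 0 ≤ p) (h1 : p ≤ 1)
    (hK : 4 * Real.log n ≤ p * K) :
    (n.choose (K + 1) : ℝ) * (1 - p) ^ ((K + 1).choose 2) ≤ 1 / n := by
  have hn0 : (0 : ℝ) < n := by exact_mod_cast hn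
  have hlog : 0 ≤ Real.log n := Real.log_nonneg (by exact_mod_cast hn)
  have hN : (n : ℝ) = Real.exp (Real.log n) := (Real.exp_log hn0).symm
  have e1 : (n.choose (K + 1) : ℝ) ≤ Real.exp ((K + 1) * Real.log n) := by
    have : (n.choose (K + 1) : ℝ) ≤ (n : ℝ) ^ (K + 1) := by exact_mod_cast Nat.choose_le_pow n (K + 1)
    refine this.trans (le_of_eq ?_)
    conv_lhs => rw [hN]
    rw [← Real.exp_nat_mul]; push_cast; rfl
  have hch : ((K + 1).choose 2 : ℝ) = (K + 1) * K / 2 := by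
    rw [Nat.cast_choose_two]; push_cast; ring
  have e2 : (1 - p) ^ ((K + 1).choose 2) ≤ Real.exp (-(p * ((K + 1) * K / 2))) := by
    have : (1 - p) ^ ((K + 1).choose 2) ≤ (Real.exp (-p)) ^ ((K + 1).choose 2) :=
      pow_le_pow_left₀ (by linarith) (Real.one_sub_le_exp_neg p) _
    refine this.trans (le_of_eq ?_)
    rw [← Real.exp_nat_mul, hch]; congr 1; ring
  have hR : (1 : ℝ) / n = Real.exp (-Real.log n) := by
    rw [Real.exp_neg, Real.exp_log hn0, one_div]
  rw [hR]
  calc _ ≤ Real.exp ((K + 1) * Real.log n) * Real.exp (-(p * ((K + 1) * K / 2))) :=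
        mul_le_mul e1 e2 (pow_nonneg (by linarith) _) (Real.exp_pos _).le
    _ = Real.exp ((K + 1) * Real.log n + -(p * ((K + 1) * K / 2))) := (Real.exp_add _ _).symm
    _ ≤ _ := by
      apply Real.exp_le_exp.2
      have hK0 : (0 : ℝ) ≤ K := Nat.cast_nonneg K
      nlinarith [mul_le_mul_of_nonneg_left hK (by positivity : (0 : ℝ) ≤ (K + 1) / 2),
        mul_nonneg hK0 hlog]

lemma choose4_lower (n : ℕ) (hn : 6 ≤ n) : (n : ℝ) ^ 4 / 384 ≤ (n.choose 4 : ℝ) := by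
  have h := Nat.pow_le_choose (α := ℝ) 4 n
  have h2 : ((n + 1 - 4 : ℕ) : ℝ) = (n : ℝ) - 3 := by
    rw [Nat.cast_sub (by omega)]; push_cast; ring
  rw [h2] at h
  have hn' : (6 : ℝ) ≤ n := by exact_mod_cast hn
  have h3 : ((n : ℝ) / 2) ^ 4 ≤ ((n : ℝ) - 3) ^ 4 :=
    pow_le_pow_left₀ (by positivity) (by linarith) 4
  have h4 : ((4 : ℕ).factorial : ℝ) = 24 := by norm_num [Nat.factorial]
  rw [h4] at h
  calc (n : ℝ) ^ 4 / 384 = ((n : ℝ) / 2) ^ 4 / 24 := by ring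
    _ ≤ ((n : ℝ) - 3) ^ 4 / 24 := by linarith
    _ ≤ _ := h

lemma log_bound (n : ℕ) (hn : 3 ≤ n) : ((Nat.log 2 n + 1 : ℕ) : ℝ) ≤ 3 * Real.log n := by
  have hn' : (3 : ℝ) ≤ n := by exact_mod_cast hn
  have h1 : (1 : ℝ) ≤ Real.log n := by
    rw [Real.le_log_iff_exp_le (by linarith)]
    linarith [Real.exp_one_lt_d9]
  have h2 : ((Nat.log 2 n : ℕ) : ℝ) * Real.log 2 ≤ Real.log n := by
    rw [← Real.log_pow]
    apply Real.log_le_log (by positivity)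
    exact_mod_cast Nat.pow_log_le_self 2 (by omega)
  have h3 := Real.log_two_gt_d9
  push_cast
  have h4 : (0 : ℝ) ≤ (Nat.log 2 n : ℕ) := Nat.cast_nonneg _
  nlinarith

/-- The estimate for a fixed large `n`. -/
lemma main_est (n : ℕ) (δ : ℝ) (hδ : 0 < δ) (hδ' : δ ≤ 1 / 6) (hn : 6 ≤ n)
    (hbig : 7 * (n : ℝ) ^ (-(1 / 2) : ℝ) ≤ 1 / 12) :
    1 - 147456 / (n : ℝ) ^ (6 * δ) - 1 / n ≤ probGnp n ((n : ℝ) ^ (δ - 2 / 3))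
        (fun G => ∀ (m : ℕ) (F : Fin m → Fin m → Prop) (r : Fin 3),
          (∀ a b, F a b → ¬ F b a) → (SimpleGraph.fromRel F).IsAcyclic →
          (m : ℝ) ≤ (1 / 50000) * (n : ℝ) ^ (7 * δ - 2 / 3) / (Real.log n) ^ 2 →
          Arrows G (rootedProd F TT3 r)) ∧
    probGnp n ((n : ℝ) ^ (δ - 2 / 3))
        (fun G => ∀ (m : ℕ) (F : Fin m → Fin m → Prop) (r : Fin 3),
          (∀ a b, F a b → ¬ F b a) → (SimpleGraph.fromRel F).IsAcyclic →
          (m : ℝ) ≤ (1 / 50000) * (n : ℝ) ^ (7 * δ - 2 / 3) / (Real.log n) ^ 2 →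
          Arrows G (rootedProd F TT3 r)) ≤ 1 := by
  have hn1 : (1 : ℝ) ≤ n := by exact_mod_cast (by omega : 1 ≤ n)
  have hn0 : (0 : ℝ) < n := by linarith
  set p : ℝ := (n : ℝ) ^ (δ - 2 / 3) with hp
  have hp0 : 0 < p := Real.rpow_pos_of_pos hn0 _
  have hp1 : p ≤ 1 := Real.rpow_le_one_of_one_le_of_nonpos hn1 (by linarith)
  have hlog1 : (1 : ℝ) ≤ Real.log n := by
    rw [Real.le_log_iff_exp_le hn0]
    have : (6 : ℝ) ≤ n := by exact_mod_cast hn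
    linarith [Real.exp_one_lt_d9]
  -- powers
  have hpow : ∀ a b : ℕ, (n : ℝ) ^ a * p ^ b = (n : ℝ) ^ ((a : ℝ) + (δ - 2 / 3) * b) := by
    intro a b
    rw [Real.rpow_add hn0, Real.rpow_natCast, Real.rpow_mul hn0.le, Real.rpow_natCast]
  have q1 : (n : ℝ) ^ 3 * p ^ 6 ≤ 1 := by
    rw [hpow]
    apply Real.rpow_le_one_of_one_le_of_nonpos hn1
    push_cast; linarith
  have q2 : (n : ℝ) ^ 2 * p ^ 5 ≤ (n : ℝ) ^ (-(1 / 2) : ℝ) := by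
    rw [hpow]
    apply Real.rpow_le_rpow_of_exponent_le hn1
    push_cast; linarith
  have q3 : (n : ℝ) * p ^ 3 ≤ (n : ℝ) ^ (-(1 / 2) : ℝ) := by
    have := hpow 1 3
    rw [pow_one] at this
    rw [this]
    apply Real.rpow_le_rpow_of_exponent_le hn1
    push_cast; linarith
  have q4 : (n : ℝ) ^ 4 * p ^ 6 = (n : ℝ) ^ (6 * δ) := by
    rw [hpow]; congr 1; push_cast; ring
  have q5 : (n : ℝ) ^ (7 * δ - 2 / 3) = (n : ℝ) ^ (6 * δ) * p := by
    rw [hp, ← Real.rpow_add hn0]; congr 1; ring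
  set X : ℝ := (n : ℝ) ^ (6 * δ) with hX
  have hX0 : 0 < X := Real.rpow_pos_of_pos hn0 _
  set M : ℝ := (n.choose 4 : ℝ) * p ^ 6 with hM
  have hMX : X / 384 ≤ M := by
    have := mul_le_mul_of_nonneg_right (choose4_lower n hn) (pow_pos hp0 6).le
    calc X / 384 = (n : ℝ) ^ 4 / 384 * p ^ 6 := by rw [← q4]; ring
      _ ≤ _ := this
  have hM0 : 0 < M := by linarith [div_pos hX0 (by norm_num : (0 : ℝ) < 384)]
  have hmean : M / 8 + M / 8 ≤ Ex p (E2 n) (fun t => (nu t : ℝ)) := by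
    refine le_trans ?_ (nu_mean hp0.le hp1)
    have : 1 / 4 ≤ 1 - (2 / 3 * (n : ℝ) ^ 3 * p ^ 6 + 3 * (n : ℝ) ^ 2 * p ^ 5 + 4 * n * p ^ 3) := by
      linarith
    have := mul_le_mul_of_nonneg_left this hM0.le
    linarith
  set K : ℕ := ⌈4 * Real.log n / p⌉₊ with hKdef
  have hK1 : 4 * Real.log n / p ≤ K := Nat.le_ceil _
  have hpos : 0 < 4 * Real.log n / p := by positivity
  have hKpos : 0 < K := Nat.ceil_pos.2 hpos
  have hK2 : (K : ℝ) ≤ 5 * Real.log n / p := by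
    have h1 : (K : ℝ) < 4 * Real.log n / p + 1 := Nat.ceil_lt_add_one hpos.le
    have h2 : 1 ≤ Real.log n / p := by rw [le_div_iff₀ hp0]; linarith
    have h3 : 5 * Real.log n / p = 4 * Real.log n / p + Real.log n / p := by ring
    linarith
  have hpK : 4 * Real.log n ≤ p * K := by
    rw [div_le_iff₀ hp0] at hK1; linarith
  have hub := union_bound_s3 n K p (by omega) hp0.le hp1 hpK
  have hpl := prob_lower (n := n) hp0.le hp1
    (fun G => ∀ (m : ℕ) (F : Fin m → Fin m → Prop) (r : Fin 3),
          (∀ a b, F a b → ¬ F b a) → (SimpleGraph.fromRel F).IsAcyclic →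
          (m : ℝ) ≤ (1 / 50000) * (n : ℝ) ^ (7 * δ - 2 / 3) / (Real.log n) ^ 2 →
          Arrows G (rootedProd F TT3 r)) K (M / 8) (6 * M) (M / 8) (by positivity) hmean le_rfl
    (by
      intro t ht hW m F r hF hac hm
      refine arrows_of t K hKpos hW m F r hF hac ?_
      have hL := log_bound n (by omega)
      have hL0 : (0 : ℝ) ≤ ((Nat.log 2 n + 1 : ℕ) : ℝ) := Nat.cast_nonneg _
      have h1 : (K : ℝ) * ((Nat.log 2 n + 1 : ℕ) : ℝ) ≤ (5 * Real.log n / p) * (3 * Real.log n) :=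
        mul_le_mul hK2 hL hL0 (by positivity)
      have h2 : (m : ℝ) * ((K : ℝ) * ((Nat.log 2 n + 1 : ℕ) : ℝ)) ≤
          ((1 / 50000) * (n : ℝ) ^ (7 * δ - 2 / 3) / (Real.log n) ^ 2) *
            ((5 * Real.log n / p) * (3 * Real.log n)) :=
        mul_le_mul hm h1 (by positivity) (by positivity)
      have h3 : ((1 / 50000) * (n : ℝ) ^ (7 * δ - 2 / 3) / (Real.log n) ^ 2) *
            ((5 * Real.log n / p) * (3 * Real.log n)) = 15 / 50000 * X := by
        rw [q5]
        have : Real.log n ≠ 0 := by linarith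
        field_simp
        norm_num
      have h4 : (m : ℝ) * ((K : ℝ) * ((Nat.log 2 n + 1 : ℕ) : ℝ)) ≤ nu t := by
        rw [h3] at h2
        linarith
      exact_mod_cast h4)
  refine ⟨le_trans ?_ hpl.1, hpl.2⟩
  have hfrac : 6 * M / (M / 8) ^ 2 ≤ 147456 / X := by
    have : 6 * M / (M / 8) ^ 2 = 384 / M := by field_simp; norm_num
    rw [this, div_le_div_iff₀ hM0 hX0]
    linarith
  linarith

open Filter in
/-- There is an absolute constant `b > 0` such that for every `0 < δ ≤ 1/6`, with
`p = n^{δ-2/3}`, a.a.s. `G(n,p) → F⃗∘TT⃗₃′` simultaneously for every oriented forest `F⃗`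
with `v(F⃗) ≤ b·n^{7δ-2/3}/(log n)²`. -/
theorem stmt3 :
    ∃ b : ℝ, 0 < b ∧ ∀ δ : ℝ, 0 < δ → δ ≤ 1 / 6 →
      Tendsto (fun n : ℕ => probGnp n ((n : ℝ) ^ (δ - 2 / 3))
        (fun G => ∀ (m : ℕ) (F : Fin m → Fin m → Prop) (r : Fin 3),
          (∀ a b, F a b → ¬ F b a) → (SimpleGraph.fromRel F).IsAcyclic →
          (m : ℝ) ≤ b * (n : ℝ) ^ (7 * δ - 2 / 3) / (Real.log n) ^ 2 →
          Arrows G (rootedProd F TT3 r)))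
        atTop (nhds 1) := by
  refine ⟨1 / 50000, by norm_num, fun δ hδ hδ' => ?_⟩
  have hcast : Tendsto (fun n : ℕ => (n : ℝ)) atTop atTop := tendsto_natCast_atTop_atTop
  have t1 : Tendsto (fun n : ℕ => 147456 / (n : ℝ) ^ (6 * δ)) atTop (nhds 0) :=
    Tendsto.div_atTop tendsto_const_nhds ((tendsto_rpow_atTop (by positivity)).comp hcast)
  have t2 : Tendsto (fun n : ℕ => 1 / (n : ℝ)) atTop (nhds 0) :=
    Tendsto.div_atTop tendsto_const_nhds hcast
  have t3 : Tendsto (fun n : ℕ => 1 - 147456 / (n : ℝ) ^ (6 * δ) - 1 / (n : ℝ)) atTop (nhds 1) := by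
    have := (tendsto_const_nhds (x := (1 : ℝ))).sub t1 |>.sub t2
    simpa using this
  have t4 : Tendsto (fun n : ℕ => 7 * (n : ℝ) ^ (-(1 / 2) : ℝ)) atTop (nhds 0) := by
    have := ((tendsto_rpow_neg_atTop (by norm_num : (0 : ℝ) < 1 / 2)).comp hcast).const_mul 7
    simpa using this
  have e4 : ∀ᶠ n : ℕ in atTop, 7 * (n : ℝ) ^ (-(1 / 2) : ℝ) ≤ 1 / 12 :=
    t4.eventually_le_const (by norm_num)
  have e5 := eventually_ge_atTop (α := ℕ) 6
  refine tendsto_of_tendsto_of_tendsto_of_le_of_le' t3 tendsto_const_nhds ?_ ?_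
  · filter_upwards [e4, e5] with n h4 h5
    exact (main_est n δ hδ hδ' h5 h4).1
  · filter_upwards [e4, e5] with n h4 h5
    exact (main_est n δ hδ hδ' h5 h4).2
end
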